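/- arXiv:1811.07449 — 2 statements merged into one kernel-verified Lean document; each statement's English description precedes it below -/
import Mathlib

section
/- Let 2 ≤ r < m and g ≥ 3 be integers with r(2−g) + 2g > 0. Then every finite planar ({r,m};g)-graph has at least 1 + (m(g−2)+2g)/(r(2−g)+2g) vertices; in particular, n_p({r,m};g) ≥ 1 + (m(g−2)+2g)/(2g − r(g−2)). -/
open SimpleGraph

/-- `H` is a minor of `G`: there is an assignment of pairwise disjoint connected
branch sets in `G` to the vertices of `H`, with an edge of `G` between the branch
sets of any two adjacent vertices of `H`. -/
def SimpleGraph.IsMinorOf {W V : Type*} (H : SimpleGraph W) (G : SimpleGraph V) : Prop :=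
  ∃ f : W → Set V,
    (∀ w, (G.induce (f w)).Connected) ∧
    (Pairwise fun w₁ w₂ => Disjoint (f w₁) (f w₂)) ∧
    ∀ ⦃w₁ w₂⦄, H.Adj w₁ w₂ → ∃ v₁ ∈ f w₁, ∃ v₂ ∈ f w₂, G.Adj v₁ v₂

/-- A graph is planar iff it has no `K₅` minor and no `K₃,₃` minor (Wagner's theorem). -/
def SimpleGraph.IsPlanar {V : Type*} (G : SimpleGraph V) : Prop :=
  ¬ (completeGraph (Fin 5)).IsMinorOf G ∧
    ¬ (completeBipartiteGraph (Fin 3) (Fin 3)).IsMinorOf G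

/-- A graph is outerplanar iff it has no `K₄` minor and no `K₂,₃` minor. -/
def SimpleGraph.IsOuterplanar {V : Type*} (G : SimpleGraph V) : Prop :=
  ¬ (completeGraph (Fin 4)).IsMinorOf G ∧
    ¬ (completeBipartiteGraph (Fin 2) (Fin 3)).IsMinorOf G

/-- The degree of a vertex, as the cardinality of its neighbour set. -/
noncomputable def SimpleGraph.degN {V : Type*} (G : SimpleGraph V) (v : V) : ℕ :=
  (G.neighborSet v).ncard

/-- An `({r,m};g)`-graph: girth `g`, every vertex has degree `r` or `m`, both occur. -/
def IsBigirthGraph {V : Type*} (G : SimpleGraph V) (r m g : ℕ) : Prop :=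
  G.girth = g ∧ (∀ v, G.degN v = r ∨ G.degN v = m) ∧
    (∃ v, G.degN v = r) ∧ (∃ v, G.degN v = m)

/-- The set of orders of finite planar `({r,m};g)`-graphs. -/
def bicageOrders (r m g : ℕ) : Set ℕ :=
  {n | ∃ (V : Type) (_ : Fintype V) (G : SimpleGraph V),
    G.IsPlanar ∧ IsBigirthGraph G r m g ∧ Fintype.card V = n}

section PartOne
open Set

variable {V : Type*}

/-- Cut-style connectivity of the vertex set `S` inside `G`. -/
def ConnOn (G : SimpleGraph V) (S : Set V) : Prop :=
  ∀ A ⊆ S, A.Nonempty → (S \ A).Nonempty → ∃ a ∈ A, ∃ b ∈ S \ A, G.Adj a b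

lemma connOn_of_base {G : SimpleGraph V} {S : Set V} {o : V}
    (h : ∀ A ⊆ S, o ∈ A → (S \ A).Nonempty → ∃ a ∈ A, ∃ b ∈ S \ A, G.Adj a b)
    (ho : o ∈ S) : ConnOn G S := by
  intro A hA hne hne'
  by_cases hoA : o ∈ A
  · exact h A hA hoA hne'
  · obtain ⟨a, ha, b, hb, hab⟩ := h (S \ A) sdiff_subset ⟨ho, hoA⟩ (by
      rw [sdiff_sdiff_cancel_left hA]; exact hne)
    rw [sdiff_sdiff_cancel_left hA] at hb
    exact ⟨b, hb, a, ha, hab.symm⟩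

lemma ConnOn.mono_adj {G G' : SimpleGraph V} {S : Set V} (h : ConnOn G S)
    (hadj : ∀ a ∈ S, ∀ b ∈ S, G.Adj a b → G'.Adj a b) : ConnOn G' S := by
  intro A hA h1 h2
  obtain ⟨a, ha, b, hb, hab⟩ := h A hA h1 h2
  exact ⟨a, ha, b, hb, hadj a (hA ha) b hb.1 hab⟩

lemma connOn_singleton (G : SimpleGraph V) (o : V) : ConnOn G {o} := by
  intro A hA ⟨a, ha⟩ ⟨b, hb, hb'⟩
  have h1 := hA ha
  simp only [mem_singleton_iff] at h1 hb
  subst h1; subst hb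
  exact absurd ha hb'

lemma ConnOn.insert {G : SimpleGraph V} {S : Set V} (h : ConnOn G S) {s w : V} (hs : s ∈ S)
    (hadj : G.Adj s w) : ConnOn G (insert w S) := by
  apply connOn_of_base (o := s) _ (mem_insert_of_mem _ hs)
  intro A hA hsA ⟨b, hb, hbA⟩
  by_cases hS : S ⊆ A
  · have hbw : b = w := by
      rcases hb with hb | hb
      · exact hb
      · exact absurd (hS hb) hbA
    subst hbw
    exact ⟨s, hsA, b, ⟨hb, hbA⟩, hadj⟩
  · obtain ⟨t, ht, htA⟩ := not_subset.mp hS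
    obtain ⟨a, ha, c, hc, hac⟩ := h (A ∩ S) inter_subset_right ⟨s, hsA, hs⟩
      ⟨t, ht, fun h => htA h.1⟩
    exact ⟨a, ha.1, c, ⟨mem_insert_of_mem _ hc.1, fun h => hc.2 ⟨h, hc.1⟩⟩, hac⟩

lemma connected_induce_iff_connOn (G : SimpleGraph V) (S : Set V) :
    (G.induce S).Connected ↔ S.Nonempty ∧ ConnOn G S := by
  constructor
  · intro h
    have hne : S.Nonempty := by
      obtain ⟨x⟩ := h.nonempty
      exact ⟨x, x.2⟩
    refine ⟨hne, ?_⟩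
    intro A hA ⟨a, ha⟩ ⟨b, hb, hbA⟩
    by_contra hcon
    push Not at hcon
    have hr := h.preconnected ⟨a, hA ha⟩ ⟨b, hb⟩
    obtain ⟨w⟩ := hr
    have key : ∀ (u v : S) (w : (G.induce S).Walk u v), (u : V) ∈ A → (v : V) ∈ A := by
      intro u v w
      induction w with
      | nil => exact id
      | @cons u v w hadj _ ih =>
        intro hu
        apply ih
        by_contra hv
        exact hcon u hu v ⟨v.2, hv⟩ hadj
    exact hbA (key _ _ w ha)
  · rintro ⟨⟨o, ho⟩, h⟩
    have : Nonempty S := ⟨⟨o, ho⟩⟩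
    have key : ∀ v : S, (G.induce S).Reachable ⟨o, ho⟩ v := by
      by_contra hcon
      push Not at hcon
      obtain ⟨v, hv⟩ := hcon
      obtain ⟨a, ⟨ha, har⟩, b, ⟨hb, hb'⟩, hab⟩ :=
        h {x | ∃ hx : x ∈ S, (G.induce S).Reachable ⟨o, ho⟩ ⟨x, hx⟩}
        (fun x hx => hx.1) ⟨o, ho, SimpleGraph.Reachable.refl _⟩
        ⟨v, v.2, fun hx => hv hx.2⟩
      apply hb'
      refine ⟨hb, har.trans ?_⟩
      exact SimpleGraph.Adj.reachable (by simpa using hab)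
    exact SimpleGraph.Connected.mk (fun u v => (key u).symm.trans (key v))

lemma isMinorOf_mono {W : Type*} {K : SimpleGraph W} {G G' : SimpleGraph V} (hle : G ≤ G')
    (h : K.IsMinorOf G) : K.IsMinorOf G' := by
  obtain ⟨f, h1, h2, h3⟩ := h
  refine ⟨f, fun w => ?_, h2, fun w₁ w₂ h => ?_⟩
  · have := (connected_induce_iff_connOn G (f w)).1 (h1 w)
    exact (connected_induce_iff_connOn G' (f w)).2 ⟨this.1, this.2.mono_adj fun a _ b _ h => hle h⟩
  · obtain ⟨a, ha, b, hb, hab⟩ := h3 h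
    exact ⟨a, ha, b, hb, hle hab⟩

lemma isPlanar_mono {G G' : SimpleGraph V} (hle : G ≤ G') (h : G'.IsPlanar) : G.IsPlanar :=
  ⟨fun h' => h.1 (isMinorOf_mono hle h'), fun h' => h.2 (isMinorOf_mono hle h')⟩

/-- Contract the set `B` into the vertex `o`. -/
def con (G : SimpleGraph V) (o : V) (B : Set V) : SimpleGraph V where
  Adj u w := u ≠ w ∧ u ∉ B ∧ w ∉ B ∧
    (G.Adj u w ∨ (u = o ∧ ∃ b ∈ B, G.Adj b w) ∨ (w = o ∧ ∃ b ∈ B, G.Adj b u))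
  symm := ⟨by
    rintro u w ⟨h1, h2, h3, h4⟩
    refine ⟨h1.symm, h3, h2, ?_⟩
    rcases h4 with h | h | h
    · exact Or.inl h.symm
    · exact Or.inr (Or.inr h)
    · exact Or.inr (Or.inl h)⟩
  loopless := ⟨fun u h => h.1 rfl⟩

lemma isMinorOf_con {W : Type*} {K : SimpleGraph W} {G : SimpleGraph V} {o : V} {B : Set V}
    (hoB : o ∉ B) (hB : ConnOn G (insert o B)) (hK : ∀ w, ∃ w', K.Adj w w')
    (h : K.IsMinorOf (con G o B)) : K.IsMinorOf G := by
  classical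
  obtain ⟨f, h1, h2, h3⟩ := h
  have h1' := fun w => (connected_induce_iff_connOn _ _).1 (h1 w)
  have hfB : ∀ w, ∀ b ∈ f w, b ∉ B := by
    intro w b hb hbB
    have hfw : ∀ c ∈ f w, c = b := by
      intro c hc
      by_contra hcb
      obtain ⟨a, ha, d, hd, had⟩ := (h1' w).2 {b} (by simpa using hb) ⟨b, rfl⟩ ⟨c, hc, hcb⟩
      rw [mem_singleton_iff] at ha
      subst ha
      exact had.2.1 hbB
    obtain ⟨w', hw'⟩ := hK w
    obtain ⟨a, ha, d, hd, had⟩ := h3 hw'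
    rw [hfw a ha] at had
    exact had.2.1 hbB
  refine ⟨fun w => if o ∈ f w then f w ∪ B else f w, fun w => ?_, ?_, ?_⟩
  · rw [connected_induce_iff_connOn]
    obtain ⟨hne, hc⟩ := h1' w
    by_cases ho : o ∈ f w
    · simp only [ho, if_true]
      refine ⟨hne.mono subset_union_left, ?_⟩
      apply connOn_of_base (o := o) _ (Or.inl ho)
      intro A hA hoA ⟨d, hd, hdA⟩
      by_cases hBA : B ⊆ A
      · have hdf : d ∈ f w := hd.resolve_right fun h => hdA (hBA h)
        obtain ⟨p, hp, q, hq, hpq⟩ := hc (A ∩ f w) inter_subset_right ⟨o, hoA, ho⟩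
          ⟨d, hdf, fun h => hdA h.1⟩
        have hqA : q ∉ A := fun h => hq.2 ⟨h, hq.1⟩
        rcases hpq.2.2.2 with h | ⟨h, b, hb, hbq⟩ | ⟨h, b, hb, hbq⟩
        · exact ⟨p, hp.1, q, ⟨Or.inl hq.1, hqA⟩, h⟩
        · exact ⟨b, hBA hb, q, ⟨Or.inl hq.1, hqA⟩, hbq⟩
        · exact absurd (h ▸ hoA) hqA
      · obtain ⟨b, hb, hbA⟩ := not_subset.mp hBA
        obtain ⟨p, hp, q, hq, hpq⟩ := hB (A ∩ insert o B) inter_subset_right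
          ⟨o, hoA, mem_insert _ _⟩ ⟨b, mem_insert_of_mem _ hb, fun h => hbA h.1⟩
        have hqA : q ∉ A := fun h => hq.2 ⟨h, hq.1⟩
        refine ⟨p, hp.1, q, ⟨?_, hqA⟩, hpq⟩
        rcases hq.1 with h | h
        · exact absurd (h ▸ hoA) hqA
        · exact Or.inr h
    · simp only [ho, if_false]
      refine ⟨hne, hc.mono_adj ?_⟩
      intro a ha b hb hab
      rcases hab.2.2.2 with h | ⟨h, _⟩ | ⟨h, _⟩
      · exact h
      · exact absurd (h ▸ ha) ho
      · exact absurd (h ▸ hb) ho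
  · intro w₁ w₂ hne
    have hd := h2 hne
    replace hd : Disjoint (f w₁) (f w₂) := hd
    rw [Set.disjoint_left] at hd
    show Disjoint _ _
    rw [Set.disjoint_left]
    intro a ha hb
    by_cases ho1 : o ∈ f w₁ <;> by_cases ho2 : o ∈ f w₂ <;>
      simp only [ho1, ho2, if_true, if_false] at ha hb
    · exact hd ho1 ho2
    · exact ha.elim (fun h => hd h hb) (fun h => hfB _ _ hb h)
    · exact hb.elim (fun h => hd ha h) (fun h => hfB _ _ ha h)
    · exact hd ha hb
  · intro w₁ w₂ hadj
    obtain ⟨a, ha, b, hb, hab⟩ := h3 hadj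
    have hsub : ∀ w, f w ⊆ (if o ∈ f w then f w ∪ B else f w) := by
      intro w
      split_ifs
      · exact subset_union_left
      · exact Subset.rfl
    rcases hab.2.2.2 with h | ⟨h, c, hc, hcb⟩ | ⟨h, c, hc, hcb⟩
    · exact ⟨a, hsub _ ha, b, hsub _ hb, h⟩
    · refine ⟨c, ?_, b, hsub _ hb, hcb⟩
      show c ∈ (if o ∈ f w₁ then f w₁ ∪ B else f w₁)
      rw [if_pos (h ▸ ha)]; exact Or.inr hc
    · refine ⟨a, hsub _ ha, c, ?_, hcb.symm⟩
      show c ∈ (if o ∈ f w₂ then f w₂ ∪ B else f w₂)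
      rw [if_pos (h ▸ hb)]; exact Or.inr hc

lemma isPlanar_con {G : SimpleGraph V} {o : V} {B : Set V}
    (hoB : o ∉ B) (hB : ConnOn G (insert o B)) (h : G.IsPlanar) : (con G o B).IsPlanar := by
  refine ⟨fun h' => h.1 (isMinorOf_con hoB hB ?_ h'), fun h' => h.2 (isMinorOf_con hoB hB ?_ h')⟩
  · intro w
    obtain ⟨w', hw'⟩ := exists_ne w
    exact ⟨w', by simpa using hw'.symm⟩
  · rintro (w | w)
    · exact ⟨Sum.inr 0, by simp⟩
    · exact ⟨Sum.inl 0, by simp⟩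

/-- Every 3-connected graph on at least 5 vertices has an edge with 2-connected deletion. -/
lemma exists_good_edge [Finite V] {G : SimpleGraph V} {S : Set V} (hcard : 5 ≤ S.ncard)
    (h1 : ConnOn G S)
    (h3 : ∀ a b, ConnOn G (S \ {a, b})) :
    ∃ x ∈ S, ∃ y ∈ S, G.Adj x y ∧ ∀ z, ConnOn G (S \ {x, y, z}) := by
  classical
  by_contra hcon
  push Not at hcon
  have key : ∀ n : ℕ, ∀ x ∈ S, ∀ y ∈ S, ∀ z, ∀ A : Set V, A.ncard = n → G.Adj x y →
      A ⊆ S \ {x, y, z} → A.Nonempty → ((S \ {x, y, z}) \ A).Nonempty →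
      (∀ a ∈ A, ∀ b ∈ (S \ {x, y, z}) \ A, ¬ G.Adj a b) → False := by
    intro n
    induction n using Nat.strong_induction_on with
    | _ n ih =>
      intro x hx y hy z A hAn hxy hAS hAne hBne hAB
      -- z has a neighbour in A
      have hAS' : ∀ a ∈ A, a ∈ S ∧ a ≠ x ∧ a ≠ y ∧ a ≠ z := by
        intro a ha
        have := hAS ha
        simp only [mem_sdiff, mem_insert_iff, mem_singleton_iff, not_or] at this
        exact this
      obtain ⟨v, hv, z', hz', hvz⟩ := h3 x y A (fun a ha => by
          have := hAS' a ha
          simp [this]) hAne (by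
          obtain ⟨b, hb, hbA⟩ := hBne
          refine ⟨b, ⟨hb.1, fun h => hb.2 ?_⟩, hbA⟩
          simp only [mem_insert_iff, mem_singleton_iff] at h ⊢
          tauto)
      have hzz : z' = z := by
        by_contra hne
        refine hAB v hv z' ⟨⟨hz'.1.1, ?_⟩, hz'.2⟩ hvz
        have := hz'.1.2
        simp only [mem_insert_iff, mem_singleton_iff, not_or] at this ⊢
        exact ⟨this.1, this.2, hne⟩
      subst hzz
      have hzS : z' ∈ S := hz'.1.1
      obtain ⟨w, hw⟩ := hcon z' hzS v (hAS' v hv).1 hvz.symm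
      -- get a separation with D avoiding x and y
      have hsep : ∃ D ⊆ S \ {z', v, w}, D.Nonempty ∧ ((S \ {z', v, w}) \ D).Nonempty ∧
          (∀ a ∈ D, ∀ b ∈ (S \ {z', v, w}) \ D, ¬ G.Adj a b) ∧ x ∉ D ∧ y ∉ D := by
        unfold ConnOn at hw
        push Not at hw
        obtain ⟨D, hD, hDne, hDne', hDadj⟩ := hw
        by_cases hxD : x ∈ D ∨ y ∈ D
        · refine ⟨(S \ {z', v, w}) \ D, sdiff_subset, hDne', ?_, ?_, ?_⟩
          · rw [sdiff_sdiff_cancel_left hD]; exact hDne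
          · intro a ha b hb hab
            rw [sdiff_sdiff_cancel_left hD] at hb
            exact hDadj b hb a ha hab.symm
          · constructor
            · intro hx'
              rcases hxD with h | h
              · exact hx'.2 h
              · exact hDadj y h x hx' hxy.symm
            · intro hy'
              rcases hxD with h | h
              · exact hDadj x h y hy' hxy
              · exact hy'.2 h
        · push Not at hxD
          exact ⟨D, hD, hDne, hDne', hDadj, hxD.1, hxD.2⟩
      obtain ⟨D, hD, hDne, hDne', hDadj, hxD, hyD⟩ := hsep
      have hD' : ∀ a ∈ D, a ∈ S ∧ a ≠ z' ∧ a ≠ v ∧ a ≠ w := by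
        intro a ha
        have := hD ha
        simp only [mem_sdiff, mem_insert_iff, mem_singleton_iff, not_or] at this
        exact this
      -- v has a neighbour in D
      obtain ⟨u, hu, v', hv', huv⟩ := h3 z' w D (fun a ha => by
          have := hD' a ha
          simp [this]) hDne (by
          obtain ⟨b, hb, hbA⟩ := hDne'
          refine ⟨b, ⟨hb.1, fun h => hb.2 ?_⟩, hbA⟩
          simp only [mem_insert_iff, mem_singleton_iff] at h ⊢
          tauto)
      have hvv : v' = v := by
        by_contra hne
        refine hDadj u hu v' ⟨⟨hv'.1.1, ?_⟩, hv'.2⟩ huv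
        have := hv'.1.2
        simp only [mem_insert_iff, mem_singleton_iff, not_or] at this ⊢
        exact ⟨this.1, hne, this.2⟩
      subst hvv
      have huA : u ∈ A := by
        by_contra huA
        refine hAB v' hv u ⟨⟨(hD' u hu).1, ?_⟩, huA⟩ huv.symm
        simp only [mem_insert_iff, mem_singleton_iff, not_or]
        refine ⟨?_, ?_, (hD' u hu).2.1⟩
        · rintro rfl; exact hxD hu
        · rintro rfl; exact hyD hu
      refine ih (D ∩ A).ncard ?_ z' hzS v' (hAS' v' hv).1 w (D ∩ A) rfl hvz.symm
        (fun a ha => hD ha.1) ⟨u, hu, huA⟩ ?_ ?_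
      · rw [← hAn]
        apply Set.ncard_lt_ncard _ (Set.toFinite _)
        refine ⟨inter_subset_right, fun h => ?_⟩
        exact (hD' v' (h hv).1).2.2.1 rfl
      · -- the rest contains x or y
        by_cases hxw : x = w
        · refine ⟨y, ⟨hy, ?_⟩, fun h => hyD h.1⟩
          simp only [mem_insert_iff, mem_singleton_iff, not_or]
          refine ⟨?_, ?_, ?_⟩
          · rintro rfl
            have := hz'.1.2; simp at this
          · rintro rfl; exact (hAS' _ hv).2.2.1 rfl
          · rintro rfl; exact hxy.ne hxw
        · refine ⟨x, ⟨hx, ?_⟩, fun h => hxD h.1⟩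
          simp only [mem_insert_iff, mem_singleton_iff, not_or]
          refine ⟨?_, ?_, hxw⟩
          · rintro rfl
            have := hz'.1.2; simp at this
          · rintro rfl; exact (hAS' _ hv).2.1 rfl
      · intro a ha b hb hab
        by_cases hbD : b ∈ D
        · have hbA : b ∉ A := fun h => hb.2 ⟨hbD, h⟩
          refine hAB a ha.2 b ⟨⟨(hD' b hbD).1, ?_⟩, hbA⟩ hab
          simp only [mem_insert_iff, mem_singleton_iff, not_or]
          refine ⟨?_, ?_, (hD' b hbD).2.1⟩
          · rintro rfl; exact hxD hbD
          · rintro rfl; exact hyD hbD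
        · exact hDadj a ha.1 b ⟨hb.1, hbD⟩ hab
  -- find a first edge
  have hSne : S.Nonempty := by
    rw [← Set.ncard_pos (Set.toFinite _)]; omega
  obtain ⟨o, ho⟩ := hSne
  obtain ⟨x, hx, y, hy, hxy⟩ := h1 {o} (by simpa using ho) ⟨o, rfl⟩ (by
    by_contra hne
    rw [Set.not_nonempty_iff_eq_empty, Set.sdiff_eq_empty] at hne
    have := Set.ncard_le_ncard hne (Set.toFinite _)
    rw [Set.ncard_singleton] at this; omega)
  have hxS : x ∈ S := by rw [mem_singleton_iff] at hx; rw [hx]; exact ho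
  obtain ⟨z, hz⟩ := hcon x hxS y hy.1 hxy
  unfold ConnOn at hz
  push Not at hz
  obtain ⟨A, hA, hAne, hBne, hadj⟩ := hz
  exact key A.ncard x hxS y hy.1 z A rfl hxy hA hAne hBne hadj

end PartOne

section PartTwo
open Set Classical

variable {V : Type*} [Fintype V]

lemma z2_self (x : ZMod 2) : x + x = 0 := CharTwo.add_self_eq_zero x
lemma z2_ne {x : ZMod 2} (h : x ≠ 0) : x = 1 := by revert x; decide
lemma z2_eq_of_add {x y : ZMod 2} (h : x + y = 0) : x = y := by revert x y; decide
lemma z2_add_of_eq {x y : ZMod 2} (h : x = y) : x + y = 0 := by subst h; exact z2_self x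

/-- The elementary chain of an edge. -/
noncomputable def dl (e : Sym2 V) : Sym2 V → ZMod 2 := fun e' => if e' = e then 1 else 0

/-- The vertex indicator. -/
noncomputable def pt (v : V) : V → ZMod 2 := fun u => if u = v then 1 else 0

/-- The boundary of a chain. -/
noncomputable def bd (z : Sym2 V → ZMod 2) (v : V) : ZMod 2 := ∑ u, z s(v, u)

lemma bd_add (y z : Sym2 V → ZMod 2) (v : V) : bd (y + z) v = bd y v + bd z v := by
  simp [bd, Finset.sum_add_distrib]

lemma bd_smul (c : ZMod 2) (z : Sym2 V → ZMod 2) (v : V) : bd (c • z) v = c * bd z v := by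
  simp [bd, Finset.mul_sum]

lemma bd_zero (v : V) : bd (0 : Sym2 V → ZMod 2) v = 0 := by simp [bd]

lemma bd_dl {a b : V} (h : a ≠ b) (v : V) : bd (dl s(a, b)) v = pt a v + pt b v := by
  unfold bd dl pt
  simp only [Sym2.eq_iff]
  by_cases h1 : v = a
  · subst h1
    simp [h]
  · by_cases h2 : v = b
    · subst h2
      simp [h1]
    · simp [h1, h2]

/-- Coboundary of a vertex function. -/
noncomputable def dd (a : V → ZMod 2) : Sym2 V → ZMod 2 :=
  Sym2.lift ⟨fun u w => a u + a w, fun u w => add_comm _ _⟩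

lemma pairing (a : V → ZMod 2) (z : Sym2 V → ZMod 2) (hz : ∀ v, z s(v, v) = 0) :
    ∑ v, a v * bd z v = ∑ e, z e * dd a e := by
  have hdec : z = ∑ e, z e • dl e := by
    funext e'
    simp [dl, Finset.sum_apply]
  have hbd : ∀ v, bd z v = ∑ e, z e * bd (dl e) v := by
    intro v
    conv_lhs => rw [hdec]
    unfold bd
    simp only [Finset.sum_apply, Pi.smul_apply, smul_eq_mul]
    rw [Finset.sum_comm]
    simp [Finset.mul_sum]
  simp only [hbd, Finset.mul_sum]
  rw [Finset.sum_comm]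
  refine Finset.sum_congr rfl fun e _ => ?_
  induction e using Sym2.ind with
  | _ u w =>
    by_cases huw : u = w
    · subst huw
      simp [hz]
    · simp only [bd_dl huw, dd, Sym2.lift_mk]
      have : ∀ x, a x * (z s(u, w) * (pt u x + pt w x)) =
          z s(u, w) * ((if x = u then a x else 0) + (if x = w then a x else 0)) := by
        intro x
        unfold pt
        split_ifs <;> ring
      simp only [this]
      rw [← Finset.mul_sum, Finset.sum_add_distrib]
      simp

/-- Elements of the cycle space of `G` over the two-element field. -/
def Cyc (G : SimpleGraph V) (z : Sym2 V → ZMod 2) : Prop :=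
  (∀ e, e ∉ G.edgeSet → z e = 0) ∧ ∀ v, bd z v = 0

lemma Cyc.add {G : SimpleGraph V} {y z : Sym2 V → ZMod 2} (hy : Cyc G y) (hz : Cyc G z) :
    Cyc G (y + z) :=
  ⟨fun e he => by simp [hy.1 e he, hz.1 e he], fun v => by rw [bd_add, hy.2, hz.2, add_zero]⟩

lemma Cyc.smul {G : SimpleGraph V} {z : Sym2 V → ZMod 2} (c : ZMod 2) (hz : Cyc G z) :
    Cyc G (c • z) :=
  ⟨fun e he => by simp [hz.1 e he], fun v => by rw [bd_smul, hz.2, mul_zero]⟩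

lemma cyc_zero (G : SimpleGraph V) : Cyc G 0 := ⟨fun _ _ => rfl, fun v => bd_zero v⟩

lemma Cyc.mono {G G' : SimpleGraph V} (hle : G ≤ G') {z : Sym2 V → ZMod 2} (hz : Cyc G z) :
    Cyc G' z :=
  ⟨fun e he => hz.1 e fun h => he (SimpleGraph.edgeSet_mono hle h), hz.2⟩

/-- Chain bounded by two points in a connected set. -/
lemma chain_of_conn {G : SimpleGraph V} {S : Set V} (h : ConnOn G S) {a b : V} (ha : a ∈ S)
    (hb : b ∈ S) : ∃ P : Sym2 V → ZMod 2,
      (∀ e, P e ≠ 0 → e ∈ G.edgeSet ∧ ∀ v ∈ e, v ∈ S) ∧ ∀ v, bd P v = pt a v + pt b v := by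
  by_contra hcon
  obtain ⟨p, ⟨hpS, P, hP1, hP2⟩, q, ⟨hqS, hq⟩, hpq⟩ := h
    {x | x ∈ S ∧ ∃ P : Sym2 V → ZMod 2,
      (∀ e, P e ≠ 0 → e ∈ G.edgeSet ∧ ∀ v ∈ e, v ∈ S) ∧ ∀ v, bd P v = pt a v + pt x v}
    (fun x hx => hx.1) ⟨a, ha, 0, by simp, fun v => by rw [bd_zero, z2_self]⟩
    ⟨b, hb, fun hx => hcon hx.2⟩
  apply hq
  refine ⟨hqS, P + dl s(p, q), ?_, ?_⟩
  · intro e he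
    by_cases h : e = s(p, q)
    · subst h
      refine ⟨hpq, ?_⟩
      intro v hv
      rw [Sym2.mem_iff] at hv
      rcases hv with rfl | rfl <;> assumption
    · apply hP1
      simpa [dl, h] using he
  · intro v
    rw [bd_add, hP2, bd_dl hpq.ne]
    have := z2_self (pt p v)
    linear_combination this

lemma exists_cycle_through {G : SimpleGraph V} {S : Set V} (h : ConnOn G S) {u w₁ w₂ : V}
    (hu : u ∉ S) (h1 : w₁ ∈ S) (h2 : w₂ ∈ S) (ha1 : G.Adj u w₁) (ha2 : G.Adj u w₂) :
    ∃ z, Cyc G z ∧ ∀ w, z s(u, w) = pt w₁ w + pt w₂ w := by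
  obtain ⟨P, hP1, hP2⟩ := chain_of_conn h h1 h2
  refine ⟨P + dl s(u, w₁) + dl s(u, w₂), ⟨?_, ?_⟩, ?_⟩
  · intro e he
    have e1 : e ≠ s(u, w₁) := by rintro rfl; exact he ha1
    have e2 : e ≠ s(u, w₂) := by rintro rfl; exact he ha2
    have e3 : P e = 0 := by
      by_contra hne
      exact he (hP1 e hne).1
    simp [dl, e1, e2, e3]
  · intro v
    rw [bd_add, bd_add, hP2, bd_dl ha1.ne, bd_dl ha2.ne]
    have h1 := z2_self (pt u v)
    have h2 := z2_self (pt w₁ v)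
    have h3 := z2_self (pt w₂ v)
    linear_combination h1 + h2 + h3
  · intro w
    have e3 : P s(u, w) = 0 := by
      by_contra hne
      exact hu ((hP1 _ hne).2 u (by simp))
    have hw1 := ha1.ne
    have hw2 := ha2.ne
    simp only [Pi.add_apply, e3, dl, pt, Sym2.eq_iff, true_and, zero_add]
    simp [hw1, hw2]

/-- The cut of the face function `p` with respect to face labels `l`, `r`. -/
noncomputable def cob {ι : Type*} (G : SimpleGraph V) (l r : Sym2 V → ι) (p : ι → ZMod 2) :
    Sym2 V → ZMod 2 := fun e => if e ∈ G.edgeSet then p (l e) + p (r e) else 0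

/-- `l`, `r` give the two faces incident with every edge (algebraic dual). -/
def IsFS {ι : Type*} (G : SimpleGraph V) (l r : Sym2 V → ι) : Prop :=
  ∀ z, Cyc G z ↔ ∃ p : ι → ZMod 2, z = cob G l r p

/-- The boundary of a face. -/
noncomputable def face {ι : Type*} (G : SimpleGraph V) (l r : Sym2 V → ι) (i : ι) :
    Sym2 V → ZMod 2 := cob G l r (pt i)

/-- `G` has a face system. -/
def FS (G : SimpleGraph V) : Prop :=
  ∃ (ι : Type) (_ : Finite ι) (l r : Sym2 V → ι), IsFS G l r

lemma IsFS.cyc {ι : Type*} {G : SimpleGraph V} {l r : Sym2 V → ι} (h : IsFS G l r)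
    (p : ι → ZMod 2) : Cyc G (cob G l r p) := (h _).2 ⟨p, rfl⟩

lemma cob_add_const {ι : Type*} (G : SimpleGraph V) (l r : Sym2 V → ι) (p : ι → ZMod 2)
    (c : ZMod 2) : cob G l r (fun i => p i + c) = cob G l r p := by
  funext e
  unfold cob
  split_ifs
  · have := z2_self c
    linear_combination this
  · rfl

lemma IsFS.exists_norm {ι : Type*} {G : SimpleGraph V} {l r : Sym2 V → ι} (h : IsFS G l r)
    {z : Sym2 V → ZMod 2} (hz : Cyc G z) (i : ι) (c : ZMod 2) :
    ∃ p, z = cob G l r p ∧ p i = c := by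
  obtain ⟨p, hp⟩ := (h z).1 hz
  refine ⟨fun j => p j + (p i + c), by rw [cob_add_const, hp], ?_⟩
  have := z2_self (p i)
  show p i + (p i + c) = c
  linear_combination this

lemma cob_adj {ι : Type*} {G : SimpleGraph V} {l r : Sym2 V → ι} {p : ι → ZMod 2} {e : Sym2 V}
    (he : e ∈ G.edgeSet) : cob G l r p e = p (l e) + p (r e) := by
  simp [cob, he]

lemma cob_not {ι : Type*} {G : SimpleGraph V} {l r : Sym2 V → ι} {p : ι → ZMod 2} {e : Sym2 V}
    (he : e ∉ G.edgeSet) : cob G l r p e = 0 := by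
  simp [cob, he]

/-- A weight function whose restriction preserves the cycle space is constant around vertices. -/
lemma const_at {G : SimpleGraph V} {S : Set V} (h : ConnOn G S) {u w₁ w₂ : V}
    (hu : u ∉ S) (h1 : w₁ ∈ S) (h2 : w₂ ∈ S) (ha1 : G.Adj u w₁) (ha2 : G.Adj u w₂)
    (t : Sym2 V → ZMod 2)
    (ht : ∀ z, Cyc G z → bd (fun e => t e * z e) u = 0) : t s(u, w₁) = t s(u, w₂) := by
  obtain ⟨z, hz, hzu⟩ := exists_cycle_through h hu h1 h2 ha1 ha2
  have := ht z hz
  unfold bd at this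
  simp only [hzu, pt, mul_add, Finset.sum_add_distrib] at this
  simp at this
  exact z2_eq_of_add this

/-- Faces around a vertex are linked. -/
lemma rot {ι : Type*} {G : SimpleGraph V} {l r : Sym2 V → ι} (hfs : IsFS G l r) {S : Set V}
    (h : ConnOn G S) {u : V} (hu : u ∉ S) (hS : ∀ w, G.Adj u w → w ∈ S) (p : ι → ZMod 2)
    (hp : ∀ w, G.Adj u w → p (l s(u, w)) = p (r s(u, w))) {w₁ w₂ : V}
    (ha1 : G.Adj u w₁) (ha2 : G.Adj u w₂) : p (l s(u, w₁)) = p (l s(u, w₂)) := by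
  refine const_at h hu (hS _ ha1) (hS _ ha2) ha1 ha2 (fun e => p (l e)) ?_
  intro z hz
  obtain ⟨q, rfl⟩ := (hfs z).1 hz
  have := (hfs.cyc (fun i => p i * q i)).2 u
  rw [← this]
  unfold bd
  refine Finset.sum_congr rfl fun w _ => ?_
  by_cases hw : G.Adj u w
  · have hw' : s(u, w) ∈ G.edgeSet := hw
    show p (l s(u, w)) * cob G l r q s(u, w) = _
    rw [cob_adj hw', cob_adj hw', ← hp w hw]
    ring
  · have hw' : s(u, w) ∉ G.edgeSet := hw
    show p (l s(u, w)) * cob G l r q s(u, w) = _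
    rw [cob_not hw', cob_not hw', mul_zero]

/-- In a 2-connected graph faces are minimal cycle space elements. -/
lemma face_min {ι : Type*} {G : SimpleGraph V} {l r : Sym2 V → ι} (hfs : IsFS G l r) {S : Set V}
    (hS : ∀ u w, G.Adj u w → u ∈ S) (h : ConnOn G S) (h2 : ∀ a, ConnOn G (S \ {a})) (i : ι)
    {c : Sym2 V → ZMod 2} (hc : Cyc G c) (hle : ∀ e, c e ≠ 0 → face G l r i e ≠ 0)
    (hne : c ≠ 0) : c = face G l r i := by
  obtain ⟨p, hcp, hpi⟩ := hfs.exists_norm hc i 0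
  set t : Sym2 V → ZMod 2 := fun e => if l e = i then p (r e) else p (l e) with ht
  have hface : ∀ e ∈ G.edgeSet, face G l r i e = pt i (l e) + pt i (r e) := fun e he => cob_adj he
  have hcyc : ∀ z, Cyc G z → Cyc G (fun e => t e * z e) := by
    intro z hz
    obtain ⟨q, hq, hqi⟩ := hfs.exists_norm hz i 0
    refine (hfs _).2 ⟨fun j => p j * q j, ?_⟩
    funext e
    by_cases he : e ∈ G.edgeSet
    · rw [cob_adj he, hq, cob_adj he]
      by_cases h1 : l e = i
      · simp [ht, h1, hpi, hqi]
      · by_cases h2 : r e = i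
        · simp [ht, h1, h2, hpi, hqi]
        · have h0 : c e = 0 := by
            by_contra hcon
            exact hle e hcon (by rw [hface e he]; simp [pt, h1, h2])
          rw [hcp, cob_adj he] at h0
          have := z2_eq_of_add h0
          simp only [ht, h1, if_false, ← this]
          ring
    · rw [cob_not he, hz.1 e he, mul_zero]
  have hloc : ∀ u w₁ w₂, G.Adj u w₁ → G.Adj u w₂ → t s(u, w₁) = t s(u, w₂) := by
    intro u w₁ w₂ ha1 ha2
    refine const_at (h2 u) (by simp) ?_ ?_ ha1 ha2 t (fun z hz => (hcyc z hz).2 u)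
    · exact ⟨hS _ _ ha1.symm, by simpa using ha1.ne'⟩
    · exact ⟨hS _ _ ha2.symm, by simpa using ha2.ne'⟩
  obtain ⟨e₀, he₀⟩ : ∃ e, c e ≠ 0 := by
    by_contra hcon
    push Not at hcon
    exact hne (funext hcon)
  have he₀E : e₀ ∈ G.edgeSet := by
    by_contra hcon
    exact he₀ (hc.1 _ hcon)
  have htc : ∀ e ∈ G.edgeSet, face G l r i e ≠ 0 → c e = t e := by
    intro e he hfe
    rw [hface e he] at hfe
    rw [hcp, cob_adj he]
    by_cases h1 : l e = i
    · simp [ht, h1, hpi]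
    · by_cases h2 : r e = i
      · simp [ht, h1, h2, hpi]
      · simp [pt, h1, h2] at hfe
  have ht0 : t e₀ = 1 := by
    rw [← htc e₀ he₀E (hle _ he₀)]
    exact z2_ne he₀
  have hall : ∀ e ∈ G.edgeSet, t e = 1 := by
    have hA : ∀ v ∈ S, ∀ w, G.Adj v w → t s(v, w) = 1 := by
      by_contra hcon
      push Not at hcon
      obtain ⟨v, hv, w, hvw, hne'⟩ := hcon
      induction e₀ using Sym2.ind with
      | _ u₀ w₀ =>
        obtain ⟨a, ⟨haS, ha⟩, b, ⟨hbS, hb⟩, hab⟩ := h {v | v ∈ S ∧ ∀ w, G.Adj v w → t s(v, w) = 1}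
          (fun x hx => hx.1) ⟨u₀, hS _ _ he₀E, fun w hw => by rw [← ht0]; exact hloc _ _ _ hw he₀E⟩
          ⟨v, hv, fun hx => hne' (hx.2 w hvw)⟩
        apply hb
        refine ⟨hbS, fun w hw => ?_⟩
        rw [hloc b w a hw hab.symm, Sym2.eq_swap]
        exact ha b hab
    intro e he
    induction e using Sym2.ind with
    | _ u w => exact hA u (hS _ _ he) w he
  funext e
  by_cases hfe : face G l r i e = 0
  · rw [hfe]
    by_contra hcon
    exact hle e hcon hfe
  · have he : e ∈ G.edgeSet := by
      by_contra hcon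
      exact hfe (cob_not hcon)
    rw [htc e he hfe, hall e he, z2_ne hfe]

end PartTwo

section PartThree
open Set Classical

variable {V : Type*} [Fintype V]

lemma FS.anti {G H : SimpleGraph V} (hle : H ≤ G) (h : FS G) : FS H := by
  obtain ⟨ι, hι, l, r, hfs⟩ := h
  let R : ι → ι → Prop := fun i j => ∃ e ∈ G.edgeSet, e ∉ H.edgeSet ∧ i = l e ∧ j = r e
  have hle' := SimpleGraph.edgeSet_mono hle
  refine ⟨Quot R, inferInstance, fun e => Quot.mk R (l e), fun e => Quot.mk R (r e), ?_⟩
  intro z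
  constructor
  · intro hz
    obtain ⟨q, hq⟩ := (hfs z).1 (hz.mono hle)
    refine ⟨Quot.lift q ?_, ?_⟩
    · rintro i j ⟨e, he, he', rfl, rfl⟩
      have := hz.1 e he'
      rw [hq, cob_adj he] at this
      exact z2_eq_of_add this
    · funext e
      by_cases he : e ∈ H.edgeSet
      · rw [cob_adj he, congrFun hq e, cob_adj (hle' he)]
      · rw [cob_not he, hz.1 e he]
  · rintro ⟨p, rfl⟩
    have : cob H (fun e => Quot.mk R (l e)) (fun e => Quot.mk R (r e)) p =
        cob G l r (fun i => p (Quot.mk R i)) := by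
      funext e
      by_cases he : e ∈ H.edgeSet
      · rw [cob_adj he, cob_adj (hle' he)]
      · rw [cob_not he]
        by_cases he' : e ∈ G.edgeSet
        · rw [cob_adj he', z2_add_of_eq]
          rw [Quot.sound (r := R) ⟨e, he', he, rfl, rfl⟩]
        · rw [cob_not he']
    exact ⟨fun e he => cob_not he, by rw [this]; exact (hfs.cyc _).2⟩

/-- Delete (isolate) a vertex. -/
def del (G : SimpleGraph V) (v : V) : SimpleGraph V where
  Adj u w := G.Adj u w ∧ u ≠ v ∧ w ≠ v
  symm := ⟨fun _ _ h => ⟨h.1.symm, h.2.2, h.2.1⟩⟩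
  loopless := ⟨fun _ h => h.1.ne rfl⟩

lemma del_le (G : SimpleGraph V) (v : V) : del G v ≤ G := fun _ _ h => h.1

/-- Faces around a vertex. -/
def atv {ι : Type*} (G : SimpleGraph V) (l r : Sym2 V → ι) (v : V) (i : ι) : Prop :=
  ∃ w, G.Adj v w ∧ (i = l s(v, w) ∨ i = r s(v, w))

/-- Merge the faces around a vertex. -/
noncomputable def mrg {ι : Type*} (G : SimpleGraph V) (l r : Sym2 V → ι) (v : V) (i : ι) :
    Option ι := if atv G l r v i then none else some i

lemma mem_del {G : SimpleGraph V} {v : V} {e : Sym2 V} (he : e ∈ G.edgeSet)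
    (h : e ∉ (del G v).edgeSet) : ∃ w, G.Adj v w ∧ e = s(v, w) := by
  induction e using Sym2.ind with
  | _ u w =>
    by_cases hu : u = v
    · subst hu
      exact ⟨w, he, rfl⟩
    · by_cases hw : w = v
      · subst hw
        exact ⟨u, he.symm, Sym2.eq_swap⟩
      · exact absurd (show (del G v).Adj u w from ⟨he, hu, hw⟩) h

lemma IsFS.del {ι : Type*} {G : SimpleGraph V} {l r : Sym2 V → ι} (hfs : IsFS G l r)
    {T : Set V} (hT : ConnOn G T) {v : V} (hv : v ∉ T) (hN : ∀ w, G.Adj v w → w ∈ T) :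
    IsFS (del G v) (fun e => mrg G l r v (l e)) (fun e => mrg G l r v (r e)) := by
  intro z
  have hle' := SimpleGraph.edgeSet_mono (del_le G v)
  constructor
  · intro hz
    obtain ⟨q, hq⟩ := (hfs z).1 (hz.mono (del_le G v))
    have hq1 : ∀ w, G.Adj v w → q (l s(v, w)) = q (r s(v, w)) := by
      intro w hw
      have he : s(v, w) ∉ (_root_.del G v).edgeSet := fun h => h.2.1 rfl
      have := hz.1 _ he
      rw [hq, cob_adj (show s(v, w) ∈ G.edgeSet from hw)] at this
      exact z2_eq_of_add this
    obtain ⟨c, hc⟩ : ∃ c, ∀ i, atv G l r v i → q i = c := by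
      by_cases hex : ∃ w, G.Adj v w
      · obtain ⟨w₀, hw₀⟩ := hex
        refine ⟨q (l s(v, w₀)), ?_⟩
        rintro i ⟨w, hw, rfl | rfl⟩
        · exact rot hfs hT hv hN q hq1 hw hw₀
        · rw [← hq1 w hw]
          exact rot hfs hT hv hN q hq1 hw hw₀
      · refine ⟨0, ?_⟩
        rintro i ⟨w, hw, _⟩
        exact absurd ⟨w, hw⟩ hex
    have hm : ∀ i, (mrg G l r v i).elim c q = q i := by
      intro i
      unfold mrg
      split_ifs with h
      · exact (hc i h).symm
      · rfl
    refine ⟨fun o => o.elim c q, ?_⟩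
    funext e
    by_cases he : e ∈ (_root_.del G v).edgeSet
    · rw [cob_adj he, hq, cob_adj (hle' he), hm, hm]
    · rw [cob_not he, hz.1 e he]
  · rintro ⟨p, rfl⟩
    have : cob (_root_.del G v) (fun e => mrg G l r v (l e)) (fun e => mrg G l r v (r e)) p =
        cob G l r (fun i => p (mrg G l r v i)) := by
      funext e
      by_cases he : e ∈ (_root_.del G v).edgeSet
      · rw [cob_adj he, cob_adj (hle' he)]
      · rw [cob_not he]
        by_cases he' : e ∈ G.edgeSet
        · rw [cob_adj he', z2_add_of_eq]
          obtain ⟨w, hw, rfl⟩ := mem_del he' he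
          have h1 : mrg G l r v (l s(v, w)) = none := if_pos ⟨w, hw, Or.inl rfl⟩
          have h2 : mrg G l r v (r s(v, w)) = none := if_pos ⟨w, hw, Or.inr rfl⟩
          rw [h1, h2]
        · rw [cob_not he']
    exact ⟨fun e he => cob_not he, by rw [this]; exact (hfs.cyc _).2⟩

/-- Neighbours of a deleted vertex lie on the new face. -/
lemma del_face {ι : Type*} {G : SimpleGraph V} {l r : Sym2 V → ι} (hfs : IsFS G l r)
    {T : Set V} (hT : ConnOn G T) {v : V} (hv : v ∉ T) (hN : ∀ w, G.Adj v w → w ∈ T)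
    {u : V} (huv : G.Adj v u) {T' : Set V} (hT' : ConnOn G T') (hu : u ∉ T')
    (hN' : ∀ w, G.Adj u w → w ∈ T') {T'' : Set V} (hT'' : ConnOn (del G v) T'') (hu'' : u ∉ T'')
    (hN'' : ∀ w, (del G v).Adj u w → w ∈ T'') {w₁ w₂ : V} (hw₁ : (del G v).Adj u w₁)
    (hw₂ : (del G v).Adj u w₂) (hne : w₁ ≠ w₂) :
    ∃ w, face (del G v) (fun e => mrg G l r v (l e)) (fun e => mrg G l r v (r e)) none s(u, w)
      ≠ 0 := by
  by_contra hcon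
  push Not at hcon
  have hmn : ∀ i, mrg G l r v i = none ↔ atv G l r v i := by
    intro i
    unfold mrg
    split_ifs with h <;> simp [h]
  set p : ι → ZMod 2 := fun i => if atv G l r v i then 1 else 0 with hp
  have hl : atv G l r v (l s(u, v)) := ⟨u, huv, Or.inl (by rw [Sym2.eq_swap])⟩
  have hr : atv G l r v (r s(u, v)) := ⟨u, huv, Or.inr (by rw [Sym2.eq_swap])⟩
  have hpw : ∀ w, G.Adj u w → p (l s(u, w)) = p (r s(u, w)) := by
    intro w hw
    by_cases hwv : w = v
    · subst hwv
      simp [hp, hl, hr]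
    · have he : s(u, w) ∈ (del G v).edgeSet := ⟨hw, huv.ne', hwv⟩
      have := hcon w
      unfold face at this
      rw [cob_adj he] at this
      have := z2_eq_of_add this
      simpa [pt, hmn, hp] using this
  have hall : ∀ w, G.Adj u w → p (l s(u, w)) = 1 := by
    intro w hw
    rw [rot hfs hT' hu hN' p hpw hw huv.symm]
    simp [hp, hl]
  obtain ⟨z, hz, hzu⟩ := exists_cycle_through hT'' hu'' (hN'' _ hw₁) (hN'' _ hw₂) hw₁ hw₂
  obtain ⟨q, rfl⟩ := (hfs.del hT hv hN z).1 hz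
  have h1 := hzu w₁
  rw [cob_adj (show s(u, w₁) ∈ (del G v).edgeSet from hw₁)] at h1
  have e1 : mrg G l r v (l s(u, w₁)) = none := by
    rw [hmn]
    by_contra h
    have := hall w₁ hw₁.1
    simp [hp, h] at this
  have e2 : mrg G l r v (r s(u, w₁)) = none := by
    rw [hmn]
    by_contra h
    have := hall w₁ hw₁.1
    rw [hpw w₁ hw₁.1] at this
    simp [hp, h] at this
  rw [e1, e2, z2_self] at h1
  simp [pt, hne] at h1

/-- Gluing along at most one common edge. -/
lemma FS.glue {G₁ G₂ : SimpleGraph V} (h1 : FS G₁) (h2 : FS G₂) (e₀ : Sym2 V)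
    (he₀ : e₀ ∈ G₁.edgeSet ↔ e₀ ∈ G₂.edgeSet)
    (hE : ∀ e, e ∈ G₁.edgeSet → e ∈ G₂.edgeSet → e = e₀)
    (hcyc : ∀ z, Cyc (G₁ ⊔ G₂) z → ∃ z₁ z₂, Cyc G₁ z₁ ∧ Cyc G₂ z₂ ∧ z = z₁ + z₂) :
    FS (G₁ ⊔ G₂) := by
  obtain ⟨ι₁, _, l₁, r₁, hf1⟩ := h1
  obtain ⟨ι₂, _, l₂, r₂, hf2⟩ := h2
  let ψ : ι₂ → ι₁ ⊕ ι₂ := fun j => if j = l₂ e₀ then Sum.inl (l₁ e₀) else Sum.inr j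
  have hψ : ψ (l₂ e₀) = Sum.inl (l₁ e₀) := if_pos rfl
  let l : Sym2 V → ι₁ ⊕ ι₂ := fun e => if e = e₀ then Sum.inl (r₁ e₀) else
    if e ∈ G₁.edgeSet then Sum.inl (l₁ e) else ψ (l₂ e)
  let r : Sym2 V → ι₁ ⊕ ι₂ := fun e => if e = e₀ then ψ (r₂ e₀) else
    if e ∈ G₁.edgeSet then Sum.inl (r₁ e) else ψ (r₂ e)
  have hmem : ∀ e, e ∈ (G₁ ⊔ G₂).edgeSet ↔ e ∈ G₁.edgeSet ∨ e ∈ G₂.edgeSet := by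
    intro e
    rw [SimpleGraph.edgeSet_sup]
    rfl
  have key : ∀ p : ι₁ ⊕ ι₂ → ZMod 2, cob (G₁ ⊔ G₂) l r p =
      cob G₁ l₁ r₁ (fun i => p (Sum.inl i)) + cob G₂ l₂ r₂ (fun j => p (ψ j)) := by
    intro p
    funext e
    by_cases hee : e = e₀
    · subst hee
      by_cases hm : e ∈ G₁.edgeSet
      · have hm2 := he₀.1 hm
        rw [cob_adj ((hmem e).2 (Or.inl hm)), Pi.add_apply, cob_adj hm, cob_adj hm2, hψ]
        simp only [l, r, if_true]
        have := z2_self (p (Sum.inl (l₁ e)))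
        linear_combination -this
      · have hm2 : e ∉ G₂.edgeSet := fun h => hm (he₀.2 h)
        have hm3 : e ∉ (G₁ ⊔ G₂).edgeSet := by rw [hmem]; tauto
        rw [cob_not hm3, Pi.add_apply, cob_not hm, cob_not hm2, add_zero]
    · by_cases hm : e ∈ G₁.edgeSet
      · have hm2 : e ∉ G₂.edgeSet := fun h => hee (hE e hm h)
        rw [cob_adj ((hmem e).2 (Or.inl hm)), Pi.add_apply, cob_adj hm, cob_not hm2, add_zero]
        simp only [l, r, if_neg hee, if_pos hm]
      · by_cases hm2 : e ∈ G₂.edgeSet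
        · rw [cob_adj ((hmem e).2 (Or.inr hm2)), Pi.add_apply, cob_not hm, cob_adj hm2, zero_add]
          simp only [l, r, if_neg hee, if_neg hm]
        · have hm3 : e ∉ (G₁ ⊔ G₂).edgeSet := by rw [hmem]; tauto
          rw [cob_not hm3, Pi.add_apply, cob_not hm, cob_not hm2, add_zero]
  refine ⟨ι₁ ⊕ ι₂, inferInstance, l, r, fun z => ⟨fun hz => ?_, ?_⟩⟩
  · obtain ⟨z₁, z₂, hz1, hz2, rfl⟩ := hcyc z hz
    obtain ⟨q₁, rfl⟩ := (hf1 _).1 hz1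
    obtain ⟨q₂, rfl, hq2⟩ := hf2.exists_norm hz2 (l₂ e₀) (q₁ (l₁ e₀))
    refine ⟨Sum.elim q₁ q₂, ?_⟩
    rw [key]
    congr 2
    funext j
    by_cases hj : j = l₂ e₀
    · subst hj
      rw [hψ, hq2]
      rfl
    · simp [ψ, hj]
  · rintro ⟨p, rfl⟩
    rw [key]
    exact ((hf1.cyc _).mono le_sup_left).add ((hf2.cyc _).mono le_sup_right)

/-- Splitting a face. -/
lemma split {ι : Type*} {G G' : SimpleGraph V} {l r : Sym2 V → ι} (hfs : IsFS G l r)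
    (hle : G ≤ G') (c : ι) {Q : Sym2 V → ZMod 2} (hQ : Cyc G' Q)
    (hQ1 : ∀ e ∈ G'.edgeSet, e ∉ G.edgeSet → Q e = 1)
    (hQ2 : ∀ e ∈ G.edgeSet, Q e ≠ 0 → face G l r c e ≠ 0)
    (hz : ∀ z, Cyc G' z → ∃ α, ∀ e ∈ G'.edgeSet, e ∉ G.edgeSet → z e = α) :
    ∃ l' r' : Sym2 V → Option ι, IsFS G' l' r' ∧ face G' l' r' none = Q ∧
      face G' l' r' (some c) = face G l r c + Q ∧
      ∀ i, i ≠ c → face G' l' r' (some i) = face G l r i := by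
  let l' : Sym2 V → Option ι := fun e => if e ∈ G.edgeSet then
    (if Q e ≠ 0 ∧ l e = c then none else some (l e)) else some c
  let r' : Sym2 V → Option ι := fun e => if e ∈ G.edgeSet then
    (if Q e ≠ 0 ∧ r e = c then none else some (r e)) else none
  have hle' := SimpleGraph.edgeSet_mono hle
  have key : ∀ p : Option ι → ZMod 2, cob G' l' r' p =
      cob G l r (fun i => p (some i)) + (p none + p (some c)) • Q := by
    intro p
    funext e
    rw [Pi.add_apply, Pi.smul_apply, smul_eq_mul]
    by_cases he : e ∈ G.edgeSet
    · rw [cob_adj he, cob_adj (hle' he)]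
      simp only [l', r', if_pos he]
      by_cases hq : Q e = 0
      · simp [hq]
      · have hf := hQ2 e he hq
        unfold face at hf
        rw [cob_adj he] at hf
        have h2 := z2_self (p (some c))
        by_cases h1 : l e = c
        · by_cases h3 : r e = c
          · exfalso
            apply hf
            rw [h1, h3, z2_self]
          · rw [if_pos ⟨hq, h1⟩, if_neg (fun h => h3 h.2), z2_ne hq, h1]
            linear_combination -h2
        · by_cases h3 : r e = c
          · rw [if_neg (fun h => h1 h.2), if_pos ⟨hq, h3⟩, z2_ne hq, h3]
            linear_combination -h2
          · exfalso
            apply hf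
            simp [pt, h1, h3]
    · rw [cob_not he, zero_add]
      by_cases he' : e ∈ G'.edgeSet
      · rw [cob_adj he', hQ1 e he' he]
        simp only [l', r', if_neg he]
        ring
      · rw [cob_not he', hQ.1 e he', mul_zero]
  have hz0 : cob G l r (fun _ => (0 : ZMod 2)) = 0 := by
    funext e
    simp [cob]
  refine ⟨l', r', fun z => ⟨fun h => ?_, ?_⟩, ?_, ?_, ?_⟩
  · obtain ⟨α, hα⟩ := hz z h
    have hy : Cyc G (z + α • Q) := by
      refine ⟨fun e he => ?_, (h.add (hQ.smul α)).2⟩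
      by_cases he' : e ∈ G'.edgeSet
      · simp [hα e he' he, hQ1 e he' he, z2_self]
      · simp [h.1 e he', hQ.1 e he']
    obtain ⟨q, hq⟩ := (hfs _).1 hy
    refine ⟨fun o => o.elim (q c + α) q, ?_⟩
    rw [key]
    show z = cob G l r q + (q c + α + q c) • Q
    rw [← hq]
    have h1 : q c + α + q c = α := by
      have := z2_self (q c)
      linear_combination this
    rw [h1, add_assoc, ← add_smul, z2_self, zero_smul, add_zero]
  · rintro ⟨p, rfl⟩
    rw [key]
    exact ((hfs.cyc _).mono hle).add (hQ.smul _)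
  · unfold face
    rw [key]
    simp [pt, hz0]
  · unfold face
    rw [key]
    have : (fun i => pt (some c) (some i)) = pt c := by
      funext i
      simp [pt]
    simp [pt]
    congr 1
  · intro i hi
    unfold face
    rw [key]
    have : (fun j => pt (some i) (some j)) = pt i := by
      funext j
      simp [pt]
    rw [this]
    simp [pt, hi.symm]

end PartThree

section PartFour
open Set Classical

variable {V : Type*} [Fintype V]

/-- Chain of a walk given by a sequence. -/
noncomputable def path (u : ℕ → V) (i j : ℕ) : Sym2 V → ZMod 2 :=
  ∑ t ∈ Finset.Ico i j, dl s(u t, u (t + 1))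

lemma path_add (u : ℕ → V) {i j k : ℕ} (hij : i ≤ j) (hjk : j ≤ k) :
    path u i j + path u j k = path u i k :=
  Finset.sum_Ico_consecutive _ hij hjk

lemma bd_path (u : ℕ → V) {i j : ℕ} (hij : i ≤ j) (hne : ∀ t, i ≤ t → t < j → u t ≠ u (t + 1))
    (v : V) : bd (path u i j) v = pt (u i) v + pt (u j) v := by
  induction j, hij using Nat.le_induction with
  | base => simp [path, bd_zero, z2_self]
  | succ j hij ih =>
    rw [← path_add u hij (Nat.le_succ j), bd_add, ih (fun t h1 h2 => hne t h1 (by omega))]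
    have : path u j (j + 1) = dl s(u j, u (j + 1)) := by simp [path]
    rw [this, bd_dl (hne j hij (by omega))]
    have := z2_self (pt (u j) v)
    linear_combination this

lemma path_ne {u : ℕ → V} {i j : ℕ} {e : Sym2 V} (h : path u i j e ≠ 0) :
    ∃ t, i ≤ t ∧ t < j ∧ e = s(u t, u (t + 1)) := by
  unfold path at h
  rw [Finset.sum_apply] at h
  obtain ⟨t, ht, hne⟩ := Finset.exists_ne_zero_of_sum_ne_zero h
  rw [Finset.mem_Ico] at ht
  refine ⟨t, ht.1, ht.2, ?_⟩
  by_contra hc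
  simp [dl, hc] at hne

lemma path_one {u : ℕ → V} {i j t : ℕ} (h1 : i ≤ t) (h2 : t < j)
    (hinj : ∀ t', i ≤ t' → t' < j → s(u t', u (t' + 1)) = s(u t, u (t + 1)) → t' = t) :
    path u i j s(u t, u (t + 1)) = 1 := by
  unfold path
  rw [Finset.sum_apply, Finset.sum_eq_single t]
  · simp [dl]
  · intro t' ht' hne
    rw [Finset.mem_Ico] at ht'
    have : s(u t, u (t + 1)) ≠ s(u t', u (t' + 1)) := fun h => hne (hinj t' ht'.1 ht'.2 h.symm)
    simp [dl, this]
  · intro h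
    simp at h
    omega

lemma path_zero {u : ℕ → V} {i j : ℕ} {x w : V} (hx : ∀ t, i ≤ t → t ≤ j → u t ≠ x) :
    path u i j s(x, w) = 0 := by
  by_contra h
  obtain ⟨t, h1, h2, he⟩ := path_ne h
  rw [Sym2.eq_iff] at he
  rcases he with ⟨h3, _⟩ | ⟨h3, _⟩
  · exact hx t h1 h2.le h3.symm
  · exact hx (t + 1) (by omega) (by omega) h3.symm

lemma edge_inj {u : ℕ → V} {n t t' : ℕ} (hu : InjOn u (Iic n)) (h1 : t < n) (h2 : t' < n)
    (h : s(u t', u (t' + 1)) = s(u t, u (t + 1))) : t' = t := by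
  rw [Sym2.eq_iff] at h
  rcases h with ⟨h3, _⟩ | ⟨h3, h4⟩
  · exact hu (by simp; omega) (by simp; omega) h3
  · have := hu (by simp; omega) (by simp; omega) h3
    have := hu (by simp; omega) (by simp; omega) h4
    omega

lemma edge_inj_cyc {u : ℕ → V} {k t t' : ℕ} (hk : 3 ≤ k) (hper : u k = u 0) (hu : InjOn u (Iio k))
    (h1 : t < k) (h2 : t' < k) (h : s(u t', u (t' + 1)) = s(u t, u (t + 1))) : t' = t := by
  rw [Sym2.eq_iff] at h
  rcases h with ⟨h3, _⟩ | ⟨h3, h4⟩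
  · exact hu (by simp; omega) (by simp; omega) h3
  · exfalso
    by_cases ht : t + 1 = k
    · rw [ht, hper] at h3
      have e1 := hu (by simp; omega) (by simp; omega) h3
      subst e1
      have := hu (by simp; omega) (by simp; omega) h4
      omega
    · have e1 := hu (by simp; omega) (by simp; omega) h3
      subst e1
      by_cases ht2 : t + 2 = k
      · rw [ht2, hper] at h4
        have := hu (by simp; omega) (by simp; omega) h4
        omega
      · have := hu (by simp; omega) (by simp; omega) h4
        omega

/-- Join `x` to all vertices of `W`. -/
def addStar (G : SimpleGraph V) (x : V) (W : Set V) : SimpleGraph V where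
  Adj a b := G.Adj a b ∨ (a ≠ b ∧ ((a = x ∧ b ∈ W) ∨ (b = x ∧ a ∈ W)))
  symm := ⟨fun _ _ h => by
    rcases h with h | ⟨h, h2⟩
    · exact Or.inl h.symm
    · exact Or.inr ⟨h.symm, h2.symm⟩⟩
  loopless := ⟨fun _ h => by
    rcases h with h | ⟨h, _⟩
    · exact h.ne rfl
    · exact h rfl⟩

lemma le_addStar (G : SimpleGraph V) (x : V) (W : Set V) : G ≤ addStar G x W :=
  fun _ _ h => Or.inl h

lemma addStar_addStar (G : SimpleGraph V) (x : V) (A B : Set V) :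
    addStar (addStar G x A) x B = addStar G x (A ∪ B) := by
  ext a b
  simp only [addStar, mem_union]
  tauto

lemma addStar_empty (G : SimpleGraph V) (x : V) : addStar G x ∅ = G := by
  ext a b
  simp [addStar]

lemma mem_addStar {G : SimpleGraph V} {x : V} {W : Set V} {e : Sym2 V}
    (he : e ∈ (addStar G x W).edgeSet) (he' : e ∉ G.edgeSet) : ∃ w ∈ W, x ≠ w ∧ e = s(x, w) := by
  induction e using Sym2.ind with
  | _ a b =>
    rcases he with h | ⟨h, ⟨rfl, h2⟩ | ⟨rfl, h2⟩⟩
    · exact absurd h he'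
    · exact ⟨b, h2, h, rfl⟩
    · exact ⟨a, h2, h.symm, Sym2.eq_swap⟩

lemma dl_self (e : Sym2 V) : dl e e = 1 := by simp [dl]
lemma dl_of_ne {e e' : Sym2 V} (h : e ≠ e') : dl e' e = 0 := by simp [dl, h]

lemma fan {x : V} {u : ℕ → V} (J : Finset ℕ) : ∀ (n : ℕ) (G : SimpleGraph V) (ι : Type) [Finite ι]
    (l r : Sym2 V → ι) (c c' : ι), IsFS G l r → (∀ j ∈ J, 0 < j ∧ j < n) → InjOn u (Iic n) →
    (∀ t, t ≤ n → u t ≠ x) → (∀ j ∈ J, ¬ G.Adj x (u j)) → G.Adj x (u 0) → G.Adj x (u n) →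
    (∀ t, t < n → G.Adj (u t) (u (t + 1))) → 0 < n →
    face G l r c = dl s(x, u 0) + path u 0 n + dl s(x, u n) → c' ≠ c →
    ∃ (ι' : Type) (_ : Finite ι') (l' r' : Sym2 V → ι') (c'' : ι'),
      IsFS (addStar G x (u '' J)) l' r' ∧
      face (addStar G x (u '' J)) l' r' c'' = face G l r c' := by
  induction J using Finset.induction_on_max with
  | empty =>
    intro n G ι hι l r c c' hfs _ _ _ _ _ _ _ _ _ _
    refine ⟨ι, hι, l, r, c', ?_⟩
    have : addStar G x (u '' ((∅ : Finset ℕ) : Set ℕ)) = G := by simp [addStar_empty]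
    rw [this]
    exact ⟨hfs, rfl⟩
  | insert j J hJ ih =>
    intro n G ι hι l r c c' hfs hJn hu hux hnadj h0 hn hadj hnpos hface hcc
    obtain ⟨hj0, hjn⟩ := hJn j (Finset.mem_insert_self _ _)
    set G' := addStar G x {u j} with hG'
    set Q := dl s(x, u j) + path u j n + dl s(x, u n) with hQdef
    have hxj : x ≠ u j := (hux j hjn.le).symm
    have hadj' : G'.Adj x (u j) := Or.inr ⟨hxj, Or.inl ⟨rfl, rfl⟩⟩
    have hjne : s(x, u j) ≠ s(x, u n) := by
      intro h
      rw [Sym2.congr_right] at h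
      have := hu (by simp; omega) (by simp) h
      omega
    have hnew : ∀ e ∈ G'.edgeSet, e ∉ G.edgeSet → e = s(x, u j) := by
      intro e he he'
      obtain ⟨w, hw, _, rfl⟩ := mem_addStar he he'
      rw [mem_singleton_iff.1 hw]
    have hnot : s(x, u j) ∉ G.edgeSet := hnadj j (Finset.mem_insert_self _ _)
    have hpx : ∀ i k w, k ≤ n → path u i k s(x, w) = 0 := fun i k w hk =>
      path_zero fun t _ h2 => hux t (by omega)
    have hQcyc : Cyc G' Q := by
      constructor
      · intro e he
        have e1 : e ≠ s(x, u j) := by rintro rfl; exact he hadj'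
        have e2 : e ≠ s(x, u n) := by rintro rfl; exact he (le_addStar _ _ _ hn)
        have e3 : path u j n e = 0 := by
          by_contra h
          obtain ⟨t, h1, h2, rfl⟩ := path_ne h
          exact he (le_addStar _ _ _ (hadj t h2))
        simp [hQdef, dl_of_ne e1, dl_of_ne e2, e3]
      · intro v
        rw [hQdef, bd_add, bd_add, bd_dl hxj, bd_dl hn.ne,
          bd_path u hjn.le (fun t _ h2 => (hadj t h2).ne)]
        have h1 := z2_self (pt x v)
        have h2 := z2_self (pt (u j) v)
        have h3 := z2_self (pt (u n) v)
        linear_combination h1 + h2 + h3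
    obtain ⟨l', r', hfs', hf1, hf2, hf3⟩ := split hfs (le_addStar G x {u j}) c hQcyc
      (by
        intro e he he'
        rw [hnew e he he']
        simp [hQdef, dl_self, dl_of_ne hjne, hpx])
      (by
        intro e he hne
        have e1 : e ≠ s(x, u j) := by rintro rfl; exact hnot he
        rw [hface]
        by_cases e2 : e = s(x, u n)
        · subst e2
          have : s(x, u n) ≠ s(x, u 0) := by
            intro h
            rw [Sym2.congr_right] at h
            have := hu (by simp) (by simp) h
            omega
          simp [dl_self, dl_of_ne this, hpx]
        · simp only [hQdef, Pi.add_apply, dl_of_ne e1, dl_of_ne e2, add_zero, zero_add] at hne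
          obtain ⟨t, h1, h2, rfl⟩ := path_ne hne
          have e3 : s(u t, u (t + 1)) ≠ s(x, u 0) := by
            intro h
            rw [Sym2.eq_iff] at h
            rcases h with ⟨h, _⟩ | ⟨_, h⟩
            · exact hux _ (by omega) h
            · exact hux _ (by omega) h
          simp only [Pi.add_apply, dl_of_ne e3, dl_of_ne e2, add_zero, zero_add]
          rw [path_one (Nat.zero_le _) h2 (fun t' _ h3 h => edge_inj hu h2 h3 h)]
          exact one_ne_zero)
      (by
        intro z _
        refine ⟨z s(x, u j), fun e he he' => ?_⟩
        rw [hnew e he he'])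
    have hface' : face G' l' r' (some c) = dl s(x, u 0) + path u 0 j + dl s(x, u j) := by
      rw [hf2, hface, ← path_add u (Nat.zero_le j) hjn.le, hQdef]
      funext e
      simp only [Pi.add_apply]
      have h1 := z2_self (path u j n e)
      have h2 := z2_self (dl s(x, u n) e)
      linear_combination h1 + h2
    obtain ⟨ι', hι', l'', r'', c'', h1, h2⟩ := ih j G' (Option ι) l' r' (some c) (some c') hfs'
      (fun i hi => ⟨(hJn i (Finset.mem_insert_of_mem hi)).1, hJ i hi⟩)
      (hu.mono (Iic_subset_Iic.2 hjn.le)) (fun t ht => hux t (by omega))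
      (by
        intro i hi h
        have hin := hJn i (Finset.mem_insert_of_mem hi)
        have hij := hJ i hi
        rcases h with h | ⟨_, ⟨_, h⟩ | ⟨h, _⟩⟩
        · exact hnadj i (Finset.mem_insert_of_mem hi) h
        · have := hu (by simp; omega) (by simp; omega) (mem_singleton_iff.1 h)
          omega
        · exact hux i (by omega) h)
      (le_addStar _ _ _ h0) hadj' (fun t ht => le_addStar _ _ _ (hadj t (by omega))) hj0 hface'
      (by simpa using hcc)
    have hGG : addStar G' x (u '' J) = addStar G x (u '' ((insert j J : Finset ℕ) : Set ℕ)) := by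
      rw [hG', addStar_addStar, Finset.coe_insert, image_insert_eq, singleton_union]
    rw [← hGG]
    exact ⟨ι', hι', l'', r'', c'', h1, by rw [h2, hf3 c' hcc]⟩

lemma attach {y : V} {u : ℕ → V} {k q : ℕ} {G : SimpleGraph V} {ι : Type} [Finite ι]
    {l r : Sym2 V → ι} {c : ι} (hfs : IsFS G l r) (hk : 3 ≤ k) (hper : u k = u 0)
    (hu : InjOn u (Iio k)) (hadj : ∀ t, t < k → G.Adj (u t) (u (t + 1)))
    (hy : ∀ w, ¬ G.Adj y w) (hface : face G l r c = path u 0 k) (hq0 : 0 < q) (hqk : q < k)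
    (P : Finset ℕ) (hP : ∀ j ∈ P, j ≤ q) (h0P : 0 ∈ P) (hqP : q ∈ P) :
    ∃ (ι' : Type) (_ : Finite ι') (l' r' : Sym2 V → ι') (c'' : ι'),
      IsFS (addStar G y (u '' P)) l' r' ∧
      face (addStar G y (u '' P)) l' r' c'' = dl s(y, u 0) + dl s(y, u q) + path u q k := by
  have huy : ∀ t, t ≤ k → u t ≠ y := by
    intro t ht h
    rcases Nat.lt_or_eq_of_le ht with h1 | rfl
    · exact hy _ (h ▸ hadj t h1)
    · rw [hper] at h
      exact hy _ (h ▸ hadj 0 (by omega))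
  set G' := addStar G y {u 0, u q} with hG'
  set Q := dl s(y, u 0) + path u 0 q + dl s(y, u q) with hQdef
  have h0q : u 0 ≠ u q := by
    intro h
    have := hu (by simp; omega) (by simp; omega) h
    omega
  have hne0 : s(y, u 0) ≠ s(y, u q) := by rwa [Ne, Sym2.congr_right]
  have hadj0 : G'.Adj y (u 0) := Or.inr ⟨(huy 0 (by omega)).symm, Or.inl ⟨rfl, by simp⟩⟩
  have hadjq : G'.Adj y (u q) := Or.inr ⟨(huy q (by omega)).symm, Or.inl ⟨rfl, by simp⟩⟩
  have hpx : ∀ i j w, j ≤ k → path u i j s(y, w) = 0 := fun i j w hk =>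
    path_zero fun t _ h2 => huy t (by omega)
  have hnew : ∀ e ∈ G'.edgeSet, e ∉ G.edgeSet → e = s(y, u 0) ∨ e = s(y, u q) := by
    intro e he he'
    obtain ⟨w, hw, _, rfl⟩ := mem_addStar he he'
    rcases hw with rfl | hw
    · exact Or.inl rfl
    · rw [mem_singleton_iff.1 hw]; exact Or.inr rfl
  have hQcyc : Cyc G' Q := by
    constructor
    · intro e he
      have e1 : e ≠ s(y, u 0) := by rintro rfl; exact he hadj0
      have e2 : e ≠ s(y, u q) := by rintro rfl; exact he hadjq
      have e3 : path u 0 q e = 0 := by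
        by_contra h
        obtain ⟨t, h1, h2, rfl⟩ := path_ne h
        exact he (le_addStar _ _ _ (hadj t (by omega)))
      simp [hQdef, dl_of_ne e1, dl_of_ne e2, e3]
    · intro v
      rw [hQdef, bd_add, bd_add, bd_dl hadj0.ne, bd_dl hadjq.ne,
        bd_path u hq0.le (fun t _ h2 => (hadj t (by omega)).ne)]
      have h1 := z2_self (pt y v)
      have h2 := z2_self (pt (u 0) v)
      have h3 := z2_self (pt (u q) v)
      linear_combination h1 + h2 + h3
  obtain ⟨l', r', hfs', hf1, hf2, hf3⟩ := split hfs (le_addStar G y {u 0, u q}) c hQcyc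
    (by
      intro e he he'
      rcases hnew e he he' with rfl | rfl
      · simp [hQdef, dl_self, dl_of_ne hne0, hpx 0 q _ hqk.le]
      · simp [hQdef, dl_self, dl_of_ne hne0.symm, hpx 0 q _ hqk.le])
    (by
      intro e he hne
      have e1 : ∀ w, e ≠ s(y, w) := by rintro w rfl; exact hy _ he
      simp only [hQdef, Pi.add_apply, dl_of_ne (e1 _), add_zero, zero_add] at hne
      obtain ⟨t, h1, h2, rfl⟩ := path_ne hne
      rw [hface, path_one (Nat.zero_le _) (by omega)
        (fun t' _ h3 h => edge_inj_cyc hk hper hu (by omega) h3 h)]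
      exact one_ne_zero)
    (by
      intro z hz
      have hb := hz.2 y
      have heq : z s(y, u 0) = z s(y, u q) := by
        unfold bd at hb
        rw [Finset.sum_eq_add (u 0) (u q) h0q] at hb
        · exact z2_eq_of_add hb
        · intro w _ hw
          apply hz.1
          intro h
          rcases hnew _ h (hy w) with h | h
          · rw [Sym2.congr_right] at h
            exact hw.1 h
          · rw [Sym2.congr_right] at h
            exact hw.2 h
        · simp
        · simp
      refine ⟨z s(y, u 0), fun e he he' => ?_⟩
      rcases hnew e he he' with rfl | rfl
      · rfl
      · exact heq.symm)
  obtain ⟨ι', hι', l'', r'', c'', h1, h2⟩ := fan (x := y) (u := u) ((P.erase 0).erase q) q G'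
    (Option ι) l' r' none (some c) hfs'
    (by
      intro j hj
      simp only [Finset.mem_erase] at hj
      have := hP j hj.2.2
      omega)
    (hu.mono (fun t ht => by simp at ht ⊢; omega)) (fun t ht => huy t (by omega))
    (by
      intro j hj h
      simp only [Finset.mem_erase] at hj
      have hjq := hP j hj.2.2
      rcases h with h | ⟨_, ⟨_, h⟩ | ⟨h, _⟩⟩
      · exact hy _ h
      · rcases h with h | h
        · exact hj.2.1 (hu (by simp; omega) (by simp; omega) h)
        · exact hj.1 (hu (by simp; omega) (by simp; omega) (mem_singleton_iff.1 h))
      · exact huy j (by omega) h)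
    hadj0 hadjq (fun t ht => le_addStar _ _ _ (hadj t (by omega))) hq0 hf1 (by simp)
  have hGG : addStar G' y (u '' ((P.erase 0).erase q : Finset ℕ)) = addStar G y (u '' P) := by
    rw [hG', addStar_addStar]
    congr 1
    have : (P : Set ℕ) = ({0, q} : Set ℕ) ∪ (((P.erase 0).erase q : Finset ℕ) : Set ℕ) := by
      ext t
      simp only [Finset.coe_erase, mem_union, mem_insert_iff, mem_singleton_iff, mem_sdiff,
        Finset.mem_coe]
      constructor
      · tauto
      · rintro ((rfl | rfl) | h) <;> tauto
    rw [this, image_union, image_pair]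
  rw [← hGG]
  refine ⟨ι', hι', l'', r'', c'', h1, ?_⟩
  rw [h2, hf2, hface, ← path_add u (Nat.zero_le q) hqk.le, hQdef]
  funext e
  simp only [Pi.add_apply]
  have h1 := z2_self (path u 0 q e)
  linear_combination h1

end PartFour

section PartFive
open Set Classical

variable {V : Type*} [Fintype V]

lemma exists_cycle_seq {G : SimpleGraph V} {z : Sym2 V → ZMod 2} (hz : Cyc G z) (hne : z ≠ 0) :
    ∃ (u : ℕ → V) (k : ℕ), 3 ≤ k ∧ Function.Periodic u k ∧ InjOn u (Iio k) ∧
      (∀ t, z s(u t, u (t + 1)) ≠ 0) ∧ G.girth ≤ k := by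
  have hdiag : ∀ v, z s(v, v) = 0 := fun v => hz.1 _ (fun h => G.loopless.irrefl v h)
  let H : SimpleGraph V := SimpleGraph.fromEdgeSet {e | z e ≠ 0}
  have hH : ∀ a b, H.Adj a b ↔ z s(a, b) ≠ 0 := by
    intro a b
    simp only [H, SimpleGraph.fromEdgeSet_adj, mem_setOf_eq]
    constructor
    · exact fun h => h.1
    · intro h
      refine ⟨h, ?_⟩
      rintro rfl
      exact h (hdiag a)
  have hHG : H ≤ G := by
    intro a b h
    by_contra hc
    exact (hH a b).1 h (hz.1 _ hc)
  have hac : ¬ H.IsAcyclic := by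
    intro hac
    rw [SimpleGraph.isAcyclic_iff_forall_adj_isBridge] at hac
    obtain ⟨e, he⟩ : ∃ e, z e ≠ 0 := by
      by_contra hcon
      push Not at hcon
      exact hne (funext hcon)
    induction e using Sym2.ind with
    | _ a b =>
      have hbr := hac ((hH a b).2 he)
      rw [SimpleGraph.isBridge_iff] at hbr
      let A : V → ZMod 2 := fun w =>
        if (H.deleteEdges {s(a, b)}).Reachable a w then 1 else 0
      have hp := pairing A z hdiag
      simp only [hz.2, mul_zero, Finset.sum_const_zero] at hp
      rw [Finset.sum_eq_single s(a, b)] at hp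
      · have h1 : A a = 1 := by simp [A]
        have h2 : A b = 0 := by simp only [A]; rw [if_neg hbr]
        simp [dd, h1, h2] at hp
        exact he hp.symm
      · intro e' _ hne'
        by_cases hz' : z e' = 0
        · simp [hz']
        · induction e' using Sym2.ind with
          | _ c d =>
            have hcd : (H.deleteEdges {s(a, b)}).Adj c d := by
              rw [SimpleGraph.deleteEdges_adj]
              exact ⟨(hH c d).2 hz', hne'⟩
            have : A c = A d := by
              simp only [A]
              congr 1
              apply propext
              exact ⟨fun h => h.trans hcd.reachable, fun h => h.trans hcd.symm.reachable⟩
            simp [dd, this, z2_self]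
      · simp
  unfold SimpleGraph.IsAcyclic at hac
  push Not at hac
  obtain ⟨v, c, hc⟩ := hac
  have hk := hc.three_le_length
  refine ⟨fun i => c.getVert (i % c.length), c.length, hk, ?_, ?_, ?_, ?_⟩
  · intro i
    simp
  · intro i hi j hj h
    simp only [mem_Iio] at hi hj
    simp only [Nat.mod_eq_of_lt hi, Nat.mod_eq_of_lt hj] at h
    exact hc.getVert_injOn' (by simp; omega) (by simp; omega) h
  · intro t
    show z s(c.getVert (t % c.length), c.getVert ((t + 1) % c.length)) ≠ 0
    rw [← hH]
    have hlt : t % c.length < c.length := Nat.mod_lt _ (by omega)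
    have := c.adj_getVert_succ hlt
    rw [← Nat.mod_add_mod]
    by_cases h : t % c.length + 1 = c.length
    · rw [h, SimpleGraph.Walk.getVert_length] at this
      rw [h, Nat.mod_self, SimpleGraph.Walk.getVert_zero]
      exact this
    · rw [Nat.mod_eq_of_lt (by omega : t % c.length + 1 < c.length)]
      exact this
  · have := (hc.mapLe hHG).girth_le_length
    simpa using this

lemma connOn_arc {G : SimpleGraph V} {w : ℕ → V} {i j : ℕ}
    (h : ∀ t, i ≤ t → t + 1 < j → G.Adj (w t) (w (t + 1))) (hij : i < j) :
    ConnOn G (w '' Ico i j) := by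
  induction j, hij using Nat.le_induction with
  | base =>
    have : Ico i (i + 1) = {i} := by ext; simp; omega
    rw [Nat.succ_eq_add_one, this, image_singleton]
    exact connOn_singleton G _
  | succ j hij ih =>
    have hij' : i < j := hij
    have : Ico i (j + 1) = insert j (Ico i j) := by ext; simp; omega
    rw [this, image_insert_eq]
    refine (ih fun t h1 h2 => h t h1 (by omega)).insert (s := w (j - 1)) ⟨j - 1, by simp; omega, rfl⟩ ?_
    have := h (j - 1) (by omega) (by omega)
    rwa [Nat.sub_add_cancel (by omega)] at this

/-- Minors from arcs. -/
lemma minor_of_arcs {W : Type*} {K : SimpleGraph W} {G : SimpleGraph V} {w : ℕ → V} {b : ℕ → ℕ}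
    {m : ℕ} (hb : ∀ i, i < m → b i < b (i + 1)) (hw : InjOn w (Iio (b m)))
    (hc : ∀ i, i < m → ∀ t, b i ≤ t → t + 1 < b (i + 1) → G.Adj (w t) (w (t + 1)))
    (σ : W → ℕ) (hσ : Function.Injective σ) (hσm : ∀ a, σ a < m)
    (hadj : ∀ a a', K.Adj a a' → ∃ i j, (b (σ a) ≤ i ∧ i < b (σ a + 1)) ∧
      (b (σ a') ≤ j ∧ j < b (σ a' + 1)) ∧ G.Adj (w i) (w j)) : K.IsMinorOf G := by
  have hmono : ∀ i j, i ≤ j → j ≤ m → b i ≤ b j := by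
    intro i j hij
    induction j, hij using Nat.le_induction with
    | base => intro _; exact le_rfl
    | succ j hij ih =>
      intro hj
      exact (ih (by omega)).trans (hb j (by omega)).le
  have hdis : ∀ i j, i < j → j < m →
      Disjoint (w '' Ico (b i) (b (i + 1))) (w '' Ico (b j) (b (j + 1))) := by
    intro i j hij hj
    rw [Set.disjoint_left]
    rintro _ ⟨s, ⟨hs1, hs2⟩, rfl⟩ ⟨t, ⟨ht1, ht2⟩, hst⟩
    have h1 := hmono (i + 1) j hij hj.le
    have h2 := hmono (j + 1) m hj le_rfl
    have := hw (by simp; omega) (by simp; omega) hst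
    omega
  refine ⟨fun a => w '' Ico (b (σ a)) (b (σ a + 1)), fun a => ?_, fun a a' hne => ?_, ?_⟩
  · rw [connected_induce_iff_connOn]
    have := hb _ (hσm a)
    exact ⟨⟨w (b (σ a)), b (σ a), by simpa using this, rfl⟩, connOn_arc (hc _ (hσm a)) this⟩
  · have hne' : σ a ≠ σ a' := fun h => hne (hσ h)
    rcases lt_or_gt_of_ne hne' with h | h
    · exact hdis _ _ h (hσm _)
    · exact (hdis _ _ h (hσm _)).symm
  · intro a a' h
    obtain ⟨i, j, hi, hj, hij⟩ := hadj a a' h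
    exact ⟨w i, ⟨i, hi, rfl⟩, w j, ⟨j, hj, rfl⟩, hij⟩

/-- Extend a cycle by two extra vertices. -/
noncomputable def ext2 (u : ℕ → V) (k : ℕ) (x y : V) (i : ℕ) : V :=
  if i < k then u i else if i = k then x else y

lemma ext2_inj {u : ℕ → V} {k : ℕ} {x y : V} (hu : InjOn u (Iio k)) (hxy : x ≠ y)
    (hx : ∀ t, u t ≠ x) (hy : ∀ t, u t ≠ y) : InjOn (ext2 u k x y) (Iio (k + 2)) := by
  intro i hi j hj h
  simp only [mem_Iio] at hi hj
  unfold ext2 at h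
  split_ifs at h with h1 h2 h3 h4 h5 h6 h7
  · exact hu h1 h2 h
  · exact absurd h (hx _)
  · exact absurd h (hy _)
  · exact absurd h.symm (hx _)
  · omega
  · exact absurd h hxy
  · exact absurd h.symm (hy _)
  · exact absurd h.symm hxy
  · omega

lemma k33_of {G : SimpleGraph V} {u : ℕ → V} {k p t q : ℕ} {x y : V}
    (hper : u k = u 0) (hu : InjOn u (Iio k)) (hadj : ∀ t, G.Adj (u t) (u (t + 1)))
    (hx : ∀ t, u t ≠ x) (hy : ∀ t, u t ≠ y) (hxy : G.Adj x y) (h1 : 0 < p) (h2 : p < t)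
    (h3 : t < q) (h4 : q < k) (hy0 : G.Adj y (u 0)) (hyt : G.Adj y (u t)) (hxp : G.Adj x (u p))
    (hxq : G.Adj x (u q)) : (completeBipartiteGraph (Fin 3) (Fin 3)).IsMinorOf G := by
  set w := ext2 u k x y with hw
  have wu : ∀ i, i < k → w i = u i := fun i hi => if_pos hi
  have wx : w k = x := by simp [hw, ext2]
  have wy : w (k + 1) = y := by simp [hw, ext2]
  let b : ℕ → ℕ := fun i => if i = 0 then 0 else if i = 1 then p else if i = 2 then t else
    if i = 3 then q else k + (i - 4)
  let σ : Fin 3 ⊕ Fin 3 → ℕ := Sum.elim ![4, 0, 2] ![5, 1, 3]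
  let R : ℕ → ℕ → Prop := fun s s' => ∃ i j, (b s ≤ i ∧ i < b (s + 1)) ∧
      (b s' ≤ j ∧ j < b (s' + 1)) ∧ G.Adj (w i) (w j)
  have Rs : ∀ s s', R s s' → R s' s := fun s s' ⟨i, j, h, h', h''⟩ => ⟨j, i, h', h, h''.symm⟩
  have mk : ∀ i j s s', (b s ≤ i ∧ i < b (s + 1)) → (b s' ≤ j ∧ j < b (s' + 1)) →
    G.Adj (w i) (w j) → R s s' := fun i j s s' h h' h'' => ⟨i, j, h, h', h''⟩
  have R45 : R 4 5 := mk k (k + 1) 4 5 (by simp [b]) (by simp [b]) (by rw [wx, wy]; exact hxy)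
  have R41 : R 4 1 := mk k p 4 1 (by simp [b]) (by simp [b]; omega)
    (by rw [wx, wu _ (by omega)]; exact hxp)
  have R43 : R 4 3 := mk k q 4 3 (by simp [b]) (by simp [b]; omega)
    (by rw [wx, wu _ (by omega)]; exact hxq)
  have R05 : R 0 5 := mk 0 (k + 1) 0 5 (by simp [b]; omega) (by simp [b])
    (by rw [wy, wu _ (by omega)]; exact hy0.symm)
  have R25 : R 2 5 := mk t (k + 1) 2 5 (by simp [b]; omega) (by simp [b])
    (by rw [wy, wu _ (by omega)]; exact hyt.symm)
  have hsub : ∀ i, 0 < i → G.Adj (u (i - 1)) (u i) := by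
    intro i hi
    have := hadj (i - 1)
    rwa [Nat.sub_add_cancel hi] at this
  have R01 : R 0 1 := mk (p - 1) p 0 1 (by simp [b]; omega) (by simp [b]; omega)
    (by rw [wu _ (by omega), wu _ (by omega)]; exact hsub p h1)
  have R03 : R 0 3 := mk 0 (k - 1) 0 3 (by simp [b]; omega) (by simp [b]; omega)
    (by rw [wu _ (by omega), wu _ (by omega), ← hper]; exact (hsub k (by omega)).symm)
  have R21 : R 2 1 := mk t (t - 1) 2 1 (by simp [b]; omega) (by simp [b]; omega)
    (by rw [wu _ (by omega), wu _ (by omega)]; exact (hsub t (by omega)).symm)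
  have R23 : R 2 3 := mk (q - 1) q 2 3 (by simp [b]; omega) (by simp [b]; omega)
    (by rw [wu _ (by omega), wu _ (by omega)]; exact (hsub q (by omega)))
  have hR : ∀ i j : Fin 3, R (σ (Sum.inl i)) (σ (Sum.inr j)) := by
    intro i j
    fin_cases i <;> fin_cases j <;> assumption
  refine minor_of_arcs (b := b) (m := 6) (w := w) ?_ ?_ ?_ σ ?_ ?_ ?_
  · intro i hi
    interval_cases i <;> simp [b] <;> omega
  · exact ext2_inj hu hxy.ne hx hy
  · intro i hi s hs1 hs2
    have hbk : b (i + 1) ≤ k ∨ b (i + 1) = b i + 1 := by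
      interval_cases i <;> simp [b] <;> omega
    rw [wu _ (by omega), wu _ (by omega)]
    exact hadj s
  · decide
  · decide
  · rintro (a | a) (a' | a') h
    · simp at h
    · exact hR a a'
    · exact Rs _ _ (hR a' a)
    · simp at h

lemma k5_of {G : SimpleGraph V} {u : ℕ → V} {k p q : ℕ} {x y : V}
    (hper : u k = u 0) (hu : InjOn u (Iio k)) (hadj : ∀ t, G.Adj (u t) (u (t + 1)))
    (hx : ∀ t, u t ≠ x) (hy : ∀ t, u t ≠ y) (hxy : G.Adj x y) (h1 : 0 < p) (h2 : p < q)
    (h4 : q < k) (hy0 : G.Adj y (u 0)) (hyp : G.Adj y (u p)) (hyq : G.Adj y (u q))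
    (hx0 : G.Adj x (u 0)) (hxp : G.Adj x (u p)) (hxq : G.Adj x (u q)) :
    (completeGraph (Fin 5)).IsMinorOf G := by
  set w := ext2 u k x y with hw
  have wu : ∀ i, i < k → w i = u i := fun i hi => if_pos hi
  have wx : w k = x := by simp [hw, ext2]
  have wy : w (k + 1) = y := by simp [hw, ext2]
  let b : ℕ → ℕ := fun i => if i = 0 then 0 else if i = 1 then p else if i = 2 then q else
    k + (i - 3)
  let R : ℕ → ℕ → Prop := fun s s' => ∃ i j, (b s ≤ i ∧ i < b (s + 1)) ∧
      (b s' ≤ j ∧ j < b (s' + 1)) ∧ G.Adj (w i) (w j)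
  have Rs : ∀ s s', R s s' → R s' s := fun s s' ⟨i, j, h, h', h''⟩ => ⟨j, i, h', h, h''.symm⟩
  have mk : ∀ i j s s', (b s ≤ i ∧ i < b (s + 1)) → (b s' ≤ j ∧ j < b (s' + 1)) →
    G.Adj (w i) (w j) → R s s' := fun i j s s' h h' h'' => ⟨i, j, h, h', h''⟩
  have R34 : R 3 4 := mk k (k + 1) 3 4 (by simp [b]) (by simp [b]) (by rw [wx, wy]; exact hxy)
  have R03 : R 0 3 := mk 0 k 0 3 (by simp [b]; omega) (by simp [b])
    (by rw [wx, wu _ (by omega)]; exact hx0.symm)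
  have R13 : R 1 3 := mk p k 1 3 (by simp [b]; omega) (by simp [b])
    (by rw [wx, wu _ (by omega)]; exact hxp.symm)
  have R23 : R 2 3 := mk q k 2 3 (by simp [b]; omega) (by simp [b])
    (by rw [wx, wu _ (by omega)]; exact hxq.symm)
  have R04 : R 0 4 := mk 0 (k + 1) 0 4 (by simp [b]; omega) (by simp [b])
    (by rw [wy, wu _ (by omega)]; exact hy0.symm)
  have R14 : R 1 4 := mk p (k + 1) 1 4 (by simp [b]; omega) (by simp [b])
    (by rw [wy, wu _ (by omega)]; exact hyp.symm)
  have R24 : R 2 4 := mk q (k + 1) 2 4 (by simp [b]; omega) (by simp [b])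
    (by rw [wy, wu _ (by omega)]; exact hyq.symm)
  have hsub : ∀ i, 0 < i → G.Adj (u (i - 1)) (u i) := by
    intro i hi
    have := hadj (i - 1)
    rwa [Nat.sub_add_cancel hi] at this
  have R01 : R 0 1 := mk (p - 1) p 0 1 (by simp [b]; omega) (by simp [b]; omega)
    (by rw [wu _ (by omega), wu _ (by omega)]; exact hsub p h1)
  have R12 : R 1 2 := mk (q - 1) q 1 2 (by simp [b]; omega) (by simp [b]; omega)
    (by rw [wu _ (by omega), wu _ (by omega)]; exact hsub q (by omega))
  have R02 : R 0 2 := mk 0 (k - 1) 0 2 (by simp [b]; omega) (by simp [b]; omega)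
    (by rw [wu _ (by omega), wu _ (by omega), ← hper]; exact (hsub k (by omega)).symm)
  have hR : ∀ i j : Fin 5, i < j → R i.1 j.1 := by
    rintro ⟨i, hi⟩ ⟨j, hj⟩ hij
    have hij' : i < j := hij
    show R i j
    interval_cases j <;> interval_cases i <;> assumption
  refine minor_of_arcs (b := b) (m := 5) (w := w) ?_ ?_ ?_ (fun i : Fin 5 => i.1)
    Fin.val_injective (fun a => a.2) ?_
  · intro i hi
    interval_cases i <;> simp [b] <;> omega
  · exact ext2_inj hu hxy.ne hx hy
  · intro i hi s hs1 hs2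
    have hbk : b (i + 1) ≤ k ∨ b (i + 1) = b i + 1 := by
      interval_cases i <;> simp [b] <;> omega
    rw [wu _ (by omega), wu _ (by omega)]
    exact hadj s
  · intro a a' h
    rcases lt_or_gt_of_ne (show a ≠ a' from h) with h | h
    · exact hR _ _ h
    · exact Rs _ _ (hR _ _ h)

end PartFive

section PartSix
open Set Classical

variable {V : Type*} [Fintype V]

lemma per_shift {k : ℕ} (hk : 0 < k) (s i : ℕ) : ∃ t, t < k ∧ (s + t) % k = i % k := by
  refine ⟨(i + (k - 1) * s) % k, Nat.mod_lt _ hk, ?_⟩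
  rw [Nat.add_mod_mod]
  have : s + (i + (k - 1) * s) = i + k * s := by
    obtain ⟨m, rfl⟩ : ∃ m, k = m + 1 := ⟨k - 1, by omega⟩
    simp
    ring
  rw [this, Nat.add_mul_mod_self_left]

/-- Two different positions, seen from position `s`. -/
lemma two_places {k : ℕ} {X : ℕ → Prop} (hX : Function.Periodic X k)
    (h : ∃ i j, i < j ∧ j < k ∧ X i ∧ X j) (s : ℕ) :
    ∃ i j, i < j ∧ j < k ∧ X (s + i) ∧ X (s + j) := by
  obtain ⟨i, j, hij, hjk, hXi, hXj⟩ := h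
  obtain ⟨a, ha, ha'⟩ := per_shift (by omega : 0 < k) s i
  obtain ⟨b, hb, hb'⟩ := per_shift (by omega : 0 < k) s j
  have hXa : X (s + a) := by
    rw [← hX.map_mod_nat, ha', hX.map_mod_nat]; exact hXi
  have hXb : X (s + b) := by
    rw [← hX.map_mod_nat, hb', hX.map_mod_nat]; exact hXj
  have hne : a ≠ b := by
    rintro rfl
    rw [ha', Nat.mod_eq_of_lt (by omega), Nat.mod_eq_of_lt (by omega)] at hb'
    omega
  rcases lt_or_gt_of_ne hne with h | h
  · exact ⟨a, b, h, hb, hXa, hXb⟩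
  · exact ⟨b, a, h, ha, hXb, hXa⟩

lemma positions {k : ℕ} {X Y : ℕ → Prop} (hX : Function.Periodic X k) (hY : Function.Periodic Y k)
    (hX2 : ∃ i j, i < j ∧ j < k ∧ X i ∧ X j) (hY2 : ∃ i j, i < j ∧ j < k ∧ Y i ∧ Y j)
    (h33 : ∀ s p t q, 0 < p → p < t → t < q → q < k → Y s → Y (s + t) → X (s + p) → X (s + q) →
      False)
    (h5 : ∀ s p q, 0 < p → p < q → q < k → Y s → Y (s + p) → Y (s + q) → X s → X (s + p) →
      X (s + q) → False) :
    ∃ s q, 0 < q ∧ q < k ∧ X s ∧ X (s + q) ∧ (∀ t, t < k → X (s + t) → t ≤ q) ∧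
      ∀ t, t < k → Y (s + t) → t = 0 ∨ q ≤ t := by
  by_cases hc : ∃ s, Y s ∧ ¬ X s
  · obtain ⟨s, hYs, hXs⟩ := hc
    obtain ⟨i, j, hij, hjk, hi, hj⟩ := two_places hX hX2 s
    let F := (Finset.range k).filter fun t => X (s + t)
    have hF : ∀ t, t ∈ F ↔ t < k ∧ X (s + t) := by intro t; simp [F]
    have hiF : i ∈ F := (hF i).2 ⟨by omega, hi⟩
    have hjF : j ∈ F := (hF j).2 ⟨by omega, hj⟩
    have hne : F.Nonempty := ⟨i, hiF⟩
    obtain ⟨p, hp⟩ : ∃ p, p = F.min' hne := ⟨_, rfl⟩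
    obtain ⟨q, hq⟩ : ∃ q, q = F.max' hne := ⟨_, rfl⟩
    have hpF : p ∈ F := hp ▸ F.min'_mem hne
    have hqF : q ∈ F := hq ▸ F.max'_mem hne
    have hpmin : ∀ t ∈ F, p ≤ t := fun t ht => hp ▸ F.min'_le t ht
    have hqmax : ∀ t ∈ F, t ≤ q := fun t ht => hq ▸ F.le_max' t ht
    have hpi := hpmin i hiF
    have hjq := hqmax j hjF
    rw [hF] at hpF hqF
    have hp0 : 0 < p := by
      rcases Nat.eq_zero_or_pos p with h | h
      · subst h
        exact absurd hpF.2 hXs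
      · exact h
    have hback : ∀ (Z : ℕ → Prop), Function.Periodic Z k → ∀ t, t < k → Z (s + p + t) →
        (p + t < k ∧ Z (s + (p + t))) ∨ (k ≤ p + t ∧ Z (s + (p + t - k))) := by
      intro Z hZ t ht h
      rw [add_assoc] at h
      by_cases hlt : p + t < k
      · exact Or.inl ⟨hlt, h⟩
      · refine Or.inr ⟨by omega, ?_⟩
        rw [← hZ (s + (p + t - k))]
        have : s + (p + t - k) + k = s + (p + t) := by omega
        rwa [this]
    refine ⟨s + p, q - p, by omega, by omega, hpF.2, ?_, ?_, ?_⟩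
    · have : s + p + (q - p) = s + q := by omega
      rw [this]
      exact hqF.2
    · intro t ht hXt
      rcases hback X hX t ht hXt with ⟨h1, h2⟩ | ⟨h1, h2⟩
      · have := hqmax _ ((hF _).2 ⟨h1, h2⟩)
        omega
      · have := hpmin _ ((hF _).2 ⟨by omega, h2⟩)
        omega
    · intro t ht hYt
      rcases hback Y hY t ht hYt with ⟨h1, h2⟩ | ⟨h1, h2⟩
      · by_contra hcon
        push Not at hcon
        exact h33 s p (p + t) q hp0 (by omega) (by omega) hqF.1 hYs h2 hpF.2 hqF.2
      · omega
  · push Not at hc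
    obtain ⟨i₀, _, _, _, hs, _⟩ := hY2
    obtain ⟨s, hs⟩ : ∃ s, Y s := ⟨i₀, hs⟩
    obtain ⟨i, j, hij, hjk, hi, hj⟩ := two_places hY ⟨i₀, _, ‹_›, ‹_›, ‹_›, ‹_›⟩ s
    have hY3 : ∀ t, t < k → Y (s + t) → t = 0 ∨ t = j := by
      intro t ht hYt
      by_contra hcon
      push Not at hcon
      rcases lt_or_gt_of_ne hcon.2 with h | h
      · exact h5 s t j (by omega) h hjk hs hYt hj (hc _ hs) (hc _ hYt) (hc _ hj)
      · exact h5 s j t (by omega) h ht hs hj hYt (hc _ hs) (hc _ hj) (hc _ hYt)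
    by_cases hX3 : ∃ t, j < t ∧ t < k ∧ X (s + t)
    · obtain ⟨t, hjt, htk, hXt⟩ := hX3
      refine ⟨s + j, k - j, by omega, by omega, hc _ hj, ?_, ?_, ?_⟩
      · have : s + j + (k - j) = s + k := by omega
        rw [this, hX]
        exact hc _ hs
      · intro t' ht' hXt'
        by_contra hcon
        have h1 : X (s + (j + t' - k)) := by
          rw [← hX (s + (j + t' - k))]
          have : s + (j + t' - k) + k = s + j + t' := by omega
          rwa [this]
        exact h33 s (j + t' - k) j t (by omega) (by omega) hjt htk hs hj h1 hXt
      · intro t' ht' hYt'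
        by_contra hcon
        have := hY3 (j + t') (by omega) (by rwa [← add_assoc])
        omega
    · push Not at hX3
      refine ⟨s, j, by omega, hjk, hc _ hs, hc _ hj, ?_, ?_⟩
      · intro t ht hXt
        by_contra hcon
        exact hX3 t (by omega) ht hXt
      · intro t ht hYt
        rcases hY3 t ht hYt with h | h <;> omega

lemma reinsert {G : SimpleGraph V} (hpl : G.IsPlanar) {x y : V} (hxy : G.Adj x y)
    {ι : Type} [Finite ι] {l r : Sym2 V → ι} (hfs : IsFS (del (del G x) y) l r) {c : ι}
    {u₀ : ℕ → V} {k : ℕ} (hk : 3 ≤ k) (hper : Function.Periodic u₀ k) (hinj : InjOn u₀ (Iio k))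
    (hadj : ∀ t, (del (del G x) y).Adj (u₀ t) (u₀ (t + 1)))
    (hface : ∀ s, face (del (del G x) y) l r c = path (fun i => u₀ (s + i)) 0 k)
    (hcov : ∀ w, w ≠ x → w ≠ y → G.Adj x w ∨ G.Adj y w → ∃ t, t < k ∧ u₀ t = w)
    (hx2 : ∃ a b, a ≠ b ∧ a ≠ y ∧ b ≠ y ∧ G.Adj x a ∧ G.Adj x b)
    (hy2 : ∃ a b, a ≠ b ∧ a ≠ x ∧ b ≠ x ∧ G.Adj y a ∧ G.Adj y b) : FS G := by
  set H := del (del G x) y with hH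
  have hHG : H ≤ G := (del_le _ _).trans (del_le _ _)
  have hux : ∀ t, u₀ t ≠ x := fun t h => (hadj t).1.2.1 h
  have huy : ∀ t, u₀ t ≠ y := fun t h => (hadj t).2.1 h
  have htwo : ∀ v v', (v = x ∧ v' = y ∨ v = y ∧ v' = x) →
      (∃ a b, a ≠ b ∧ a ≠ v' ∧ b ≠ v' ∧ G.Adj v a ∧ G.Adj v b) →
      ∃ i j, i < j ∧ j < k ∧ G.Adj v (u₀ i) ∧ G.Adj v (u₀ j) := by
    rintro v v' hv ⟨a, b, hab, ha, hb, hva, hvb⟩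
    have hca : ∃ t, t < k ∧ u₀ t = a := by
      rcases hv with ⟨rfl, rfl⟩ | ⟨rfl, rfl⟩
      · exact hcov a hva.ne' ha (Or.inl hva)
      · exact hcov a ha hva.ne' (Or.inr hva)
    have hcb : ∃ t, t < k ∧ u₀ t = b := by
      rcases hv with ⟨rfl, rfl⟩ | ⟨rfl, rfl⟩
      · exact hcov b hvb.ne' hb (Or.inl hvb)
      · exact hcov b hb hvb.ne' (Or.inr hvb)
    obtain ⟨i, hi, rfl⟩ := hca
    obtain ⟨j, hj, rfl⟩ := hcb
    have hne : i ≠ j := by rintro rfl; exact hab rfl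
    rcases lt_or_gt_of_ne hne with h | h
    · exact ⟨i, j, h, hj, hva, hvb⟩
    · exact ⟨j, i, h, hi, hvb, hva⟩
  -- injectivity is invariant under shift
  have hinj' : ∀ s, InjOn (fun i => u₀ (s + i)) (Iio k) := by
    intro s i hi j hj h
    simp only [mem_Iio] at hi hj
    have h' : u₀ (s + i) = u₀ (s + j) := h
    rw [← hper.map_mod_nat (s + i), ← hper.map_mod_nat (s + j)] at h'
    have h2 := hinj (Nat.mod_lt _ (by omega)) (Nat.mod_lt _ (by omega)) h'
    have h3 : i ≡ j [MOD k] := Nat.ModEq.add_left_cancel' s h2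
    have h4 : i % k = j % k := h3
    rwa [Nat.mod_eq_of_lt hi, Nat.mod_eq_of_lt hj] at h4
  have hshift : ∀ s, (fun i => u₀ (s + i)) k = (fun i => u₀ (s + i)) 0 := fun s => hper s
  obtain ⟨s, q, hq0, hqk, hXs, hXq, hXle, hYge⟩ := positions (k := k)
    (X := fun i => G.Adj x (u₀ i)) (Y := fun i => G.Adj y (u₀ i))
    (fun i => by simp only [hper i]) (fun i => by simp only [hper i])
    (htwo x y (Or.inl ⟨rfl, rfl⟩) hx2) (htwo y x (Or.inr ⟨rfl, rfl⟩) hy2)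
    (fun s p t q h1 h2 h3 h4 hy0 hyt hxp hxq => hpl.2 (k33_of (u := fun i => u₀ (s + i))
      (hshift s) (hinj' s) (fun t => hHG (hadj (s + t))) (fun t => hux _) (fun t => huy _) hxy
      h1 h2 h3 h4 hy0 hyt hxp hxq))
    (fun s p q h1 h2 h3 a1 a2 a3 a4 a5 a6 => hpl.1 (k5_of (u := fun i => u₀ (s + i))
      (hshift s) (hinj' s) (fun t => hHG (hadj (s + t))) (fun t => hux _) (fun t => huy _) hxy
      h1 h2 h3 a1 a2 a3 a4 a5 a6))
  set u : ℕ → V := fun i => u₀ (s + i) with hu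
  have huper : u k = u 0 := hshift s
  have huinj : InjOn u (Iio k) := hinj' s
  have huadj : ∀ t, H.Adj (u t) (u (t + 1)) := fun t => hadj (s + t)
  have hcov' : ∀ w, w ≠ x → w ≠ y → G.Adj x w ∨ G.Adj y w → ∃ t, t < k ∧ u t = w := by
    intro w h1 h2 h3
    obtain ⟨i, hi, rfl⟩ := hcov w h1 h2 h3
    obtain ⟨t, ht, ht'⟩ := per_shift (by omega : 0 < k) s i
    refine ⟨t, ht, ?_⟩
    show u₀ (s + t) = u₀ i
    rw [← hper.map_mod_nat, ht', hper.map_mod_nat]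
  let P := (Finset.range k).filter fun t => G.Adj x (u t)
  have hP : ∀ t, t ∈ P ↔ t < k ∧ G.Adj x (u t) := by intro t; simp [P]
  obtain ⟨ι₁, hι₁, l₁, r₁, c₁, hfs₁, hface₁⟩ := attach (y := x) (u := u) (k := k) (q := q) hfs hk
    huper huinj (fun t _ => huadj t) (fun w hw => hw.1.2.1 rfl) (hface s) hq0 hqk P
    (fun j hj => hXle j ((hP j).1 hj).1 ((hP j).1 hj).2) ((hP 0).2 ⟨by omega, hXs⟩)
    ((hP q).2 ⟨hqk, hXq⟩)
  have hG1 : addStar H x (u '' P) = del G y := by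
    ext a b
    constructor
    · rintro (h | ⟨_, ⟨rfl, t, ht, rfl⟩ | ⟨rfl, t, ht, rfl⟩⟩)
      · exact ⟨h.1.1, h.2⟩
      · exact ⟨((hP t).1 ht).2, hxy.ne, huy _⟩
      · exact ⟨((hP t).1 ht).2.symm, huy _, hxy.ne⟩
    · rintro ⟨h, ha, hb⟩
      by_cases hax : a = x
      · subst hax
        obtain ⟨t, ht, rfl⟩ := hcov' b h.ne' hb (Or.inl h)
        exact Or.inr ⟨h.ne, Or.inl ⟨rfl, t, (hP t).2 ⟨ht, h⟩, rfl⟩⟩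
      · by_cases hbx : b = x
        · subst hbx
          obtain ⟨t, ht, rfl⟩ := hcov' a h.ne ha (Or.inl h.symm)
          exact Or.inr ⟨h.ne, Or.inr ⟨rfl, t, (hP t).2 ⟨ht, h.symm⟩, rfl⟩⟩
        · exact Or.inl ⟨⟨h, hax, hbx⟩, ha, hb⟩
  rw [hG1] at hfs₁ hface₁
  obtain ⟨k', hk'⟩ : ∃ k', k' = k - q + 2 := ⟨_, rfl⟩
  let v : ℕ → V := fun t => if t = 0 ∨ t = k' then x else u (q + t - 1)
  have hv0 : v 0 = x := by simp [v]
  have hvk : v k' = x := by simp [v]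
  have hvm : ∀ t, 0 < t → t < k' → v t = u (q + t - 1) := by
    intro t h1 h2
    simp only [v]
    rw [if_neg (by omega)]
  have hpath : path v 0 k' = dl s(x, u 0) + dl s(x, u q) + path u q k := by
    rw [← path_add v (Nat.zero_le 1) (by omega), ← path_add v (i := 1) (j := k' - 1) (by omega)
      (by omega)]
    have e1 : path v 0 1 = dl s(x, u q) := by
      simp [path, hv0, hvm 1 (by omega) (by omega)]
    have e2 : path v (k' - 1) k' = dl s(x, u 0) := by
      have : k' = (k' - 1) + 1 := by omega
      conv_lhs => rw [this]
      simp only [path, Nat.add_sub_cancel]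
      rw [Nat.Ico_succ_singleton, Finset.sum_singleton, ← this, hvk,
        hvm _ (by omega) (by omega), Sym2.eq_swap]
      have : q + (k' - 1) - 1 = k := by omega
      rw [this, huper]
    have e3 : path v 1 (k' - 1) = path u q k := by
      unfold path
      have h1 : q = 1 + (q - 1) := by omega
      have h2 : k = k' - 1 + (q - 1) := by omega
      rw [h1, h2, ← Finset.sum_Ico_add']
      refine Finset.sum_congr rfl fun t ht => ?_
      rw [Finset.mem_Ico] at ht
      rw [hvm t (by omega) (by omega), hvm (t + 1) (by omega) (by omega)]
      have h3 : q + t - 1 = t + (q - 1) := by omega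
      have h4 : q + (t + 1) - 1 = t + (q - 1) + 1 := by omega
      rw [h3, h4]
    rw [e1, e2, e3]
    abel
  have hvinj : InjOn v (Iio k') := by
    have hqq : ∀ a b, q ≤ a → q ≤ b → a ≤ k → b ≤ k → u a = u b → a = b := by
      intro a b h1 h2 h3 h4 h
      by_cases ha : a = k
      · by_cases hb : b = k
        · omega
        · rw [ha, huper] at h
          have := huinj (by simp; omega) (by simp; omega) h
          omega
      · by_cases hb : b = k
        · rw [hb, huper] at h
          have := huinj (by simp; omega) (by simp; omega) h
          omega
        · exact huinj (by simp; omega) (by simp; omega) h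
    intro a ha b hb h
    simp only [mem_Iio] at ha hb
    by_cases ha0 : a = 0
    · by_cases hb0 : b = 0
      · omega
      · rw [ha0, hv0, hvm b (by omega) hb] at h
        exact absurd h.symm (hux _)
    · by_cases hb0 : b = 0
      · rw [hb0, hv0, hvm a (by omega) ha] at h
        exact absurd h (hux _)
      · rw [hvm a (by omega) ha, hvm b (by omega) hb] at h
        have := hqq _ _ (by omega) (by omega) (by omega) (by omega) h
        omega
  have hle1 : H ≤ del G y := fun a b h => ⟨h.1.1, h.2⟩
  have hxne := hxy.ne
  have hvadj : ∀ t, t < k' → (del G y).Adj (v t) (v (t + 1)) := by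
    intro t ht
    by_cases h0 : t = 0
    · subst h0
      rw [hv0, hvm _ (by omega) (by omega)]
      have : q + (0 + 1) - 1 = q := by omega
      rw [this]
      exact ⟨hXq, hxne, huy _⟩
    · by_cases h1 : t + 1 = k'
      · rw [h1, hvk, hvm t (by omega) ht]
        have : q + t - 1 = k := by omega
        rw [this, huper]
        exact ⟨hXs.symm, huy _, hxne⟩
      · rw [hvm t (by omega) ht, hvm _ (by omega) (by omega)]
        have : q + (t + 1) - 1 = q + t - 1 + 1 := by omega
        rw [this]
        exact hle1 (huadj _)
  let P' := (Finset.range k').filter fun t => G.Adj y (v t)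
  have hP' : ∀ t, t ∈ P' ↔ t < k' ∧ G.Adj y (v t) := by intro t; simp [P']
  have hcovy : ∀ w, G.Adj y w → ∃ t ∈ P', v t = w := by
    intro w hw
    by_cases hwx : w = x
    · subst hwx
      exact ⟨0, (hP' 0).2 ⟨by omega, by rw [hv0]; exact hw⟩, hv0⟩
    · obtain ⟨t, ht, rfl⟩ := hcov' w hwx hw.ne' (Or.inr hw)
      rcases hYge t ht hw with h | h
      · subst h
        have e : v (k - q + 1) = u 0 := by
          rw [hvm _ (by omega) (by omega), ← huper]
          congr 1
          omega
        exact ⟨k - q + 1, (hP' _).2 ⟨by omega, by rw [e]; exact hw⟩, e⟩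
      · have e : v (t - q + 1) = u t := by
          rw [hvm _ (by omega) (by omega)]
          congr 1
          omega
        exact ⟨t - q + 1, (hP' _).2 ⟨by omega, by rw [e]; exact hw⟩, e⟩
  have h0P' : 0 ∈ P' := (hP' 0).2 ⟨by omega, by rw [hv0]; exact hxy.symm⟩
  obtain ⟨a, b, _, hax, _, hya, _⟩ := hy2
  obtain ⟨ta, hta, hvta⟩ := hcovy a hya
  have hta0 : ta ≠ 0 := by
    rintro rfl
    rw [hv0] at hvta
    exact hax hvta.symm
  obtain ⟨q', hq'⟩ : ∃ q', q' = P'.max' ⟨0, h0P'⟩ := ⟨_, rfl⟩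
  have hq'mem : q' ∈ P' := hq' ▸ P'.max'_mem _
  have hq'max : ∀ t ∈ P', t ≤ q' := fun t ht => hq' ▸ P'.le_max' t ht
  obtain ⟨ι₂, hι₂, l₂, r₂, c₂, hfs₂, _⟩ := attach (y := y) (u := v) (k := k') (q := q') hfs₁
    (by omega) (by rw [hvk, hv0]) hvinj hvadj (fun w hw => hw.2.1 rfl) (by rw [hface₁, hpath])
    (by have := hq'max ta hta; omega) ((hP' _).1 hq'mem).1 P' hq'max h0P' hq'mem
  have hG2 : addStar (del G y) y (v '' P') = G := by
    ext a b
    constructor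
    · rintro (h | ⟨_, ⟨rfl, t, ht, rfl⟩ | ⟨rfl, t, ht, rfl⟩⟩)
      · exact h.1
      · exact ((hP' t).1 ht).2
      · exact ((hP' t).1 ht).2.symm
    · intro h
      by_cases hay : a = y
      · subst hay
        obtain ⟨t, ht, e⟩ := hcovy b h
        exact Or.inr ⟨h.ne, Or.inl ⟨rfl, t, ht, e⟩⟩
      · by_cases hby : b = y
        · subst hby
          obtain ⟨t, ht, e⟩ := hcovy a h.symm
          exact Or.inr ⟨h.ne, Or.inr ⟨rfl, t, ht, e⟩⟩
        · exact Or.inl ⟨h, hay, hby⟩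
  rw [hG2] at hfs₂
  exact ⟨ι₂, hι₂, l₂, r₂, hfs₂⟩

end PartSix

section PartSeven
open Set Classical

variable {V : Type*} [Fintype V]

lemma ConnOn.nbr {G : SimpleGraph V} {T : Set V} (h : ConnOn G T) {v w : V} (hv : v ∈ T)
    (hw : w ∈ T) (hne : w ≠ v) : ∃ w' ∈ T, G.Adj v w' := by
  obtain ⟨a, ha, b, hb, hab⟩ := h {v} (by simpa using hv) ⟨v, rfl⟩ ⟨w, hw, by simpa using hne⟩
  rw [mem_singleton_iff.1 ha] at hab
  exact ⟨b, hb.1, hab⟩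

lemma exists_out {S : Set V} {F : Finset V} (h : F.card < S.ncard) : ∃ w ∈ S, w ∉ F := by
  obtain ⟨w, hw, hw'⟩ := Set.exists_mem_notMem_of_ncard_lt_ncard (s := (F : Set V)) (t := S)
    (by rwa [Set.ncard_coe_finset])
  exact ⟨w, hw, by simpa using hw'⟩

lemma shift_inj {u₀ : ℕ → V} {k : ℕ} (hk : 3 ≤ k) (hper : Function.Periodic u₀ k)
    (hinj : InjOn u₀ (Iio k)) (s : ℕ) : InjOn (fun i => u₀ (s + i)) (Iio k) := by
  intro i hi j hj h
  simp only [mem_Iio] at hi hj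
  have h' : u₀ (s + i) = u₀ (s + j) := h
  rw [← hper.map_mod_nat (s + i), ← hper.map_mod_nat (s + j)] at h'
  have h2 := hinj (Nat.mod_lt _ (by omega)) (Nat.mod_lt _ (by omega)) h'
  have h3 : i ≡ j [MOD k] := Nat.ModEq.add_left_cancel' s h2
  have h4 : i % k = j % k := h3
  rwa [Nat.mod_eq_of_lt hi, Nat.mod_eq_of_lt hj] at h4

lemma cyc_path {G : SimpleGraph V} {u : ℕ → V} {k : ℕ} (hper : u k = u 0)
    (hadj : ∀ t, G.Adj (u t) (u (t + 1))) : Cyc G (path u 0 k) := by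
  constructor
  · intro e he
    by_contra h
    obtain ⟨t, _, _, rfl⟩ := path_ne h
    exact he (hadj t)
  · intro v
    rw [bd_path u (Nat.zero_le _) (fun t _ _ => (hadj t).ne), hper, z2_self]

lemma step3 {G : SimpleGraph V} {S : Set V} (hS : ∀ u w, G.Adj u w → u ∈ S) (hpl : G.IsPlanar)
    (hcard : 5 ≤ S.ncard) (h1 : ConnOn G S) (h3 : ∀ a b, ConnOn G (S \ {a, b}))
    (ih : ∀ (G' : SimpleGraph V) (S' : Set V), S'.ncard < S.ncard →
      (∀ u w, G'.Adj u w → u ∈ S') → G'.IsPlanar → FS G') : FS G := by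
  obtain ⟨x, hx, y, hy, hxy, hgood⟩ := exists_good_edge hcard h1 h3
  have hxne : x ≠ y := hxy.ne
  have hout : ∀ a b c d : V, ∃ w ∈ S, w ≠ a ∧ w ≠ b ∧ w ≠ c ∧ w ≠ d := by
    intro a b c d
    have : ({a, b, c, d} : Finset V).card ≤ 4 := Finset.card_le_four
    obtain ⟨w, hw, hw'⟩ := exists_out (S := S) (F := {a, b, c, d}) (by omega)
    simp at hw'
    exact ⟨w, hw, hw'⟩
  have hdeg : ∀ v ∈ S, ∀ a b, a ≠ v → b ≠ v → ∃ w ∈ S, G.Adj v w ∧ w ≠ a ∧ w ≠ b := by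
    intro v hv a b ha hb
    obtain ⟨w, hw, hw'⟩ := hout v a b v
    obtain ⟨w', hw', hadj⟩ := (h3 a b).nbr (v := v) (w := w) ⟨hv, by simp [ha.symm, hb.symm]⟩
      ⟨hw, by simp [hw']⟩ hw'.1
    simp at hw'
    exact ⟨w', hw'.1, hadj, hw'.2⟩
  have hdeg2 : ∀ v ∈ S, ∀ c, c ≠ v →
      ∃ a b, a ≠ b ∧ a ≠ c ∧ b ≠ c ∧ G.Adj v a ∧ G.Adj v b := by
    intro v hv c hc
    obtain ⟨a, _, hva, hac, _⟩ := hdeg v hv c c hc hc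
    obtain ⟨b, _, hvb, hbc, hba⟩ := hdeg v hv c a hc hva.ne'
    exact ⟨a, b, hba.symm, hac, hbc, hva, hvb⟩
  set K := con G x {y} with hK
  have hKpl : K.IsPlanar := by
    refine isPlanar_con (by simpa using hxne) ?_ hpl
    have := (connOn_singleton G y).insert (s := y) (w := x) rfl hxy.symm
    exact this
  have hKS : ∀ u w, K.Adj u w → u ∈ S \ {y} := by
    rintro u w ⟨h, hu, hw, h4⟩
    refine ⟨?_, hu⟩
    rcases h4 with h4 | ⟨rfl, _⟩ | ⟨_, b, _, h4⟩
    · exact hS _ _ h4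
    · exact hx
    · exact hS _ _ h4.symm
  obtain ⟨ι, hι, l, r, hfs⟩ := ih K (S \ {y})
    (Set.ncard_sdiff_singleton_lt_of_mem hy) hKS hKpl
  have hHeq : del K x = del (del G x) y := by
    ext a b
    constructor
    · rintro ⟨⟨h1, h2, h3, h4⟩, h5, h6⟩
      rcases h4 with h4 | ⟨h4, _⟩ | ⟨h4, _⟩
      · exact ⟨⟨h4, h5, h6⟩, h2, h3⟩
      · exact absurd h4 h5
      · exact absurd h4 h6
    · rintro ⟨⟨h4, h5, h6⟩, h2, h3⟩
      exact ⟨⟨h4.ne, h2, h3, Or.inl h4⟩, h5, h6⟩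
  set H := del K x with hH
  have hGH : ∀ a b, G.Adj a b → a ≠ x → a ≠ y → b ≠ x → b ≠ y → H.Adj a b := by
    intro a b h h1 h2 h3 h4
    rw [hHeq]
    exact ⟨⟨h, h1, h3⟩, h2, h4⟩
  have hHconn : ∀ z, ConnOn H (S \ {x, y, z}) := by
    intro z
    refine (hgood z).mono_adj ?_
    rintro a ⟨_, ha⟩ b ⟨_, hb⟩ hab
    simp at ha hb
    exact hGH a b hab ha.1 ha.2.1 hb.1 hb.2.1
  have hHK : H ≤ K := del_le _ _
  have hKconn : ∀ z, ConnOn K (S \ {x, y, z}) := fun z =>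
    (hHconn z).mono_adj fun a _ b _ h => hHK h
  have hTx : ∀ w, K.Adj x w → w ∈ S \ {x, y, x} := by
    intro w hw
    have := hKS _ _ hw.symm
    simp at this ⊢
    exact ⟨this.1, this.2, hw.ne'⟩
  have hfsH' := hfs.del (hKconn x) (v := x) (by simp) hTx
  set l' : Sym2 V → Option ι := fun e => mrg K l r x (l e) with hl'
  set r' : Sym2 V → Option ι := fun e => mrg K l r x (r e) with hr'
  have hfsH : IsFS H l' r' := hfsH'
  clear hfsH'
  have hcovf : ∀ u, K.Adj x u → ∃ w, face H l' r' none s(u, w) ≠ 0 := by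
    intro u hu
    have huS := hTx u hu
    simp at huS
    obtain ⟨huS, huy, hux⟩ := huS
    have hux : u ≠ x := hux
    have huy : u ≠ y := huy
    have hT' : ConnOn K (insert x (S \ {x, y, u})) := by
      obtain ⟨w, hwS, hw, hwy, hwu⟩ := hdeg x hx y u hxne.symm hux
      refine (hKconn u).insert (s := w) ⟨hwS, by simp [hwy, hwu, hw.ne']⟩ ?_
      exact ⟨hw.ne', by simpa using hwy, by simpa using hxne, Or.inl hw.symm⟩
    obtain ⟨w₁, hw₁S, hw₁, hw₁x, hw₁y⟩ := hdeg u huS x y hux.symm huy.symm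
    have hw₁H := hGH u w₁ hw₁ hux huy hw₁x hw₁y
    obtain ⟨w₃, hw₃S, hw₃⟩ := hout x y u w₁
    obtain ⟨w₂, hw₂, hw₂H⟩ := (hHconn w₁).nbr (v := u) (w := w₃) ⟨huS, by simp [hux, huy, hw₁.ne]⟩
      ⟨hw₃S, by simp [hw₃]⟩ hw₃.2.2.1
    simp at hw₂
    refine del_face hfs (hKconn x) (by simp) hTx hu hT' ?_ ?_ (hHconn u) (by simp) ?_ hw₁H hw₂H
      (Ne.symm hw₂.2.2.2)
    · simp [hux]
    · intro w hw
      have := hKS _ _ hw.symm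
      by_cases hwx : w = x
      · exact Or.inl hwx
      · refine Or.inr ⟨this.1, ?_⟩
        have h2 := this.2
        simp at h2
        simp [hwx, h2, hw.ne']
    · intro w hw
      have := hKS _ _ (hHK hw).symm
      have h2 := this.2
      simp at h2
      refine ⟨this.1, ?_⟩
      simp [hw.2.2, h2, hw.1.ne']
  obtain ⟨a₀, _, ha₀, ha₀y, _⟩ := hdeg x hx y y hxne.symm hxne.symm
  have hKa₀ : K.Adj x a₀ := ⟨ha₀.ne, by simpa using hxne, by simpa using ha₀y, Or.inl ha₀⟩
  obtain ⟨w₀, hw₀⟩ := hcovf a₀ hKa₀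
  have hfcyc : Cyc H (face H l' r' none) := hfsH.cyc _
  obtain ⟨u₀, k, hk, hper, hinj, hz, _⟩ := exists_cycle_seq hfcyc
    (fun h => hw₀ (by rw [h]; rfl))
  have huadj : ∀ t, H.Adj (u₀ t) (u₀ (t + 1)) := by
    intro t
    by_contra h
    exact hz t (hfcyc.1 _ h)
  have hface : ∀ s, face H l' r' none = path (fun i => u₀ (s + i)) 0 k := by
    intro s
    symm
    refine face_min hfsH (S := S \ {x, y, x}) ?_ (hHconn x) ?_ none ?_ ?_ ?_
    · intro u w h
      have := hKS _ _ (hHK h)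
      have h2 := this.2
      simp at h2
      exact ⟨this.1, by simp [h.2.1, h2]⟩
    · intro a
      have : (S \ {x, y, x}) \ {a} = S \ {x, y, a} := by
        ext v
        simp
        tauto
      rw [this]
      exact hHconn a
    · exact cyc_path (hper s) (fun t => huadj (s + t))
    · intro e he
      obtain ⟨t, _, _, rfl⟩ := path_ne he
      exact hz (s + t)
    · intro h
      have := path_one (u := fun i => u₀ (s + i)) (i := 0) (j := k) (t := 0) le_rfl (by omega)
        (fun t' _ h2 h3 => edge_inj_cyc hk (hper s) (shift_inj hk hper hinj s) (by omega) h2 h3)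
      rw [h] at this
      exact zero_ne_one this
  have hcov : ∀ w, w ≠ x → w ≠ y → G.Adj x w ∨ G.Adj y w → ∃ t, t < k ∧ u₀ t = w := by
    intro w hwx hwy hw
    have hKw : K.Adj x w := by
      refine ⟨hwx.symm, by simpa using hxne, by simpa using hwy, ?_⟩
      rcases hw with hw | hw
      · exact Or.inl hw
      · exact Or.inr (Or.inl ⟨rfl, y, rfl, hw⟩)
    obtain ⟨w', hw'⟩ := hcovf w hKw
    rw [hface 0] at hw'
    obtain ⟨t, _, htk, he⟩ := path_ne hw'
    simp only [zero_add] at he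
    rw [Sym2.eq_iff] at he
    have hmod : ∀ i, u₀ i = w → ∃ t, t < k ∧ u₀ t = w := fun i hi =>
      ⟨i % k, Nat.mod_lt _ (by omega), by rw [hper.map_mod_nat, hi]⟩
    rcases he with ⟨h, _⟩ | ⟨h, _⟩
    · exact hmod _ h.symm
    · exact hmod _ h.symm
  rw [hHeq] at hfsH hface huadj
  exact reinsert hpl hxy hfsH hk hper hinj huadj hface hcov (hdeg2 x hx y hxne.symm)
    (hdeg2 y hy x hxne)

/-- Small cases. -/
lemma fs_of_ncard_le_two {G : SimpleGraph V} {S : Set V} (hS : ∀ u w, G.Adj u w → u ∈ S)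
    (hcard : S.ncard ≤ 2) : FS G := by
  refine ⟨Unit, inferInstance, fun _ => (), fun _ => (), fun z => ⟨fun hz => ?_, ?_⟩⟩
  · by_cases h0 : z = 0
    · refine ⟨fun _ => 0, ?_⟩
      rw [h0]
      funext e
      simp [cob]
    · exfalso
      obtain ⟨u, k, hk, hper, hinj, hne, _⟩ := exists_cycle_seq hz h0
      have hsub : u '' Iio 3 ⊆ S := by
        rintro _ ⟨t, _, rfl⟩
        apply hS _ (u (t + 1))
        by_contra h
        exact hne t (hz.1 _ h)
      have h1 : (u '' Iio 3).ncard = 3 := by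
        rw [Set.ncard_image_of_injOn (hinj.mono (Iio_subset_Iio hk))]
        have : (Iio 3 : Set ℕ) = (Finset.range 3 : Finset ℕ) := by ext; simp
        rw [this, Set.ncard_coe_finset]
        simp
      have := Set.ncard_le_ncard hsub (Set.toFinite S)
      omega
  · rintro ⟨p, rfl⟩
    have : cob G (fun _ => ()) (fun _ => ()) p = 0 := by
      funext e
      simp [cob, z2_self]
    rw [this]
    exact cyc_zero G

lemma triangle {G : SimpleGraph V} {a b c : V} (hS : ∀ u w, G.Adj u w → u ∈ ({a, b, c} : Set V))
    (hab : G.Adj a b) (hbc : G.Adj b c) (hca : G.Adj c a) :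
    ∃ l r : Sym2 V → Bool, IsFS G l r ∧
      face G l r true = dl s(a, b) + dl s(b, c) + dl s(c, a) := by
  have hedge : ∀ e, e ∈ G.edgeSet ↔ e = s(a, b) ∨ e = s(b, c) ∨ e = s(c, a) := by
    intro e
    constructor
    · intro he
      induction e using Sym2.ind with
      | _ u w =>
        have h1 := hS _ _ he
        have h2 := hS _ _ he.symm
        have h3 : u ≠ w := SimpleGraph.Adj.ne he
        simp at h1 h2
        rcases h1 with rfl | rfl | rfl <;> rcases h2 with rfl | rfl | rfl <;>
          simp_all [Sym2.eq_swap]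
    · rintro (rfl | rfl | rfl)
      · exact hab
      · exact hbc
      · exact hca
  have e1 : s(a, b) ≠ s(b, c) := by simp [hab.ne, hca.ne']
  have e2 : s(a, b) ≠ s(c, a) := by simp [hab.ne', hca.ne', hbc.ne]
  have e3 : s(b, c) ≠ s(c, a) := by simp [hab.ne', hbc.ne]
  have key : ∀ p : Bool → ZMod 2, cob G (fun _ => true) (fun _ => false) p =
      (p true + p false) • (dl s(a, b) + dl s(b, c) + dl s(c, a)) := by
    intro p
    funext e
    simp only [Pi.smul_apply, Pi.add_apply, smul_eq_mul]
    by_cases he : e ∈ G.edgeSet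
    · rw [cob_adj he]
      rw [hedge] at he
      rcases he with rfl | rfl | rfl
      · simp [dl_self, dl_of_ne e1, dl_of_ne e2]
      · simp [dl_self, dl_of_ne e1.symm, dl_of_ne e3]
      · simp [dl_self, dl_of_ne e2.symm, dl_of_ne e3.symm]
    · rw [cob_not he]
      rw [hedge] at he
      push Not at he
      simp [dl_of_ne he.1, dl_of_ne he.2.1, dl_of_ne he.2.2]
  have hT : Cyc G (dl s(a, b) + dl s(b, c) + dl s(c, a)) := by
    constructor
    · intro e he
      rw [hedge] at he
      push Not at he
      simp [dl_of_ne he.1, dl_of_ne he.2.1, dl_of_ne he.2.2]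
    · intro v
      rw [bd_add, bd_add, bd_dl hab.ne, bd_dl hbc.ne, bd_dl hca.ne]
      have h1 := z2_self (pt a v)
      have h2 := z2_self (pt b v)
      have h3 := z2_self (pt c v)
      linear_combination h1 + h2 + h3
  have hloc : ∀ z, Cyc G z → ∀ x y w, x ≠ y → y ≠ w → x ≠ w → ({a, b, c} : Set V) = {x, y, w} →
      z s(x, y) = z s(x, w) := by
    intro z hz x y w hxy hyw hxw hset
    have hb := hz.2 x
    unfold bd at hb
    rw [Finset.sum_eq_add y w hyw] at hb
    · exact z2_eq_of_add hb
    · intro v _ hv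
      apply hz.1
      intro h
      have h2 := hS _ _ h.symm
      rw [hset] at h2
      simp at h2
      rcases h2 with rfl | h2 | h2
      · exact SimpleGraph.Adj.ne h rfl
      · exact hv.1 h2
      · exact hv.2 h2
    · simp
    · simp
  refine ⟨fun _ => true, fun _ => false, fun z => ⟨fun hz => ?_, ?_⟩, ?_⟩
  · refine ⟨fun i => if i then z s(a, b) else 0, ?_⟩
    rw [key]
    have h1 := hloc z hz a b c hab.ne hbc.ne hca.ne' rfl
    have h2 := hloc z hz b a c hab.ne' hca.ne' hbc.ne (by ext v; simp; tauto)
    funext e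
    simp only [Pi.smul_apply, Pi.add_apply, smul_eq_mul]
    by_cases he : e ∈ G.edgeSet
    · rw [hedge] at he
      rcases he with rfl | rfl | rfl
      · simp [dl_self, dl_of_ne e1, dl_of_ne e2]
      · simp [dl_self, dl_of_ne e1.symm, dl_of_ne e3]
        rw [← h2, Sym2.eq_swap]
      · simp [dl_self, dl_of_ne e2.symm, dl_of_ne e3.symm]
        rw [h1, Sym2.eq_swap]
    · rw [hz.1 e he]
      rw [hedge] at he
      push Not at he
      simp [dl_of_ne he.1, dl_of_ne he.2.1, dl_of_ne he.2.2]
  · rintro ⟨p, rfl⟩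
    rw [key]
    exact hT.smul _
  · unfold face
    rw [key]
    simp [pt]

/-- Complete graphs on three or four vertices. -/
lemma fs_small {G : SimpleGraph V} {S : Set V} (hS : ∀ u w, G.Adj u w → u ∈ S)
    (hcard : S.ncard = 3 ∨ S.ncard = 4) (h3 : ∀ a b, ConnOn G (S \ {a, b})) : FS G := by
  have hcomp : ∀ v ∈ S, ∀ w ∈ S, v ≠ w → G.Adj v w := by
    intro v hv w hw hne
    have hsub : ({v, w} : Set V) ⊆ S := by
      rintro _ (rfl | rfl)
      · exact hv
      · exact hw
    have hc : (S \ {v, w}).ncard = S.ncard - 2 := by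
      rw [Set.ncard_sdiff hsub, Set.ncard_pair hne]
    have : ∃ p q, S \ {v, w} = {p, q} := by
      rcases hcard with h | h
      · rw [h] at hc
        obtain ⟨p, hp⟩ := Set.ncard_eq_one.1 hc
        exact ⟨p, p, by rw [hp]; simp⟩
      · rw [h] at hc
        obtain ⟨p, q, _, hp⟩ := Set.ncard_eq_two.1 hc
        exact ⟨p, q, hp⟩
    obtain ⟨p, q, hpq⟩ := this
    have h := h3 p q
    rw [← hpq, sdiff_sdiff_cancel_left hsub] at h
    obtain ⟨w', hw', hadj⟩ := h.nbr (v := v) (w := w) (by simp) (by simp) hne.symm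
    rcases hw' with rfl | hw'
    · exact absurd rfl hadj.ne
    · rw [mem_singleton_iff.1 hw'] at hadj
      exact hadj
  rcases hcard with h | h
  · obtain ⟨a, b, c, hab, hac, hbc, rfl⟩ := Set.ncard_eq_three.1 h
    obtain ⟨l, r, hfs, _⟩ := triangle hS (hcomp a (by simp) b (by simp) hab)
      (hcomp b (by simp) c (by simp) hbc) (hcomp c (by simp) a (by simp) hac.symm)
    exact ⟨Bool, inferInstance, l, r, hfs⟩
  · obtain ⟨d, hd⟩ : S.Nonempty := by
      rw [← Set.ncard_pos]
      omega
    have h' : (S \ {d}).ncard = 3 := by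
      rw [Set.ncard_sdiff_singleton_of_mem hd, h]
    obtain ⟨a, b, c, hab, hac, hbc, hSd⟩ := Set.ncard_eq_three.1 h'
    have hmem : ∀ v, v ∈ S ∧ v ≠ d ↔ v = a ∨ v = b ∨ v = c := by
      intro v
      have : v ∈ S \ {d} ↔ v ∈ ({a, b, c} : Set V) := by rw [hSd]
      simpa using this
    obtain ⟨haS, had⟩ := (hmem a).2 (by simp)
    obtain ⟨hbS, hbd⟩ := (hmem b).2 (by simp)
    obtain ⟨hcS, hcd⟩ := (hmem c).2 (by simp)
    have habA : (del G d).Adj a b := ⟨hcomp a haS b hbS hab, had, hbd⟩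
    have hbcA : (del G d).Adj b c := ⟨hcomp b hbS c hcS hbc, hbd, hcd⟩
    have hcaA : (del G d).Adj c a := ⟨hcomp c hcS a haS hac.symm, hcd, had⟩
    obtain ⟨l, r, hfs, hface⟩ := triangle (G := del G d) (a := a) (b := b) (c := c)
      (by
        intro u w huw
        have := (hmem u).1 ⟨hS _ _ huw.1, huw.2.1⟩
        simpa using this)
      habA hbcA hcaA
    let u : ℕ → V := fun i => if i = 0 then a else if i = 1 then b else if i = 2 then c else a
    obtain ⟨ι', hι', l', r', c', hfs', _⟩ := attach (y := d) (u := u) (k := 3) (q := 2) hfs le_rfl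
      (by simp [u])
      (by
        intro i hi j hj hij
        simp only [mem_Iio] at hi hj
        interval_cases i <;> interval_cases j <;> simp_all [u])
      (by
        intro t ht
        interval_cases t
        · exact habA
        · exact hbcA
        · exact hcaA)
      (fun w hw => hw.2.1 rfl)
      (by
        rw [hface]
        unfold path
        rw [show Finset.Ico 0 3 = {0, 1, 2} from by decide]
        simp [u, add_assoc])
      (by omega) (by omega) (Finset.range 3) (by intro j hj; simp at hj; omega) (by simp) (by simp)
    have himg : u '' ((Finset.range 3 : Finset ℕ) : Set ℕ) = {a, b, c} := by
      ext v
      constructor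
      · rintro ⟨i, hi, rfl⟩
        simp at hi
        interval_cases i <;> simp [u]
      · rintro (rfl | rfl | rfl)
        · exact ⟨0, by simp, rfl⟩
        · exact ⟨1, by simp, rfl⟩
        · exact ⟨2, by simp, rfl⟩
    refine FS.anti (G := addStar (del G d) d (u '' ((Finset.range 3 : Finset ℕ) : Set ℕ))) ?_
      ⟨ι', hι', l', r', hfs'⟩
    rw [himg]
    intro v w hvw
    by_cases hvd : v = d
    · refine Or.inr ⟨hvw.ne, Or.inl ⟨hvd, ?_⟩⟩
      have := (hmem w).1 ⟨hS _ _ hvw.symm, by rw [← hvd]; exact hvw.ne'⟩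
      simpa using this
    · by_cases hwd : w = d
      · refine Or.inr ⟨hvw.ne, Or.inr ⟨hwd, ?_⟩⟩
        have := (hmem v).1 ⟨hS _ _ hvw, hvd⟩
        simpa using this
      · exact Or.inl ⟨hvw, hvd, hwd⟩

end PartSeven

section PartEight
open Set
open scoped Classical

variable {V : Type*} [Fintype V]

lemma FS.glue_two {G₁ G₂ : SimpleGraph V} (h1 : FS G₁) (h2 : FS G₂) {a b : V}
    (h : ∀ v, v ≠ a → v ≠ b → (∀ w, ¬ G₁.Adj v w) ∨ (∀ w, ¬ G₂.Adj v w))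
    (hab : a = b ∨ (G₁.Adj a b ∧ G₂.Adj a b)) : FS (G₁ ⊔ G₂) := by
  have hv : ∀ v w w', G₁.Adj v w → G₂.Adj v w' → v = a ∨ v = b := by
    intro v w w' h3 h4
    by_contra hc
    push Not at hc
    rcases h v hc.1 hc.2 with h5 | h5
    · exact h5 _ h3
    · exact h5 _ h4
  refine FS.glue h1 h2 s(a, b) ?_ ?_ ?_
  · rcases hab with rfl | hab
    · simp
    · simp [hab.1, hab.2]
  · intro e he1 he2
    induction e with | h u w =>
    have he1 : G₁.Adj u w := he1
    have he2 : G₂.Adj u w := he2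
    have hne := he1.ne
    rcases hv _ _ _ he1 he2 with rfl | rfl <;> rcases hv _ _ _ he1.symm he2.symm with rfl | rfl
    · exact absurd rfl hne
    · rfl
    · exact Sym2.eq_swap
    · exact absurd rfl hne
  · intro z hz
    set y₁ : Sym2 V → ZMod 2 := fun e => if e ∈ G₁.edgeSet then z e else 0 with hy₁
    set y₂ : Sym2 V → ZMod 2 := fun e => if e ∈ G₁.edgeSet then 0 else z e with hy₂
    have hzy : z = y₁ + y₂ := by
      funext e
      simp only [hy₁, hy₂, Pi.add_apply]
      split_ifs <;> simp
    have hs1 : ∀ e, e ∉ G₁.edgeSet → y₁ e = 0 := fun e he => by simp [hy₁, he]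
    have hs2 : ∀ e, e ∉ G₂.edgeSet → y₂ e = 0 := by
      intro e he
      simp only [hy₂]
      split_ifs with h3
      · rfl
      · refine hz.1 e ?_
        rw [SimpleGraph.edgeSet_sup]
        rintro (h4 | h4)
        · exact h3 h4
        · exact he h4
    have hsum : ∀ v, bd y₁ v + bd y₂ v = 0 := by
      intro v
      rw [← bd_add, ← hzy]
      exact hz.2 v
    have h0 : ∀ v, v ≠ a → v ≠ b → bd y₁ v = 0 := by
      intro v hva hvb
      rcases h v hva hvb with h5 | h5
      · exact Finset.sum_eq_zero fun u _ => hs1 _ (h5 u)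
      · have : bd y₂ v = 0 := Finset.sum_eq_zero fun u _ => hs2 _ (h5 u)
        have h6 := hsum v
        rwa [this, add_zero] at h6
    have htot : ∑ v, bd y₁ v = 0 := by
      have := pairing (fun _ => 1) y₁ (fun v => hs1 _ (by simp))
      simp only [one_mul] at this
      rw [this]
      refine Finset.sum_eq_zero fun e _ => ?_
      induction e with | h u w =>
      have : dd (fun _ : V => (1 : ZMod 2)) s(u, w) = 0 := z2_self 1
      rw [this, mul_zero]
    by_cases hne : a = b
    · subst hne
      have ha : bd y₁ a = 0 := by
        rw [Finset.sum_eq_single a (fun v _ hv => h0 v hv hv) (by simp)] at htot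
        exact htot
      have h0' : ∀ v, bd y₁ v = 0 := by
        intro v
        by_cases hva : v = a
        · rw [hva, ha]
        · exact h0 v hva hva
      refine ⟨y₁, y₂, ⟨hs1, h0'⟩, ⟨hs2, fun v => ?_⟩, hzy⟩
      have := hsum v
      rwa [h0' v, zero_add] at this
    · obtain ⟨hab1, hab2⟩ := hab.resolve_left hne
      have hsp : bd y₁ a + bd y₁ b = 0 := by
        rw [← Finset.sum_subset (Finset.subset_univ {a, b}) (by
          intro v _ hv
          simp at hv
          exact h0 v hv.1 hv.2), Finset.sum_pair hne] at htot
        exact htot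
      have heq := z2_eq_of_add hsp
      set α := bd y₁ a with hα
      have hc1 : ∀ v, bd (y₁ + α • dl s(a, b)) v = 0 := by
        intro v
        rw [bd_add, bd_smul, bd_dl hne]
        by_cases hva : v = a
        · subst hva
          simp [pt, hne, ← hα, z2_self]
        · by_cases hvb : v = b
          · subst hvb
            simp [pt, hva, ← heq, z2_self]
          · simp [pt, hva, hvb, h0 v hva hvb]
      have hdd : α • dl s(a, b) + α • dl s(a, b) = (0 : Sym2 V → ZMod 2) := by
        funext e
        exact z2_self _
      have hzz : z = (y₁ + α • dl s(a, b)) + (y₂ + α • dl s(a, b)) := by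
        rw [add_add_add_comm, hdd, add_zero, hzy]
      refine ⟨y₁ + α • dl s(a, b), y₂ + α • dl s(a, b), ⟨?_, hc1⟩, ⟨?_, ?_⟩, hzz⟩
      · intro e he
        have : e ≠ s(a, b) := by rintro rfl; exact he hab1
        simp [hs1 e he, dl, this]
      · intro e he
        have : e ≠ s(a, b) := by rintro rfl; exact he hab2
        simp [hs2 e he, dl, this]
      · intro v
        have h7 := hz.2 v
        rw [hzz, bd_add, hc1, zero_add] at h7
        exact h7

/-- Restriction of a graph to a vertex set (keeping all vertices). -/
def res (G : SimpleGraph V) (D : Set V) : SimpleGraph V where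
  Adj u w := G.Adj u w ∧ u ∈ D ∧ w ∈ D
  symm := ⟨fun _ _ h => ⟨h.1.symm, h.2.2, h.2.1⟩⟩
  loopless := ⟨fun _ h => h.1.ne rfl⟩

lemma ncard_sdiff_lt {S B : Set V} (hB : B ⊆ S) (hne : B.Nonempty) : (S \ B).ncard < S.ncard := by
  refine Set.ncard_lt_ncard ?_
  refine ⟨sdiff_subset, fun h => ?_⟩
  obtain ⟨b, hb⟩ := hne
  exact (h (hB hb)).2 hb

lemma fs_cut_one {G : SimpleGraph V} {S : Set V} (hS : ∀ u w, G.Adj u w → u ∈ S)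
    (hpl : G.IsPlanar)
    (ih : ∀ (G' : SimpleGraph V) (S' : Set V), S'.ncard < S.ncard →
      (∀ u w, G'.Adj u w → u ∈ S') → G'.IsPlanar → FS G') {A B : Set V} (a : V)
    (hA : A ⊆ S) (hB : B ⊆ S) (hA0 : A.Nonempty) (hB0 : B.Nonempty)
    (hcov : ∀ v ∈ S, v ∈ A ∨ v ∈ B ∨ v = a) (hAB : ∀ u ∈ A, ∀ w ∈ B, ¬ G.Adj u w)
    (hdj : Disjoint A B) : FS G := by
  have h1 : FS (res G (S \ B)) := ih _ (S \ B) (ncard_sdiff_lt hB hB0) (fun u w h => h.2.1)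
    (isPlanar_mono (fun u w h => h.1) hpl)
  have h2 : FS (res G (S \ A)) := ih _ (S \ A) (ncard_sdiff_lt hA hA0) (fun u w h => h.2.1)
    (isPlanar_mono (fun u w h => h.1) hpl)
  refine FS.anti ?_ (FS.glue_two h1 h2 (a := a) (b := a) ?_ (Or.inl rfl))
  · intro u w h
    have hu := hS _ _ h
    have hw := hS _ _ h.symm
    by_cases h3 : u ∈ B ∨ w ∈ B
    · refine Or.inr ⟨h, ⟨hu, fun h4 => ?_⟩, ⟨hw, fun h4 => ?_⟩⟩
      · rcases h3 with h3 | h3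
        · exact disjoint_left.1 hdj h4 h3
        · exact hAB _ h4 _ h3 h
      · rcases h3 with h3 | h3
        · exact hAB _ h4 _ h3 h.symm
        · exact disjoint_left.1 hdj h4 h3
    · push Not at h3
      exact Or.inl ⟨h, ⟨hu, h3.1⟩, ⟨hw, h3.2⟩⟩
  · intro v hva _
    by_cases hv : v ∈ S
    · rcases hcov v hv with h3 | h3 | h3
      · exact Or.inr fun w h4 => h4.2.1.2 h3
      · exact Or.inl fun w h4 => h4.2.1.2 h3
      · exact absurd h3 hva
    · exact Or.inl fun w h4 => hv h4.2.1.1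

lemma con_arm {G : SimpleGraph V} {S A B : Set V} {a b : V} (ha : a ∈ S) (hb : b ∈ S)
    (hne : a ≠ b) (hca : ConnOn G (S \ {a})) (hcb : ConnOn G (S \ {b}))
    (hA : A ⊆ S \ {a, b}) (hB : B ⊆ S \ {a, b}) (hA0 : A.Nonempty) (hB0 : B.Nonempty)
    (hcov : ∀ v ∈ S, v ∈ A ∨ v ∈ B ∨ v = a ∨ v = b) (hAB : ∀ u ∈ A, ∀ w ∈ B, ¬ G.Adj u w)
    (hdj : Disjoint A B) : ConnOn G (insert a B) ∧ (con G a B).Adj a b := by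
  have haA : a ∉ A := fun h => (hA h).2 (by simp)
  have haB : a ∉ B := fun h => (hB h).2 (by simp)
  have hbA : b ∉ A := fun h => (hA h).2 (by simp)
  have hbB : b ∉ B := fun h => (hB h).2 (by simp)
  constructor
  · refine connOn_of_base (o := a) ?_ (mem_insert _ _)
    rintro C hC haC ⟨d, hd, hdC⟩
    have hdB : d ∈ B := by
      rcases hd with rfl | hd
      · exact absurd haC hdC
      · exact hd
    obtain ⟨x, hx, y, hy, hxy⟩ := hcb (C ∪ A) (by
      rintro v (hv | hv)
      · rcases hC hv with rfl | hv
        · exact ⟨ha, hne⟩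
        · exact ⟨(hB hv).1, fun h => hbB (h ▸ hv)⟩
      · exact ⟨(hA hv).1, fun h => hbA (h ▸ hv)⟩) ⟨a, Or.inl haC⟩
      ⟨d, ⟨(hB hdB).1, fun h => hbB (h ▸ hdB)⟩, fun h => h.elim hdC
        fun h => disjoint_left.1 hdj h hdB⟩
    have hyB : y ∈ B := by
      rcases hcov y hy.1.1 with h | h | h | h
      · exact absurd (Or.inr h) hy.2
      · exact h
      · exact absurd (Or.inl (h ▸ haC)) hy.2
      · exact absurd h hy.1.2
    have hxC : x ∈ C := by
      rcases hx with h | h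
      · exact h
      · exact absurd hxy (hAB _ h _ hyB)
    exact ⟨x, hxC, y, ⟨mem_insert_of_mem _ hyB, fun h => hy.2 (Or.inl h)⟩, hxy⟩
  · obtain ⟨d, hd⟩ := hA0
    obtain ⟨x, hx, y, hy, hxy⟩ := hca B (fun v hv => ⟨(hB hv).1, fun h => haB (h ▸ hv)⟩) hB0
      ⟨d, ⟨(hA hd).1, fun h => haA (h ▸ hd)⟩, fun h => disjoint_left.1 hdj hd h⟩
    have hyb : y = b := by
      rcases hcov y hy.1.1 with h | h | h | h
      · exact absurd hxy.symm (hAB _ h _ hx)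
      · exact absurd h hy.2
      · exact absurd h hy.1.2
      · exact h
    subst hyb
    exact ⟨hne, haB, hbB, Or.inr (Or.inl ⟨rfl, x, hx, hxy⟩)⟩

lemma fs_cut_two {G : SimpleGraph V} {S : Set V} (hS : ∀ u w, G.Adj u w → u ∈ S)
    (hpl : G.IsPlanar)
    (ih : ∀ (G' : SimpleGraph V) (S' : Set V), S'.ncard < S.ncard →
      (∀ u w, G'.Adj u w → u ∈ S') → G'.IsPlanar → FS G') {A B : Set V} {a b : V}
    (ha : a ∈ S) (hb : b ∈ S)
    (hne : a ≠ b) (hca : ConnOn G (S \ {a})) (hcb : ConnOn G (S \ {b}))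
    (hA : A ⊆ S \ {a, b}) (hB : B ⊆ S \ {a, b}) (hA0 : A.Nonempty) (hB0 : B.Nonempty)
    (hcov : ∀ v ∈ S, v ∈ A ∨ v ∈ B ∨ v = a ∨ v = b) (hAB : ∀ u ∈ A, ∀ w ∈ B, ¬ G.Adj u w)
    (hdj : Disjoint A B) : FS G := by
  have haA : a ∉ A := fun h => (hA h).2 (by simp)
  have haB : a ∉ B := fun h => (hB h).2 (by simp)
  obtain ⟨hB1, hB2⟩ := con_arm ha hb hne hca hcb hA hB hA0 hB0 hcov hAB hdj
  obtain ⟨hA1, hA2⟩ := con_arm ha hb hne hca hcb hB hA hB0 hA0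
    (fun v hv => by have := hcov v hv; tauto) (fun u hu w hw h => hAB _ hw _ hu h.symm) hdj.symm
  have hsup : ∀ B : Set V, ∀ u w, (con G a B).Adj u w → u ∈ S \ B := by
    rintro B u w ⟨_, hu, _, h⟩
    refine ⟨?_, hu⟩
    rcases h with h | ⟨rfl, _⟩ | ⟨_, c, _, h⟩
    · exact hS _ _ h
    · exact ha
    · exact hS _ _ h.symm
  have h1 : FS (con G a B) := ih _ (S \ B) (ncard_sdiff_lt (fun v hv => (hB hv).1) hB0)
    (hsup B) (isPlanar_con haB hB1 hpl)
  have h2 : FS (con G a A) := ih _ (S \ A) (ncard_sdiff_lt (fun v hv => (hA hv).1) hA0)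
    (hsup A) (isPlanar_con haA hA1 hpl)
  refine FS.anti ?_ (FS.glue_two h1 h2 (a := a) (b := b) ?_ (Or.inr ⟨hB2, hA2⟩))
  · intro u w h
    by_cases h3 : u ∈ B ∨ w ∈ B
    · refine Or.inr ⟨h.ne, fun h4 => ?_, fun h4 => ?_, Or.inl h⟩
      · rcases h3 with h3 | h3
        · exact disjoint_left.1 hdj h4 h3
        · exact hAB _ h4 _ h3 h
      · rcases h3 with h3 | h3
        · exact hAB _ h4 _ h3 h.symm
        · exact disjoint_left.1 hdj h4 h3
    · push Not at h3
      exact Or.inl ⟨h.ne, h3.1, h3.2, Or.inl h⟩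
  · intro v hva hvb
    by_cases hv : v ∈ S
    · rcases hcov v hv with h3 | h3 | h3 | h3
      · exact Or.inr fun w h4 => h4.2.1 h3
      · exact Or.inl fun w h4 => h4.2.1 h3
      · exact absurd h3 hva
      · exact absurd h3 hvb
    · exact Or.inl fun w h4 => hv (hsup B _ _ h4).1

/-- Every planar graph (no `K₅` and no `K₃,₃` minor) has a face system. -/
theorem fs_of_planar : ∀ (n : ℕ) (G : SimpleGraph V) (S : Set V), S.ncard = n →
    (∀ u w, G.Adj u w → u ∈ S) → G.IsPlanar → FS G := by
  intro n
  induction n using Nat.strong_induction_on with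
  | _ n IH =>
  intro G S hn hS hpl
  subst hn
  have ih : ∀ (G' : SimpleGraph V) (S' : Set V), S'.ncard < S.ncard →
      (∀ u w, G'.Adj u w → u ∈ S') → G'.IsPlanar → FS G' := fun G' S' h => IH _ h G' S' rfl
  by_cases h1 : ConnOn G S
  swap
  · unfold ConnOn at h1
    push Not at h1
    obtain ⟨A, hA, hA0, hB0, hAB⟩ := h1
    obtain ⟨a, _⟩ := id hA0
    refine fs_cut_one hS hpl ih a hA sdiff_subset hA0 hB0 ?_ hAB disjoint_sdiff_self_right
    intro v hv
    by_cases h : v ∈ A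
    · exact Or.inl h
    · exact Or.inr (Or.inl ⟨hv, h⟩)
  by_cases h2 : ∀ a, ConnOn G (S \ {a})
  swap
  · push Not at h2
    obtain ⟨a, h2⟩ := h2
    unfold ConnOn at h2
    push Not at h2
    obtain ⟨A, hA, hA0, hB0, hAB⟩ := h2
    refine fs_cut_one hS hpl ih a (hA.trans sdiff_subset) (sdiff_subset.trans sdiff_subset)
      hA0 hB0 ?_ hAB disjoint_sdiff_self_right
    intro v hv
    by_cases h : v ∈ A
    · exact Or.inl h
    · by_cases h' : v = a
      · exact Or.inr (Or.inr h')
      · exact Or.inr (Or.inl ⟨⟨hv, h'⟩, h⟩)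
  by_cases h3 : ∀ a b, ConnOn G (S \ {a, b})
  swap
  · push Not at h3
    obtain ⟨a, b, h3⟩ := h3
    have hne : a ≠ b := by
      rintro rfl
      rw [pair_eq_singleton] at h3
      exact h3 (h2 a)
    have ha : a ∈ S := by
      by_contra ha
      refine h3 ?_
      have : S \ {a, b} = S \ {b} := by
        ext v
        simp only [mem_sdiff, mem_insert_iff, mem_singleton_iff]
        refine and_congr_right fun hv => ?_
        have : v ≠ a := fun h => ha (h ▸ hv)
        tauto
      rw [this]
      exact h2 b
    have hb : b ∈ S := by
      by_contra hb
      refine h3 ?_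
      have : S \ {a, b} = S \ {a} := by
        ext v
        simp only [mem_sdiff, mem_insert_iff, mem_singleton_iff]
        refine and_congr_right fun hv => ?_
        have : v ≠ b := fun h => hb (h ▸ hv)
        tauto
      rw [this]
      exact h2 a
    unfold ConnOn at h3
    push Not at h3
    obtain ⟨A, hA, hA0, hB0, hAB⟩ := h3
    refine fs_cut_two hS hpl ih ha hb hne (h2 a) (h2 b) hA sdiff_subset hA0 hB0 ?_ hAB
      disjoint_sdiff_self_right
    intro v hv
    by_cases h : v ∈ A
    · exact Or.inl h
    · by_cases h' : v = a ∨ v = b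
      · exact Or.inr (Or.inr h')
      · exact Or.inr (Or.inl ⟨⟨hv, h'⟩, h⟩)
  by_cases hc2 : S.ncard ≤ 2
  · exact fs_of_ncard_le_two hS hc2
  by_cases hc5 : 5 ≤ S.ncard
  · exact step3 hS hpl hc5 h1 h3 ih
  · exact fs_small hS (by omega) h3

end PartEight

section PartNine
open Set
open scoped Classical

variable {V : Type*} [Fintype V]

/-- The cycle space as a submodule. -/
def cycSub (G : SimpleGraph V) : Submodule (ZMod 2) (Sym2 V → ZMod 2) where
  carrier := {z | Cyc G z}
  add_mem' h1 h2 := h1.add h2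
  zero_mem' := cyc_zero G
  smul_mem' c _ h := h.smul c

/-- The boundary as a linear map on edge functions. -/
noncomputable def bdLin (G : SimpleGraph V) : (G.edgeSet → ZMod 2) →ₗ[ZMod 2] (V → ZMod 2) where
  toFun z v := bd (Function.ExtendByZero.linearMap (ZMod 2) (Subtype.val : G.edgeSet → Sym2 V) z) v
  map_add' y z := by
    funext v
    rw [map_add, bd_add]
    rfl
  map_smul' c z := by
    funext v
    rw [map_smul, bd_smul]
    rfl

lemma ext_not {G : SimpleGraph V} (z : G.edgeSet → ZMod 2) {e : Sym2 V} (he : e ∉ G.edgeSet) :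
    Function.ExtendByZero.linearMap (ZMod 2) (Subtype.val : G.edgeSet → Sym2 V) z e = 0 := by
  show Function.extend Subtype.val z 0 e = 0
  rw [Function.extend_apply']
  · rfl
  · rintro ⟨a, rfl⟩
    exact he a.2

lemma cyc_dim_ge [Nonempty V] (G : SimpleGraph V) :
    G.edgeFinset.card + 1 ≤ Module.finrank (ZMod 2) (cycSub G) + Fintype.card V := by
  have h1 := (bdLin G).finrank_range_add_finrank_ker
  rw [Module.finrank_fintype_fun_eq_card] at h1
  let sm : (V → ZMod 2) →ₗ[ZMod 2] ZMod 2 := ∑ v, LinearMap.proj v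
  have hsm : ∀ f, sm f = ∑ v, f v := fun f => by simp [sm]
  have hsurj : Function.Surjective sm := by
    intro c
    obtain ⟨v⟩ := ‹Nonempty V›
    exact ⟨c • pt v, by simp [hsm, pt]⟩
  have h2 := sm.finrank_range_add_finrank_ker
  rw [Module.finrank_fintype_fun_eq_card, LinearMap.range_eq_top.2 hsurj, finrank_top,
    Module.finrank_self] at h2
  have h3 : Module.finrank (ZMod 2) (LinearMap.range (bdLin G)) ≤
      Module.finrank (ZMod 2) (LinearMap.ker sm) := by
    refine Submodule.finrank_mono ?_
    rintro _ ⟨z, rfl⟩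
    rw [LinearMap.mem_ker, hsm]
    set y := Function.ExtendByZero.linearMap (ZMod 2) (Subtype.val : G.edgeSet → Sym2 V) z with hy
    have := pairing (fun _ => 1) y (fun v => ext_not z (by simp))
    simp only [one_mul] at this
    show ∑ v, bd y v = 0
    rw [this]
    refine Finset.sum_eq_zero fun e _ => ?_
    induction e with | h u w =>
    have : dd (fun _ : V => (1 : ZMod 2)) s(u, w) = 0 := z2_self 1
    rw [this, mul_zero]
  have h4 : Module.finrank (ZMod 2) (LinearMap.ker (bdLin G)) ≤
      Module.finrank (ZMod 2) (cycSub G) := by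
    let J := Function.ExtendByZero.linearMap (ZMod 2) (Subtype.val : G.edgeSet → Sym2 V)
    let J' : LinearMap.ker (bdLin G) →ₗ[ZMod 2] cycSub G :=
      (J.domRestrict (LinearMap.ker (bdLin G))).codRestrict (cycSub G) (by
        rintro ⟨z, hz⟩
        exact ⟨fun e he => ext_not z he, fun v => congrFun hz v⟩)
    refine LinearMap.finrank_le_finrank_of_injective (f := J') ?_
    rintro ⟨y, hy⟩ ⟨z, hz⟩ h
    have h5 : J y = J z := congrArg Subtype.val h
    have : y = z := by
      funext e
      have h6 := congrFun h5 e.1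
      have h7 : ∀ y : G.edgeSet → ZMod 2, J y e.1 = y e := fun y =>
        Subtype.val_injective.extend_apply y 0 e
      rwa [h7, h7] at h6
    subst this
    rfl
  rw [SimpleGraph.edgeFinset_card]
  omega

lemma cob_eq_sum {ι : Type*} [Fintype ι] (G : SimpleGraph V) (l r : Sym2 V → ι) (p : ι → ZMod 2) :
    cob G l r p = ∑ i, p i • face G l r i := by
  funext e
  rw [Finset.sum_apply]
  by_cases he : e ∈ G.edgeSet
  · simp [face, cob_adj he, pt, mul_add, Finset.sum_add_distrib]
  · simp [face, cob_not he]

lemma face_support_ge {ι : Type*} {G : SimpleGraph V} {l r : Sym2 V → ι} (hfs : IsFS G l r) (i : ι)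
    (hne : face G l r i ≠ 0) :
    G.girth ≤ (G.edgeFinset.filter fun e => face G l r i e ≠ 0).card := by
  have hc : Cyc G (face G l r i) := hfs.cyc _
  obtain ⟨u, k, hk, hper, hinj, hz, hg⟩ := exists_cycle_seq hc hne
  refine hg.trans ?_
  have : k = (Finset.range k).card := by simp
  rw [this]
  refine Finset.card_le_card_of_injOn (fun t => s(u t, u (t + 1))) ?_ ?_
  · intro t _
    simp only [Finset.coe_filter, mem_setOf_eq, SimpleGraph.mem_edgeFinset]
    refine ⟨?_, hz t⟩
    by_contra h
    exact hz t (hc.1 _ h)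
  · intro t ht t' ht' h
    simp at ht ht'
    exact edge_inj_cyc hk (by simpa using hper 0) hinj ht' ht h

/-- Euler's bound for graphs with no `K₅` and no `K₃,₃` minor. -/
theorem euler_bound [Nonempty V] {G : SimpleGraph V} (hpl : G.IsPlanar) :
    G.edgeFinset.card + 1 ≤ Fintype.card V ∨
      G.girth * (G.edgeFinset.card + 2) ≤ 2 * G.edgeFinset.card + G.girth * Fintype.card V := by
  obtain ⟨ι, hι, l, r, hfs⟩ := fs_of_planar _ G Set.univ rfl (fun _ _ _ => Set.mem_univ _) hpl
  have := Fintype.ofFinite ι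
  have hlow := cyc_dim_ge G
  set F : Finset ι := Finset.univ.filter fun i => face G l r i ≠ 0 with hF
  by_cases hF0 : F = ∅
  · left
    have hz : cycSub G = ⊥ := by
      rw [eq_bot_iff]
      intro z hz
      obtain ⟨p, rfl⟩ := (hfs z).1 hz
      rw [Submodule.mem_bot, cob_eq_sum]
      refine Finset.sum_eq_zero fun i _ => ?_
      have : face G l r i = 0 := by
        by_contra h
        have : i ∈ F := by simp [hF, h]
        rw [hF0] at this
        simp at this
      rw [this, smul_zero]
    rw [hz, finrank_bot] at hlow
    omega
  · right
    obtain ⟨i₀, hi₀⟩ := Finset.nonempty_iff_ne_empty.2 hF0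
    have hup : Module.finrank (ZMod 2) (cycSub G) ≤ (F.erase i₀).card := by
      have hle : cycSub G ≤ Submodule.span (ZMod 2)
          (((F.erase i₀).image (face G l r) : Finset _) : Set (Sym2 V → ZMod 2)) := by
        intro z hz
        obtain ⟨p, rfl, hp⟩ := hfs.exists_norm hz i₀ 0
        rw [cob_eq_sum]
        refine Submodule.sum_mem _ fun i _ => ?_
        by_cases hi : i = i₀
        · subst hi
          rw [hp, zero_smul]
          exact Submodule.zero_mem _
        by_cases hf : face G l r i = 0
        · rw [hf, smul_zero]
          exact Submodule.zero_mem _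
        refine Submodule.smul_mem _ _ (Submodule.subset_span ?_)
        rw [Finset.coe_image]
        exact ⟨i, by simp [hF, hi, hf], rfl⟩
      exact (Submodule.finrank_mono hle).trans
        ((finrank_span_finset_le_card _).trans Finset.card_image_le)
    rw [Finset.card_erase_of_mem hi₀] at hup
    have hpos : 1 ≤ F.card := Finset.card_pos.2 ⟨i₀, hi₀⟩
    have hcount : F.card * G.girth ≤ G.edgeFinset.card * 2 := by
      refine Finset.card_mul_le_card_mul (fun i e => face G l r i e ≠ 0) ?_ ?_
      · intro i hi
        have hi : face G l r i ≠ 0 := by simpa [hF] using hi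
        exact face_support_ge hfs i hi
      · intro e he
        have hsub : (Finset.bipartiteBelow (fun i e => face G l r i e ≠ 0) F e) ⊆ {l e, r e} := by
          intro i hi
          simp only [Finset.bipartiteBelow, Finset.mem_filter] at hi
          by_contra hc
          simp only [Finset.mem_insert, Finset.mem_singleton, not_or] at hc
          refine hi.2 ?_
          unfold face
          rw [cob_adj (by simpa using he)]
          simp [pt, Ne.symm hc.1, Ne.symm hc.2]
        exact (Finset.card_le_card hsub).trans Finset.card_le_two
    have h1 : G.edgeFinset.card + 2 ≤ F.card + Fintype.card V := by omega
    nlinarith [Nat.mul_le_mul_left G.girth h1]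

lemma vertex_bound {V : Type} [Fintype V] (G : SimpleGraph V) (r m g : ℕ) (hr : 2 ≤ r)
    (hrm : r < m) (hg : 3 ≤ g) (hpl : G.IsPlanar) (hG : IsBigirthGraph G r m g) :
    m * g + 4 * g + r * g * Fintype.card V + 2 * r ≤
      2 * m + 2 * r * Fintype.card V + r * g + 2 * g * Fintype.card V := by
  obtain ⟨hgir, hdeg, _, v₀, hv₀⟩ := hG
  have hne : Nonempty V := ⟨v₀⟩
  have hd : ∀ v, G.degN v = G.degree v := by
    intro v
    unfold SimpleGraph.degN
    rw [Set.ncard_eq_toFinset_card']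
    rfl
  have hsum := G.sum_degrees_eq_twice_card_edges
  have hge : m + (Fintype.card V - 1) * r ≤ ∑ v, G.degree v := by
    rw [← Finset.add_sum_erase _ _ (Finset.mem_univ v₀), ← hd v₀, hv₀]
    have : (Finset.univ.erase v₀).card = Fintype.card V - 1 := by simp
    rw [← this, ← smul_eq_mul, ← Finset.sum_const]
    gcongr with v hv
    rw [← hd]
    rcases hdeg v with h | h <;> omega
  have hn : 1 ≤ Fintype.card V := Fintype.card_pos
  obtain ⟨n, hn'⟩ : ∃ n, Fintype.card V = n + 1 := ⟨Fintype.card V - 1, by omega⟩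
  rw [hsum] at hge
  have := euler_bound hpl
  rw [hgir] at this
  rw [hn'] at hge this ⊢
  simp only [Nat.add_sub_cancel] at hge
  set E := G.edgeFinset.card with hE
  rcases this with h | h
  · exfalso
    nlinarith
  · obtain ⟨k, rfl⟩ : ∃ k, g = k + 2 := ⟨g - 2, by omega⟩
    nlinarith [Nat.mul_le_mul_left k hge]

end PartNine

/-- If `2 ≤ r < m`, `g ≥ 3` and `r(2−g) + 2g > 0`, then every finite
planar `({r,m};g)`-graph has at least `1 + (m(g−2)+2g)/(r(2−g)+2g)` vertices; in
particular `n_p({r,m};g) ≥ 1 + (m(g−2)+2g)/(2g − r(g−2))`. -/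
theorem planar_bigirth_lower_bound (r m g : ℕ) (hr : 2 ≤ r) (hrm : r < m) (hg : 3 ≤ g)
    (hpos : 0 < (r : ℚ) * (2 - g) + 2 * g) :
    (∀ (V : Type) [Fintype V] (G : SimpleGraph V),
      G.IsPlanar → IsBigirthGraph G r m g →
      1 + ((m : ℚ) * ((g : ℚ) - 2) + 2 * g) / ((r : ℚ) * (2 - g) + 2 * g) ≤
        (Fintype.card V : ℚ)) ∧
    ∀ n ∈ bicageOrders r m g,
      1 + ((m : ℚ) * ((g : ℚ) - 2) + 2 * g) / (2 * g - (r : ℚ) * ((g : ℚ) - 2)) ≤ (n : ℚ) := by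
  have key : ∀ (V : Type) [Fintype V] (G : SimpleGraph V),
      G.IsPlanar → IsBigirthGraph G r m g →
      1 + ((m : ℚ) * ((g : ℚ) - 2) + 2 * g) / ((r : ℚ) * (2 - g) + 2 * g) ≤
        (Fintype.card V : ℚ) := by
    intro V _ G hpl hG
    have h := vertex_bound G r m g hr hrm hg hpl hG
    have h' : (m * g + 4 * g + r * g * Fintype.card V + 2 * r : ℚ) ≤
      2 * m + 2 * r * Fintype.card V + r * g + 2 * g * Fintype.card V := by exact_mod_cast h
    have : ((m : ℚ) * ((g : ℚ) - 2) + 2 * g) / ((r : ℚ) * (2 - g) + 2 * g) ≤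
        (Fintype.card V : ℚ) - 1 := by
      rw [div_le_iff₀ hpos]
      linarith
    linarith
  refine ⟨key, ?_⟩
  rintro n ⟨V, _, G, hpl, hG, rfl⟩
  have h := key V G hpl hG
  rwa [show (r : ℚ) * (2 - g) + 2 * g = 2 * g - (r : ℚ) * ((g : ℚ) - 2) by ring] at h
end

section
/- For every integer m ≥ 5, n_p({4,m};3) = m+2, and this minimum is attained by the biwheel B_m, the graph consisting of a cycle of length m together with two nonadjacent vertices each adjacent to every cycle vertex. -/
open SimpleGraph

/-- The biwheel `B_m`: a cycle `0,…,m−1` together with two nonadjacent hubs `m`, `m+1`,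
each adjacent to every cycle vertex. -/
def biwheel (m : ℕ) : SimpleGraph (Fin (m + 2)) :=
  SimpleGraph.fromRel (fun a b =>
    (a.val < m ∧ b.val < m ∧ b.val = (a.val + 1) % m) ∨ (m ≤ a.val ∧ b.val < m))

namespace BW

/-! ### Lower bound: a dominating vertex plus minimum degree four forces a `K₅` minor -/

section Lower

variable {V : Type*} (G : SimpleGraph V) (v : V)

/-- `p 0, …, p k` is a path of `G` avoiding `v`. -/
def IsP (p : ℕ → V) (k : ℕ) : Prop :=
  (∀ t ≤ k, p t ≠ v) ∧ (∀ s ≤ k, ∀ t ≤ k, p s = p t → s = t) ∧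
    ∀ t < k, G.Adj (p t) (p (t + 1))

lemma singleton_conn (x : V) : (G.induce ({x} : Set V)).Connected := by
  have : Nonempty ({x} : Set V) := ⟨⟨x, rfl⟩⟩
  refine ⟨fun a b => ?_⟩
  have : a = b := Subtype.ext (a.2.trans b.2.symm)
  rw [this]

lemma seg_conn (p : ℕ → V) (a d : ℕ) (h : ∀ t, a ≤ t → t < a + d → G.Adj (p t) (p (t + 1))) :
    (G.induce (p '' Set.Icc a (a + d))).Connected := by
  induction d with
  | zero =>
    have h0 : p '' Set.Icc a (a + 0) = {p a} := by simp
    rw [h0]; exact singleton_conn G (p a)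
  | succ d ih =>
    have h1 := ih (fun t h1 h2 => h t h1 (by omega))
    have h2 := singleton_conn G (p (a + d + 1))
    have h3 := connected_induce_union (G := G) h1.preconnected h2.preconnected
      (v := p (a + d)) (w := p (a + d + 1)) ⟨a + d, by simp, rfl⟩ rfl
      (h (a + d) (by omega) (by omega))
    have h4 : p '' Set.Icc a (a + (d + 1)) = p '' Set.Icc a (a + d) ∪ {p (a + d + 1)} := by
      have : Set.Icc a (a + (d + 1)) = Set.Icc a (a + d) ∪ {a + d + 1} := by
        ext t; simp only [Set.mem_Icc, Set.mem_union, Set.mem_singleton_iff]; omega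
      rw [this, Set.image_union, Set.image_singleton]
    rw [h4]; exact h3

lemma seg_conn' (p : ℕ → V) (a b : ℕ) (hab : a ≤ b)
    (h : ∀ t, a ≤ t → t < b → G.Adj (p t) (p (t + 1))) :
    (G.induce (p '' Set.Icc a b)).Connected := by
  obtain ⟨d, rfl⟩ := Nat.exists_eq_add_of_le hab
  exact seg_conn G p a d h

variable {G v}

lemma exists_longest [Fintype V] (u : V) (hu : u ≠ v) :
    ∃ k, (∃ p, IsP G v p k) ∧ ¬ ∃ p, IsP G v p (k + 1) := by
  by_contra hcon
  push Not at hcon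
  have key : ∀ k, ∃ p, IsP G v p k := by
    intro k
    induction k with
    | zero =>
      refine ⟨fun _ => u, fun _ _ => hu, fun s hs t ht _ => by omega, fun t ht => by omega⟩
    | succ k ih =>
      exact hcon k ih
  obtain ⟨p, hp⟩ := key (Fintype.card V)
  have hinj : Function.Injective (fun i : Fin (Fintype.card V + 1) => p i) := by
    intro a b hab
    exact Fin.ext (hp.2.1 a (by omega) b (by omega) hab)
  have := Fintype.card_le_of_injective _ hinj
  simp at this

lemma nbr_on_path {k : ℕ} (hmax : ¬ ∃ p, IsP G v p (k + 1)) {p : ℕ → V} (hp : IsP G v p k)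
    {w : V} (hw : w ≠ v) (ha : G.Adj (p 0) w) : ∃ t ≤ k, p t = w := by
  by_contra hcon
  push Not at hcon
  refine hmax ⟨fun t => match t with | 0 => w | t + 1 => p t, ?_, ?_, ?_⟩
  · rintro (_ | t) ht
    · exact hw
    · exact hp.1 t (by omega)
  · rintro (_ | s) hs (_ | t) ht h
    · rfl
    · exact absurd h.symm (hcon t (by omega))
    · exact absurd h (hcon s (by omega))
    · have := hp.2.1 s (by omega) t (by omega) h
      omega
  · rintro (_ | t) ht
    · exact ha.symm
    · exact hp.2.2 t (by omega)

lemma rot_path {k : ℕ} {p : ℕ → V} (hp : IsP G v p k) {i : ℕ} (hi : 1 ≤ i) (hik : i ≤ k)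
    (ha : G.Adj (p 0) (p i)) : IsP G v (fun t => if t < i then p (i - 1 - t) else p t) k := by
  refine ⟨?_, ?_, ?_⟩
  · intro t ht
    dsimp only
    split_ifs
    · exact hp.1 _ (by omega)
    · exact hp.1 _ ht
  · intro s hs t ht h
    dsimp only at h
    split_ifs at h <;> have := hp.2.1 _ (by omega) _ (by omega) h <;> omega
  · intro t ht
    dsimp only
    split_ifs with h1 h2 h2
    · have := hp.2.2 (i - 1 - (t + 1)) (by omega)
      rw [show i - 1 - (t + 1) + 1 = i - 1 - t by omega] at this
      exact this.symm
    · have e1 : i - 1 - t = 0 := by omega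
      have e2 : t + 1 = i := by omega
      rw [e1, e2]; exact ha
    · omega
    · exact hp.2.2 t ht

lemma k5_minor [Fintype V] (u : V) (hu : u ≠ v) (hdom : ∀ w, w ≠ v → G.Adj v w)
    (hdeg : ∀ x a b : V, x ≠ v → ∃ w, G.Adj x w ∧ w ≠ v ∧ w ≠ a ∧ w ≠ b) :
    (completeGraph (Fin 5)).IsMinorOf G := by
  classical
  obtain ⟨k, ⟨p0, hp0⟩, hmax⟩ := exists_longest (G := G) u hu
  have nb : ∀ p, IsP G v p k → ∀ b, ∃ t, 2 ≤ t ∧ t ≤ k ∧ G.Adj (p 0) (p t) ∧ p t ≠ b := by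
    intro p hp b
    obtain ⟨w, h1, h2, h3, h4⟩ := hdeg (p 0) (p 1) b (hp.1 0 (by omega))
    obtain ⟨t, ht, rfl⟩ := nbr_on_path hmax hp h2 h1
    refine ⟨t, ?_, ht, h1, h4⟩
    rcases t with _ | _ | t
    · exact absurd h1 (G.irrefl)
    · exact absurd rfl h3
    · omega
  have hex : ∃ i, 2 ≤ i ∧ i ≤ k ∧ ∃ p, IsP G v p k ∧ G.Adj (p 0) (p i) := by
    obtain ⟨t, h1, h2, h3, -⟩ := nb p0 hp0 (p0 0)
    exact ⟨t, h1, h2, p0, hp0, h3⟩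
  obtain ⟨i, ⟨hi2, hik, p, hp, hadj⟩, hmin⟩ :
      ∃ i, (2 ≤ i ∧ i ≤ k ∧ ∃ p, IsP G v p k ∧ G.Adj (p 0) (p i)) ∧
      ∀ j, (2 ≤ j ∧ j ≤ k ∧ ∃ p, IsP G v p k ∧ G.Adj (p 0) (p j)) → i ≤ j :=
    ⟨Nat.find hex, Nat.find_spec hex, fun j hj => Nat.find_min' hex hj⟩
  obtain ⟨j, hj2, hjk, hja, hji⟩ := nb p hp (p i)
  have hij : i < j := by
    have h1 := hmin j ⟨hj2, hjk, p, hp, hja⟩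
    have h2 : j ≠ i := by rintro rfl; exact hji rfl
    omega
  have hq := rot_path hp (by omega) hik hadj
  obtain ⟨l, hl2, hlk, hla, hli⟩ := nb _ hq (p i)
  have hil : i < l := by
    have h1 := hmin l ⟨hl2, hlk, _, hq, hla⟩
    have h2 : l ≠ i := by rintro rfl; simp at hli
    omega
  have hla' : G.Adj (p (i - 1)) (p l) := by
    have e1 : 0 < i := by omega
    have e2 : ¬ l < i := by omega
    simpa [e1, e2] using hla
  -- branch sets as intervals
  have touch : ∀ w, w ≠ v → G.Adj w v := fun w hw => (hdom w hw).symm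
  let lo : Fin 4 → ℕ := ![0, i - 1, i, i + 1]
  let hi : Fin 4 → ℕ := ![i - 2, i - 1, i, k]
  have hlohi : ∀ a, lo a ≤ hi a ∧ hi a ≤ k := by
    intro a; fin_cases a <;> simp [lo, hi] <;> omega
  have hsep : ∀ a b, a < b → hi a < lo b := by
    intro a b hab
    fin_cases a <;> fin_cases b <;> simp [lo, hi] at hab ⊢ <;> omega
  have hedge : ∀ a b, a < b → ∃ s t, (lo a ≤ s ∧ s ≤ hi a) ∧ (lo b ≤ t ∧ t ≤ hi b) ∧
      G.Adj (p s) (p t) := by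
    have c1 := hp.2.2 (i - 2) (by omega)
    have c2 := hp.2.2 (i - 1) (by omega)
    have c3 := hp.2.2 i (by omega)
    rw [show i - 2 + 1 = i - 1 by omega] at c1
    rw [show i - 1 + 1 = i by omega] at c2
    intro a b hab
    fin_cases a <;> fin_cases b <;> first
      | (exfalso; revert hab; decide)
      | skip
    · exact ⟨i - 2, i - 1, by simp [lo, hi], by simp [lo, hi], c1⟩
    · exact ⟨0, i, by simp [lo, hi], by simp [lo, hi], hadj⟩
    · exact ⟨0, j, by simp [lo, hi], by simp [lo, hi]; omega, hja⟩
    · exact ⟨i - 1, i, by simp [lo, hi], by simp [lo, hi], c2⟩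
    · exact ⟨i - 1, l, by simp [lo, hi], by simp [lo, hi]; omega, hla'⟩
    · exact ⟨i, i + 1, by simp [lo, hi], by simp [lo, hi]; omega, c3⟩
  let F : Fin 4 → Set V := fun a => p '' Set.Icc (lo a) (hi a)
  have hFv : ∀ a, v ∉ F a := by
    rintro a ⟨t, ht, h⟩
    exact hp.1 t (ht.2.trans (hlohi a).2) h
  have hFd : ∀ a b, a < b → Disjoint (F a) (F b) := by
    intro a b hab
    rw [Set.disjoint_left]
    rintro x ⟨s, hs, rfl⟩ ⟨t, ht, h⟩
    have := hp.2.1 t (ht.2.trans (hlohi b).2) s (hs.2.trans (hlohi a).2) h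
    have := hsep a b hab
    have := hs.2
    have := ht.1
    omega
  have hFd' : ∀ a b, a ≠ b → Disjoint (F a) (F b) := by
    intro a b hab
    rcases lt_or_gt_of_ne hab with h | h
    · exact hFd a b h
    · exact (hFd b a h).symm
  have hFe : ∀ a b, a ≠ b → ∃ x ∈ F a, ∃ y ∈ F b, G.Adj x y := by
    intro a b hab
    rcases lt_or_gt_of_ne hab with h | h
    · obtain ⟨s, t, hs, ht, h⟩ := hedge a b h
      exact ⟨p s, ⟨s, hs, rfl⟩, p t, ⟨t, ht, rfl⟩, h⟩
    · obtain ⟨s, t, hs, ht, h⟩ := hedge b a h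
      exact ⟨p t, ⟨t, ht, rfl⟩, p s, ⟨s, hs, rfl⟩, h.symm⟩
  have hFp : ∀ a, p (lo a) ∈ F a ∧ p (lo a) ≠ v := fun a =>
    ⟨⟨lo a, ⟨le_rfl, (hlohi a).1⟩, rfl⟩, hp.1 _ ((hlohi a).1.trans (hlohi a).2)⟩
  refine ⟨Fin.cons {v} F, ?_, ?_, ?_⟩
  · intro w
    refine Fin.cases ?_ (fun a => ?_) w
    · exact singleton_conn G v
    · exact seg_conn' G p _ _ (hlohi a).1
        (fun t _ h2 => hp.2.2 t (lt_of_lt_of_le h2 (hlohi a).2))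
  · intro w₁ w₂
    refine Fin.cases ?_ (fun a => ?_) w₁ <;> refine Fin.cases ?_ (fun b => ?_) w₂
    · intro h; exact absurd rfl h
    · intro _; simpa using hFv b
    · intro _; simpa using hFv a
    · intro h
      simpa using hFd' a b (fun h' => h (by rw [h']))
  · intro w₁ w₂
    refine Fin.cases ?_ (fun a => ?_) w₁ <;> refine Fin.cases ?_ (fun b => ?_) w₂
    · intro h; exact absurd rfl h.ne
    · intro _
      exact ⟨v, rfl, _, (hFp b).1, hdom _ (hFp b).2⟩
    · intro _
      exact ⟨_, (hFp a).1, v, rfl, (hdom _ (hFp a).2).symm⟩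
    · intro h
      exact hFe a b (fun h' => h.ne (by rw [h']))

lemma lower [Fintype V] (m : ℕ) (hm : 5 ≤ m) (hpl : G.IsPlanar)
    (hG : IsBigirthGraph G 4 m 3) : m + 2 ≤ Fintype.card V := by
  classical
  by_contra hlt
  obtain ⟨-, hdeg, -, v, hv⟩ := hG
  have hsub : G.neighborSet v ⊆ {v}ᶜ := by
    intro x hx h
    rw [Set.mem_singleton_iff] at h
    subst h
    exact G.irrefl hx
  have hc : ({v}ᶜ : Set V).ncard + 1 = Fintype.card V := by
    have := Set.ncard_add_ncard_compl ({v} : Set V)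
    rw [Set.ncard_singleton, Nat.card_eq_fintype_card] at this
    omega
  have heq : G.neighborSet v = {v}ᶜ :=
    Set.eq_of_subset_of_ncard_le hsub (by unfold degN at hv; omega) (Set.toFinite _)
  have hdom : ∀ w, w ≠ v → G.Adj v w := by
    intro w hw
    have : w ∈ G.neighborSet v := by rw [heq]; exact hw
    exact this
  have hex : (G.neighborSet v).Nonempty := by
    rw [← Set.ncard_pos (Set.toFinite _)]
    unfold degN at hv; omega
  obtain ⟨u, hu⟩ := hex
  refine hpl.1 (k5_minor u (hsub hu) hdom ?_)
  intro x a b _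
  have h4 : 4 ≤ (G.neighborSet x).ncard := by
    have := hdeg x
    unfold degN at this; omega
  have h3 : ({v, a, b} : Set V).ncard ≤ 3 := by
    have h1 := Set.ncard_insert_le v ({a, b} : Set V)
    have h2 := Set.ncard_insert_le a ({b} : Set V)
    rw [Set.ncard_singleton] at h2
    omega
  obtain ⟨w, hw, hw'⟩ := Set.exists_mem_notMem_of_ncard_lt_ncard
    (lt_of_le_of_lt h3 (by omega : 3 < (G.neighborSet x).ncard)) (Set.toFinite _)
  simp only [Set.mem_insert_iff, Set.mem_singleton_iff, not_or] at hw'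
  exact ⟨w, hw, hw'⟩

end Lower

/-! ### Planarity of the biwheel -/

section Upper

variable {m : ℕ}

lemma adj_iff (x y : Fin (m + 2)) : (biwheel m).Adj x y ↔ x ≠ y ∧
    (((x.val < m ∧ y.val < m ∧ y.val = (x.val + 1) % m) ∨ (m ≤ x.val ∧ y.val < m)) ∨
     ((y.val < m ∧ x.val < m ∧ x.val = (y.val + 1) % m) ∨ (m ≤ y.val ∧ x.val < m))) := by
  simp only [biwheel, SimpleGraph.fromRel_adj]

lemma mod_cases (a : ℕ) (ha : a < m) :
    (a + 1 < m ∧ (a + 1) % m = a + 1) ∨ (a + 1 = m ∧ (a + 1) % m = 0) := by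
  rcases Nat.lt_or_ge (a + 1) m with h | h
  · exact Or.inl ⟨h, Nat.mod_eq_of_lt h⟩
  · have h : a + 1 = m := by omega
    exact Or.inr ⟨h, by rw [h, Nat.mod_self]⟩

/-- Cutting the rim at `c` yields a linear coordinate. -/
structure Cut (c : Fin (m + 2)) (φ : Fin (m + 2) → ℕ) : Prop where
  inj : ∀ x y : Fin (m + 2), x.val < m → y.val < m → φ x = φ y → x = y
  zero : φ c = 0
  step : ∀ x y : Fin (m + 2), x.val < m → y.val < m → (biwheel m).Adj x y → x ≠ c → y ≠ c →
    φ y = φ x + 1 ∨ φ x = φ y + 1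
  ends : ∀ y : Fin (m + 2), y.val < m → (biwheel m).Adj c y → φ y = 1 ∨ φ y = m - 1
  bd : ∀ y : Fin (m + 2), y.val < m → φ y < m

lemma exists_cut (c : Fin (m + 2)) (hc : c.val < m) : ∃ φ, Cut c φ := by
  refine ⟨fun x => if c.val ≤ x.val then x.val - c.val else x.val + m - c.val,
    ?_, ?_, ?_, ?_, ?_⟩
  · intro x y hx hy h
    apply Fin.ext
    split_ifs at h <;> omega
  · simp
  · intro x y hx hy h hxc hyc
    have hxc' : x.val ≠ c.val := fun h => hxc (Fin.ext h)
    have hyc' : y.val ≠ c.val := fun h => hyc (Fin.ext h)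
    rw [adj_iff] at h
    have h1 := mod_cases x.val hx
    have h2 := mod_cases y.val hy
    split_ifs <;> omega
  · intro y hy h
    rw [adj_iff] at h
    have h1 := mod_cases c.val hc
    have h2 := mod_cases y.val hy
    split_ifs <;> omega
  · intro y hy
    split_ifs <;> omega

/-- A connected hub-free set of vertices. -/
def Arc (S : Set (Fin (m + 2))) : Prop :=
  ((biwheel m).induce S).Connected ∧ ∀ x ∈ S, x.val < m

def Touch (S T : Set (Fin (m + 2))) : Prop := ∃ x ∈ S, ∃ y ∈ T, (biwheel m).Adj x y

lemma Touch.symm {S T : Set (Fin (m + 2))} (h : Touch S T) : Touch T S := by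
  obtain ⟨x, hx, y, hy, h⟩ := h
  exact ⟨y, hy, x, hx, h.symm⟩

lemma Arc.nonempty {S : Set (Fin (m + 2))} (h : Arc S) : ∃ x, x ∈ S := by
  obtain ⟨x⟩ := h.1.nonempty
  exact ⟨x.1, x.2⟩

lemma walk_ivt {c : Fin (m + 2)} {φ} (hφ : Cut c φ) {S : Set (Fin (m + 2))}
    (hS : ∀ x ∈ S, x.val < m) (hcS : c ∉ S) (t : ℕ) {x y : S}
    (w : ((biwheel m).induce S).Walk x y) (h1 : φ x ≤ t) (h2 : t ≤ φ y) : ∃ z ∈ S, φ z = t := by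
  induction w with
  | nil => exact ⟨_, Subtype.mem _, le_antisymm h1 h2⟩
  | @cons a b d hab w ih =>
    by_cases h : φ a = t
    · exact ⟨a, a.2, h⟩
    · have := hφ.step a b (hS _ a.2) (hS _ b.2) hab (fun h => hcS (h ▸ a.2))
        (fun h => hcS (h ▸ b.2))
      exact ih (by omega) h2

lemma ivt {c : Fin (m + 2)} {φ} (hφ : Cut c φ) {S : Set (Fin (m + 2))}
    (hS : Arc S) (hcS : c ∉ S) (t : ℕ) {x y} (hx : x ∈ S) (hy : y ∈ S)
    (h1 : φ x ≤ t) (h2 : t ≤ φ y) : ∃ z ∈ S, φ z = t := by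
  obtain ⟨w⟩ := hS.1.preconnected ⟨x, hx⟩ ⟨y, hy⟩
  exact walk_ivt hφ hS.2 hcS t w h1 h2

/-- `S` lies strictly before `T` in the coordinate `φ`. -/
def Before (φ : Fin (m + 2) → ℕ) (S T : Set (Fin (m + 2))) : Prop :=
  ∀ x ∈ S, ∀ y ∈ T, φ x < φ y

lemma mem_of_between {c : Fin (m + 2)} {φ} (hφ : Cut c φ) {S : Set (Fin (m + 2))}
    (hS : Arc S) (hcS : c ∉ S) {x y z} (hx : x ∈ S) (hy : y ∈ S) (hz : z.val < m)
    (h1 : φ x ≤ φ z) (h2 : φ z ≤ φ y) : z ∈ S := by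
  obtain ⟨z', hz', h⟩ := ivt hφ hS hcS (φ z) hx hy h1 h2
  rwa [← hφ.inj z' z (hS.2 _ hz') hz h]

lemma before_aux {c : Fin (m + 2)} {φ} (hφ : Cut c φ) {S T : Set (Fin (m + 2))}
    (hS : Arc S) (hT : Arc T) (hcS : c ∉ S) (hcT : c ∉ T) (hd : Disjoint S T)
    {x y} (hx : x ∈ S) (hy : y ∈ T) (h : φ x < φ y) : Before φ S T := by
  rw [Set.disjoint_left] at hd
  intro a ha b hb
  by_contra hab
  rcases Nat.lt_or_ge (φ a) (φ y) with h1 | h1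
  · exact hd ha (mem_of_between hφ hT hcT hb hy (hS.2 _ ha) (by omega) (by omega))
  · exact hd (mem_of_between hφ hS hcS hx ha (hT.2 _ hy) (by omega) (by omega)) hy

lemma before_or {c : Fin (m + 2)} {φ} (hφ : Cut c φ) {S T : Set (Fin (m + 2))}
    (hS : Arc S) (hT : Arc T) (hcS : c ∉ S) (hcT : c ∉ T) (hd : Disjoint S T) :
    Before φ S T ∨ Before φ T S := by
  obtain ⟨x, hx⟩ := hS.nonempty
  obtain ⟨y, hy⟩ := hT.nonempty
  rcases lt_trichotomy (φ x) (φ y) with h | h | h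
  · exact Or.inl (before_aux hφ hS hT hcS hcT hd hx hy h)
  · have := hφ.inj x y (hS.2 _ hx) (hT.2 _ hy) h
    subst this
    exact absurd hy (Set.disjoint_left.1 hd hx)
  · exact Or.inr (before_aux hφ hT hS hcT hcS hd.symm hy hx h)

lemma middle {c : Fin (m + 2)} {φ} (hφ : Cut c φ) {A B C : Set (Fin (m + 2))}
    (hA : Arc A) (hB : Arc B) (hC : Arc C) (hcA : c ∉ A) (hcC : c ∉ C)
    (h1 : Before φ A B) (h2 : Before φ B C) (ht : Touch A C) : False := by
  obtain ⟨b, hb⟩ := hB.nonempty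
  obtain ⟨x, hx, y, hy, h⟩ := ht
  have h3 := h1 x hx b hb
  have h4 := h2 b hb y hy
  have := hφ.step x y (hA.2 _ hx) (hC.2 _ hy) h (fun h => hcA (h ▸ hx)) (fun h => hcC (h ▸ hy))
  omega

/-- Three pairwise disjoint, pairwise touching arcs cover the rim. -/
lemma no_triangle {A B C : Set (Fin (m + 2))} (hA : Arc A) (hB : Arc B) (hC : Arc C)
    (dAB : Disjoint A B) (dAC : Disjoint A C) (dBC : Disjoint B C)
    (tAB : Touch A B) (tAC : Touch A C) (tBC : Touch B C)
    (c : Fin (m + 2)) (hc : c.val < m) (hcA : c ∉ A) (hcB : c ∉ B) (hcC : c ∉ C) : False := by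
  obtain ⟨φ, hφ⟩ := exists_cut c hc
  obtain ⟨a, ha⟩ := hA.nonempty
  obtain ⟨b, hb⟩ := hB.nonempty
  obtain ⟨d, hd⟩ := hC.nonempty
  rcases before_or hφ hA hB hcA hcB dAB with h1 | h1 <;>
  rcases before_or hφ hA hC hcA hcC dAC with h2 | h2 <;>
  rcases before_or hφ hB hC hcB hcC dBC with h3 | h3
  · exact middle hφ hA hB hC hcA hcC h1 h3 tAC
  · exact middle hφ hA hC hB hcA hcB h2 h3 tAB
  · have := h1 a ha b hb; have := h2 d hd a ha; have := h3 b hb d hd; omega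
  · exact middle hφ hC hA hB hcC hcB h2 h1 tBC.symm
  · exact middle hφ hB hA hC hcB hcC h1 h2 tBC
  · have := h1 b hb a ha; have := h2 a ha d hd; have := h3 d hd b hb; omega
  · exact middle hφ hB hC hA hcB hcA h3 h2 tAB.symm
  · exact middle hφ hC hB hA hcC hcA h3 h1 tAC.symm

lemma star_aux {c : Fin (m + 2)} {φ} (hφ : Cut c φ) {X Y A B : Set (Fin (m + 2))}
    (hX : Arc X) (hA : Arc A) (hB : Arc B) (hY : ∀ y ∈ Y, y.val < m)
    (hcX : c ∉ X) (hcA : c ∉ A) (hcB : c ∉ B)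
    (dXY : Disjoint X Y) (dYA : Disjoint Y A) (dYB : Disjoint Y B)
    (tA : Touch X A) (tB : Touch X B) (tY : Touch X Y)
    (h1 : Before φ A X) (h2 : Before φ X B) : False := by
  obtain ⟨x, hx, y, hy, h⟩ := tY
  obtain ⟨xa, hxa, a, ha, h3⟩ := tA
  obtain ⟨xb, hxb, b, hb, h4⟩ := tB
  have nX : ∀ z ∈ X, z ≠ c := fun z hz h => hcX (h ▸ hz)
  have s1 := hφ.step xa a (hX.2 _ hxa) (hA.2 _ ha) h3 (nX _ hxa) (fun h => hcA (h ▸ ha))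
  have s2 := hφ.step xb b (hX.2 _ hxb) (hB.2 _ hb) h4 (nX _ hxb) (fun h => hcB (h ▸ hb))
  have b1 := h1 a ha xa hxa
  have b2 := h2 xb hxb b hb
  have b3 := h1 a ha x hx
  have b4 := h2 x hx b hb
  have bb := hφ.bd b (hB.2 _ hb)
  have bx := hφ.bd x (hX.2 _ hx)
  have ba : φ a ≠ 0 := by
    intro h0
    have hcm : c.val < m ∨ m ≤ c.val := lt_or_ge _ _
    by_cases hyc : y = c
    · subst hyc
      exact hcA ((hφ.inj a y (hA.2 _ ha) (hY _ hy) (h0.trans hφ.zero.symm)) ▸ ha)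
    · have s3 := hφ.step x y (hX.2 _ hx) (hY _ hy) h (nX _ hx) hyc
      -- then `y` lies in `A`, `X` or `B`
      rcases s3 with s3 | s3
      · rcases Nat.lt_or_ge (φ y) (φ b) with q | q
        · exact Set.disjoint_left.1 dXY
            (mem_of_between hφ hX hcX hx hxb (hY _ hy) (by omega) (by omega)) hy
        · have := hφ.inj y b (hY _ hy) (hB.2 _ hb) (by omega)
          exact Set.disjoint_left.1 dYB hy (this ▸ hb)
      · rcases Nat.lt_or_ge (φ a) (φ y) with q | q
        · exact Set.disjoint_left.1 dXY
            (mem_of_between hφ hX hcX hxa hx (hY _ hy) (by omega) (by omega)) hy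
        · have := hφ.inj y a (hY _ hy) (hA.2 _ ha) (by omega)
          exact Set.disjoint_left.1 dYA hy (this ▸ ha)
  by_cases hyc : y = c
  · subst hyc
    have := hφ.ends x (hX.2 _ hx) h.symm
    omega
  · have s3 := hφ.step x y (hX.2 _ hx) (hY _ hy) h (nX _ hx) hyc
    rcases s3 with s3 | s3
    · rcases Nat.lt_or_ge (φ y) (φ b) with q | q
      · exact Set.disjoint_left.1 dXY
          (mem_of_between hφ hX hcX hx hxb (hY _ hy) (by omega) (by omega)) hy
      · have := hφ.inj y b (hY _ hy) (hB.2 _ hb) (by omega)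
        exact Set.disjoint_left.1 dYB hy (this ▸ hb)
    · rcases Nat.lt_or_ge (φ a) (φ y) with q | q
      · exact Set.disjoint_left.1 dXY
          (mem_of_between hφ hX hcX hxa hx (hY _ hy) (by omega) (by omega)) hy
      · have := hφ.inj y a (hY _ hy) (hA.2 _ ha) (by omega)
        exact Set.disjoint_left.1 dYA hy (this ▸ ha)

/-- No two disjoint arcs touch `X` on the same side. -/
lemma same_side_right {c : Fin (m + 2)} {φ} (hφ : Cut c φ) {X A B : Set (Fin (m + 2))}
    (hX : Arc X) (hA : Arc A) (hB : Arc B)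
    (hcX : c ∉ X) (hcA : c ∉ A) (hcB : c ∉ B) (dAB : Disjoint A B)
    (tA : Touch X A) (tB : Touch X B)
    (h1 : Before φ X A) (h2 : Before φ X B) : False := by
  rcases before_or hφ hA hB hcA hcB dAB with h | h
  · exact middle hφ hX hA hB hcX hcB h1 h tB
  · exact middle hφ hX hB hA hcX hcA h2 h tA

lemma same_side_left {c : Fin (m + 2)} {φ} (hφ : Cut c φ) {X A B : Set (Fin (m + 2))}
    (hX : Arc X) (hA : Arc A) (hB : Arc B)
    (hcX : c ∉ X) (hcA : c ∉ A) (hcB : c ∉ B) (dAB : Disjoint A B)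
    (tA : Touch X A) (tB : Touch X B)
    (h1 : Before φ A X) (h2 : Before φ B X) : False := by
  rcases before_or hφ hA hB hcA hcB dAB with h | h
  · exact middle hφ hA hB hX hcA hcX h h2 tA.symm
  · exact middle hφ hB hA hX hcB hcX h h1 tB.symm

/-- There is no `K₁,₃` minor made of arcs. -/
lemma no_star {X Y A B : Set (Fin (m + 2))} (hX : Arc X) (hY : Arc Y) (hA : Arc A) (hB : Arc B)
    (dXY : Disjoint X Y) (dXA : Disjoint X A) (dXB : Disjoint X B)
    (dYA : Disjoint Y A) (dYB : Disjoint Y B) (dAB : Disjoint A B)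
    (tY : Touch X Y) (tA : Touch X A) (tB : Touch X B) : False := by
  obtain ⟨c, hc⟩ := hY.nonempty
  obtain ⟨φ, hφ⟩ := exists_cut c (hY.2 _ hc)
  have hcX : c ∉ X := fun h => Set.disjoint_left.1 dXY h hc
  have hcA : c ∉ A := Set.disjoint_left.1 dYA hc
  have hcB : c ∉ B := Set.disjoint_left.1 dYB hc
  rcases before_or hφ hX hA hcX hcA dXA with h1 | h1 <;>
  rcases before_or hφ hX hB hcX hcB dXB with h2 | h2
  · exact same_side_right hφ hX hA hB hcX hcA hcB dAB tA tB h1 h2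
  · exact star_aux hφ hX hB hA hY.2 hcX hcB hcA dXY dYB dYA tB tA tY h2 h1
  · exact star_aux hφ hX hA hB hY.2 hcX hcA hcB dXY dYA dYB tA tB tY h1 h2
  · exact same_side_left hφ hX hA hB hcX hcA hcB dAB tA tB h1 h2

lemma arc_union {A B : Set (Fin (m + 2))} (hA : Arc A) (hB : Arc B) (t : Touch A B) :
    Arc (A ∪ B) := by
  obtain ⟨x, hx, y, hy, h⟩ := t
  refine ⟨connected_induce_union hA.1.preconnected hB.1.preconnected hx hy h, ?_⟩
  rintro z (hz | hz)
  · exact hA.2 _ hz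
  · exact hB.2 _ hz

/-- In a family of disjoint sets indexed by `ι`, the hubs are in at most two members. -/
lemma touch_rim {S T : Set (Fin (m + 2))} (t : Touch S T) : ∃ c : Fin (m + 2), c.val < m ∧
    (c ∈ S ∨ c ∈ T) := by
  obtain ⟨x, hx, y, hy, h⟩ := t
  rw [adj_iff] at h
  rcases Nat.lt_or_ge x.val m with h1 | h1
  · exact ⟨x, h1, Or.inl hx⟩
  · exact ⟨y, by omega, Or.inr hy⟩

lemma hub_cases {S : Set (Fin (m + 2))} (hS : ((biwheel m).induce S).Connected) :
    Arc S ∨ (⟨m, by omega⟩ : Fin (m + 2)) ∈ S ∨ (⟨m + 1, by omega⟩ : Fin (m + 2)) ∈ S := by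
  by_cases h : ∀ x ∈ S, x.val < m
  · exact Or.inl ⟨hS, h⟩
  · push Not at h
    obtain ⟨x, hx, h⟩ := h
    have : x.val = m ∨ x.val = m + 1 := by omega
    rcases this with h | h
    · exact Or.inr (Or.inl ((Fin.ext h : x = ⟨m, by omega⟩) ▸ hx))
    · exact Or.inr (Or.inr ((Fin.ext h : x = ⟨m + 1, by omega⟩) ▸ hx))

/-- All but at most two of the branch sets are arcs. -/
lemma exists_hub_indices {ι : Type*} [Nonempty ι] (f : ι → Set (Fin (m + 2)))
    (hc : ∀ i, ((biwheel m).induce (f i)).Connected)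
    (hd : Pairwise fun i j => Disjoint (f i) (f j)) :
    ∃ p q : ι, ∀ i, i ≠ p → i ≠ q → Arc (f i) := by
  classical
  have key : ∀ h : Fin (m + 2), ∃ p : ι, ∀ i, i ≠ p → h ∉ f i := by
    intro h
    by_cases hh : ∃ p, h ∈ f p
    · obtain ⟨p, hp⟩ := hh
      exact ⟨p, fun i hi hm => Set.disjoint_left.1 (hd hi) hm hp⟩
    · push Not at hh
      exact ⟨Classical.arbitrary ι, fun i _ => hh i⟩
  obtain ⟨p, hp⟩ := key ⟨m, by omega⟩
  obtain ⟨q, hq⟩ := key ⟨m + 1, by omega⟩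
  refine ⟨p, q, fun i h1 h2 => ?_⟩
  rcases hub_cases (hc i) with h | h | h
  · exact h
  · exact absurd h (hp i h1)
  · exact absurd h (hq i h2)

lemma no_k5 : ¬ (completeGraph (Fin 5)).IsMinorOf (biwheel m) := by
  rintro ⟨f, hc, hd, ht⟩
  have ht' : ∀ i j, i ≠ j → Touch (f i) (f j) := fun i j h => ht h
  obtain ⟨p, q, hpq⟩ := exists_hub_indices f hc hd
  obtain ⟨p, q, hne, hpq⟩ : ∃ p q : Fin 5, p ≠ q ∧ ∀ i, i ≠ p → i ≠ q → Arc (f i) := by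
    by_cases h : p = q
    · subst h
      obtain ⟨r, hr⟩ := exists_ne p
      exact ⟨p, r, hr.symm, fun i h1 _ => hpq i h1 h1⟩
    · exact ⟨p, q, h, hpq⟩
  obtain ⟨a, b, d, h⟩ : ∃ a b d : Fin 5, (a ≠ b ∧ a ≠ d ∧ b ≠ d) ∧ (a ≠ p ∧ a ≠ q) ∧
      (b ≠ p ∧ b ≠ q) ∧ (d ≠ p ∧ d ≠ q) := by
    clear hpq
    revert p q; decide
  obtain ⟨⟨hab, had, hbd⟩, ⟨hap, haq⟩, ⟨hbp, hbq⟩, ⟨hdp, hdq⟩⟩ := h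
  obtain ⟨c, hcm, hcc⟩ := touch_rim (ht' p q hne)
  have hnot : ∀ i, i ≠ p → i ≠ q → c ∉ f i := by
    intro i h1 h2 hci
    rcases hcc with h | h
    · exact Set.disjoint_left.1 (hd h1) hci h
    · exact Set.disjoint_left.1 (hd h2) hci h
  exact no_triangle (hpq a hap haq) (hpq b hbp hbq) (hpq d hdp hdq) (hd hab) (hd had) (hd hbd)
    (ht' _ _ hab) (ht' _ _ had) (ht' _ _ hbd) c hcm (hnot a hap haq) (hnot b hbp hbq)
    (hnot d hdp hdq)

/-- No `K₃,₃` minor where one colour class and one further branch set are hub-free. -/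
lemma k33_star {X : Set (Fin (m + 2))} {g : Fin 3 → Set (Fin (m + 2))}
    (hX : Arc X) (hg : ∀ i, Arc (g i)) (dX : ∀ i, Disjoint X (g i))
    (dg : ∀ i j, i ≠ j → Disjoint (g i) (g j)) (t : ∀ i, Touch X (g i)) : False :=
  no_star hX (hg 0) (hg 1) (hg 2) (dX 0) (dX 1) (dX 2) (dg 0 1 (by decide)) (dg 0 2 (by decide))
    (dg 1 2 (by decide)) (t 0) (t 1) (t 2)

lemma k33_square {g h : Fin 3 → Set (Fin (m + 2))} (p q : Fin 3)
    (hg : ∀ i, i ≠ p → Arc (g i)) (hh : ∀ i, i ≠ q → Arc (h i))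
    (dg : ∀ i j, i ≠ j → Disjoint (g i) (g j)) (dh : ∀ i j, i ≠ j → Disjoint (h i) (h j))
    (dgh : ∀ i j, Disjoint (g i) (h j)) (t : ∀ i j, Touch (g i) (h j)) : False := by
  obtain ⟨c, hcm, hcc⟩ := touch_rim (t p q)
  have ex : ∀ r : Fin 3, ∃ a b, a ≠ b ∧ a ≠ r ∧ b ≠ r := by decide
  obtain ⟨a, b, hab, hap, hbp⟩ := ex p
  obtain ⟨d, e, hde, hdq, heq⟩ := ex q
  have ng : ∀ i, i ≠ p → c ∉ g i := by
    intro i hi hci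
    rcases hcc with h1 | h1
    · exact Set.disjoint_left.1 (dg _ _ hi) hci h1
    · exact Set.disjoint_left.1 (dgh i q) hci h1
  have nh : ∀ i, i ≠ q → c ∉ h i := by
    intro i hi hci
    rcases hcc with h1 | h1
    · exact Set.disjoint_left.1 (dgh p i) h1 hci
    · exact Set.disjoint_left.1 (dh _ _ hi) hci h1
  have tl : Touch (g a) (g b ∪ h e) := by
    obtain ⟨x, hx, y, hy, hxy⟩ := t a e
    exact ⟨x, hx, y, Or.inr hy, hxy⟩
  have tr : Touch (h d) (g b ∪ h e) := by
    obtain ⟨x, hx, y, hy, hxy⟩ := (t b d).symm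
    exact ⟨x, hx, y, Or.inl hy, hxy⟩
  refine no_triangle (hg a hap) (hh d hdq) (arc_union (hg b hbp) (hh e heq) (t b e))
    (dgh a d) (Set.disjoint_union_right.2 ⟨dg _ _ hab, dgh a e⟩)
    (Set.disjoint_union_right.2 ⟨(dgh b d).symm, dh _ _ hde⟩) (t a d) tl tr c hcm (ng a hap)
    (nh d hdq) ?_
  rintro (h1 | h1)
  · exact ng b hbp h1
  · exact nh e heq h1

lemma no_k33 : ¬ (completeBipartiteGraph (Fin 3) (Fin 3)).IsMinorOf (biwheel m) := by
  rintro ⟨f, hc, hd, ht⟩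
  let g : Fin 3 → Set (Fin (m + 2)) := fun i => f (Sum.inl i)
  let h : Fin 3 → Set (Fin (m + 2)) := fun i => f (Sum.inr i)
  have dg : ∀ i j, i ≠ j → Disjoint (g i) (g j) := fun i j hij =>
    hd (fun e => hij (Sum.inl.inj e))
  have dh : ∀ i j, i ≠ j → Disjoint (h i) (h j) := fun i j hij =>
    hd (fun e => hij (Sum.inr.inj e))
  have dgh : ∀ i j, Disjoint (g i) (h j) := fun i j => hd (by simp)
  have t : ∀ i j, Touch (g i) (h j) := fun i j => ht (by simp)
  obtain ⟨p, q, hpq⟩ := exists_hub_indices f hc hd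
  have ex : ∀ r s : Fin 3, ∃ a, a ≠ r ∧ a ≠ s := by decide
  rcases p with p | p <;> rcases q with q | q
  · obtain ⟨a, h1, h2⟩ := ex p q
    exact k33_star (X := g a) (g := h)
      (hpq _ (fun e => h1 (Sum.inl.inj e)) (fun e => h2 (Sum.inl.inj e)))
      (fun i => hpq _ (by simp) (by simp)) (fun i => dgh a i) dh (fun i => t a i)
  · exact k33_square p q (fun i hi => hpq _ (fun e => hi (Sum.inl.inj e)) (by simp))
      (fun i hi => hpq _ (by simp) (fun e => hi (Sum.inr.inj e))) dg dh dgh t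
  · exact k33_square q p (fun i hi => hpq _ (by simp) (fun e => hi (Sum.inl.inj e)))
      (fun i hi => hpq _ (fun e => hi (Sum.inr.inj e)) (by simp)) dg dh dgh t
  · obtain ⟨a, h1, h2⟩ := ex p q
    exact k33_star (X := h a) (g := g)
      (hpq _ (fun e => h1 (Sum.inr.inj e)) (fun e => h2 (Sum.inr.inj e)))
      (fun i => hpq _ (by simp) (by simp)) (fun i => (dgh i a).symm) dg (fun i => (t i a).symm)

/-! ### Girth and degrees of the biwheel -/

lemma girth_of_triangle {V : Type*} {G : SimpleGraph V} {a b c : V} (h1 : G.Adj a b)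
    (h2 : G.Adj b c) (h3 : G.Adj c a) : G.girth = 3 := by
  have hw : (Walk.cons h1 (Walk.cons h2 (Walk.cons h3 Walk.nil))).IsCycle := by
    simp [Walk.isCycle_def, Walk.isTrail_def, h1.ne, h2.ne, h3.ne, h1.ne.symm, h2.ne.symm,
      h3.ne.symm]
  have hle : G.egirth ≤ 3 := by
    have := egirth_le_length hw
    simpa using this
  have : G.egirth = 3 := le_antisymm hle three_le_egirth
  simp [girth, this]

lemma girth_eq (hm : 5 ≤ m) : (biwheel m).girth = 3 := by
  have a01 : (biwheel m).Adj ⟨0, by omega⟩ ⟨1, by omega⟩ := by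
    have h := mod_cases (m := m) 0 (by omega)
    rw [adj_iff]
    refine ⟨by simp, Or.inl (Or.inl ⟨?_, ?_, ?_⟩)⟩ <;> dsimp only <;> omega
  have a1h : (biwheel m).Adj ⟨1, by omega⟩ ⟨m, by omega⟩ := by
    rw [adj_iff]; simp; omega
  have ah0 : (biwheel m).Adj ⟨m, by omega⟩ ⟨0, by omega⟩ := by
    rw [adj_iff]; simp; omega
  exact girth_of_triangle a01 a1h ah0

lemma deg_hub (x : Fin (m + 2)) (hx : m ≤ x.val) : (biwheel m).degN x = m := by
  have : (biwheel m).neighborSet x = (Finset.univ.filter (fun y : Fin (m + 2) => y.val < m) :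
      Finset (Fin (m + 2))) := by
    ext y
    simp only [mem_neighborSet, adj_iff, Finset.coe_filter, Finset.mem_univ, true_and,
      Set.mem_ofPred_eq]
    constructor
    · intro h; omega
    · intro h
      refine ⟨fun e => ?_, by omega⟩
      subst e; omega
  unfold degN
  rw [this, Set.ncard_coe_finset, Fin.card_filter_val_lt]
  omega

lemma deg_rim (hm : 5 ≤ m) (x : Fin (m + 2)) (hx : x.val < m) : (biwheel m).degN x = 4 := by
  have hs := mod_cases x.val hx
  obtain ⟨s, hs1, hs2⟩ : ∃ s : Fin (m + 2), s.val < m ∧ s.val = (x.val + 1) % m :=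
    ⟨⟨(x.val + 1) % m, by omega⟩, by dsimp only; omega, rfl⟩
  obtain ⟨r, hr1, hr2⟩ : ∃ r : Fin (m + 2), r.val < m ∧ x.val = (r.val + 1) % m := by
    by_cases h0 : x.val = 0
    · refine ⟨⟨m - 1, by omega⟩, by dsimp only; omega, ?_⟩
      have := mod_cases (m := m) (m - 1) (by omega)
      dsimp only; omega
    · refine ⟨⟨x.val - 1, by omega⟩, by dsimp only; omega, ?_⟩
      have := mod_cases (m := m) (x.val - 1) (by omega)
      dsimp only; omega
  have hr := mod_cases r.val hr1
  have : (biwheel m).neighborSet x = (({s, r, ⟨m, by omega⟩, ⟨m + 1, by omega⟩} :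
      Finset (Fin (m + 2))) : Set (Fin (m + 2))) := by
    ext y
    simp only [mem_neighborSet, adj_iff, Finset.coe_insert, Finset.coe_singleton,
      Set.mem_insert_iff, Set.mem_singleton_iff, Fin.ext_iff, ne_eq]
    constructor
    · rintro ⟨h0, h⟩
      rcases Nat.lt_or_ge y.val m with h1 | h1
      · have := mod_cases y.val h1
        omega
      · omega
    · rcases Nat.lt_or_ge y.val m with h1 | h1
      · have := mod_cases y.val h1
        omega
      · omega
  unfold degN
  rw [this, Set.ncard_coe_finset]
  rw [Finset.card_insert_of_notMem, Finset.card_insert_of_notMem, Finset.card_insert_of_notMem,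
    Finset.card_singleton]
  all_goals
    simp only [Finset.mem_insert, Finset.mem_singleton, Fin.ext_iff]
    omega

lemma bigirth (hm : 5 ≤ m) : IsBigirthGraph (biwheel m) 4 m 3 := by
  refine ⟨girth_eq hm, fun v => ?_, ⟨⟨0, by omega⟩, deg_rim hm _ (by dsimp only; omega)⟩,
    ⟨⟨m, by omega⟩, deg_hub _ le_rfl⟩⟩
  rcases Nat.lt_or_ge v.val m with h | h
  · exact Or.inl (deg_rim hm v h)
  · exact Or.inr (deg_hub v h)

end Upper

end BW

/-- For `m ≥ 5`, `n_p({4,m};3) = m+2`, attained by the biwheel `B_m`. -/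
theorem planar_four_m_three_cages (m : ℕ) (hm : 5 ≤ m) :
    IsLeast (bicageOrders 4 m 3) (m + 2) ∧
    (biwheel m).IsPlanar ∧ IsBigirthGraph (biwheel m) 4 m 3 ∧
      Fintype.card (Fin (m + 2)) = m + 2 := by
  have hp : (biwheel m).IsPlanar := ⟨BW.no_k5, BW.no_k33⟩
  refine ⟨⟨⟨Fin (m + 2), inferInstance, biwheel m, hp, BW.bigirth hm, Fintype.card_fin _⟩, ?_⟩,
    hp, BW.bigirth hm, Fintype.card_fin _⟩
  rintro n ⟨V, _, G, hG, hb, rfl⟩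
  exact BW.lower m hm hG hb
end
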